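/- With the counting function N(l_1, l_2, g) as in the sieving setup, suppose l | q^m − 1, g | x^m − 1, c is a prime dividing q^m − 1 but not l, and e is a monic irreducible polynomial dividing x^m − 1 but not g. Then |N(cl, l, g) − θ(c)·N(l, l, g)| ≤ (n+2)·θ(c)·θ(l)^2·Θ(g)·W(l)^2·W(g)·q^{m/2}, where θ(u) = φ(u)/u and Θ(g) = Φ_q(g)/q^{deg g}; and the analogous bounds hold for |N(l, cl, g) − θ(c)N(l, l, g)| and for |N(l, l, eg) − Θ(e)N(l, l, g)| (with Θ(e) in place of θ(c)). -/

import Mathlib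

open Polynomial UniqueFactorizationMonoid Classical

/-- `w ∈ F_{q^m}ˣ` is `u`-free: `w ≠ 0` and `w = v ^ d` with `d` a positive divisor of `u`
implies `d = 1`. -/
def IsUFree {F : Type*} [Field F] (u : ℕ) (w : F) : Prop :=
  w ≠ 0 ∧ ∀ v : F, ∀ d : ℕ, 0 < d → d ∣ u → w = v ^ d → d = 1

/-- The `F_q[x]`-module action on `F_{q^m}`: `f ∘ α = ∑ aᵢ α^{q^i}`. -/
def polyAct {K F : Type*} [Field K] [Field F] [Algebra K F] (q : ℕ)
    (f : K[X]) (α : F) : F :=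
  f.sum fun i a => a • α ^ q ^ i

/-- `α` is `g`-free: `α = h ∘ β` with `h` a monic divisor of `g` implies `h = 1`. -/
def IsGFree {K F : Type*} [Field K] [Field F] [Algebra K F] (q : ℕ)
    (g : K[X]) (α : F) : Prop :=
  ∀ h : K[X], h.Monic → h ∣ g → (∃ β : F, α = polyAct q h β) → h = 1

/-- A rational function `f ∈ F(x)` is exceptional if `f = c·xⁱ·hᵈ` for some `d > 1` dividing
`|F| − 1`, or `f = xⁱ` with `gcd(|F| − 1, i) ≠ 1`. -/
def ExceptionalRatFunc {F : Type*} [Field F] [Fintype F] (f : RatFunc F) : Prop :=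
  (∃ (c : F) (i : ℤ) (h : RatFunc F) (d : ℕ), 1 < d ∧ d ∣ Fintype.card F - 1 ∧
      f = RatFunc.C c * RatFunc.X ^ i * h ^ d) ∨
  (∃ i : ℤ, f = RatFunc.X ^ i ∧ Nat.gcd (Fintype.card F - 1) i.natAbs ≠ 1)

/-- The counting function `N_{f,a,n}(l₁, l₂, g)`. -/
noncomputable def Ncount {K F : Type*} [Field K] [Field F] [Fintype F] [Algebra K F]
    (q : ℕ) (f : RatFunc F) (a : K) (l₁ l₂ : ℕ) (g : K[X]) : ℕ :=
  Nat.card {α : F // IsUFree l₁ α ∧ IsGFree q g α ∧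
    IsUFree l₂ (RatFunc.eval (RingHom.id F) α f) ∧ Algebra.trace K F α⁻¹ = a}

/-- The polynomial analogue `Φ_q(g)` of Euler's totient over `F_q[x]`. -/
noncomputable def polyTotient {K : Type*} [Field K] (g : K[X]) : ℕ :=
  Nat.card (K[X] ⧸ Ideal.span {g})ˣ

/-!
The indicator functions of the `l`-free elements, of the `g`-free elements and of the trace
condition are absolutely convex combinations of characters, scaled by `θ(l) W(l)`, by `Θ(g) W(g)`
and by `1`. In the difference `N(cl, l, g) - θ(c) N(l, l, g)` the terms whose first character has
trivial `c`-part cancel, leaving only sums `∑ χ₁(x) χ₂(f(x)) ψ(β x + γ / x)` with `χ₁ ≠ 1`; the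
other two differences behave in the same way. Since `f` is not exceptional, each of these sums is at
most `(n + 2) √|F|`.

For this last bound a weak estimate over all finite extensions `k` of `F` suffices. The sums over
the extensions are the power sums attached to the `L`-function of the mixed character, which has at
most `n + 3` inverse zeros and one inverse pole, of absolute value `|F|`. If these power sums are
`O(√|k|)`, then the pole cancels against a zero and the remaining `n + 2` inverse zeros have
absolute value at most `√|F|`. The weak estimate comes from Stepanov's method: it bounds the number
of points on each twist of the cover `y ^ d = s(x)`, `z ^ p - z = β x + γ / x` closely enough to
make the classes of `(s(x), β x + γ / x)` modulo `d`-th powers and Artin–Schreier values nearly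
equidistributed.
-/

/-! ### Power sums -/

theorem coeff_mul_pow_eq_sum_lagrange {K : Type*} [Field K] (s : Finset K) (c : K → K) {w : K}
    (hw : w ∈ s) (j : ℕ) :
    c w * w ^ j = ∑ t ∈ (Lagrange.basis s id w).support,
      (Lagrange.basis s id w).coeff t * ∑ z ∈ s, c z * z ^ (j + t) := by
  have eval_basis : ∀ z ∈ s, (Lagrange.basis s id w).eval z = if z = w then 1 else 0 := by
    intro z hz
    split_ifs with hzw
    · exact hzw.symm ▸ Lagrange.eval_basis_self (Set.injOn_id _) hw
    · exact Lagrange.eval_basis_of_ne (v := id) (Ne.symm hzw) hz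
  calc c w * w ^ j = ∑ z ∈ s, c z * z ^ j * (Lagrange.basis s id w).eval z := by
        rw [Finset.sum_congr rfl fun z hz => by rw [eval_basis z hz]]
        simp [hw]
    _ = ∑ z ∈ s, ∑ t ∈ (Lagrange.basis s id w).support,
          (Lagrange.basis s id w).coeff t * (c z * z ^ (j + t)) := by
        refine Finset.sum_congr rfl fun z _ => ?_
        rw [eval_eq_sum, Polynomial.sum, Finset.mul_sum]
        exact Finset.sum_congr rfl fun t _ => by ring
    _ = _ := by
        rw [Finset.sum_comm]
        exact Finset.sum_congr rfl fun t _ => (Finset.mul_sum ..).symm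

theorem coeff_eq_zero_of_norm_sum_mul_pow_le {K : Type*} [NormedField K] {s : Finset K}
    {c : K → K} {ρ C : ℝ} (hρ : 0 < ρ)
    (h : ∀ j : ℕ, 1 ≤ j → ‖∑ z ∈ s, c z * z ^ j‖ ≤ C * ρ ^ j)
    {w : K} (hw : w ∈ s) (hwρ : ρ < ‖w‖) : c w = 0 := by
  let L := Lagrange.basis s id w
  let C' : ℝ := ∑ t ∈ L.support, ‖L.coeff t‖ * (C * ρ ^ t)
  have bound (j : ℕ) (hj : 1 ≤ j) : ‖c w‖ * ‖w‖ ^ j ≤ C' * ρ ^ j := by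
    rw [← norm_pow, ← norm_mul, coeff_mul_pow_eq_sum_lagrange s c hw j, Finset.sum_mul]
    refine norm_sum_le_of_le _ fun t _ => ?_
    rw [norm_mul, mul_assoc]
    refine mul_le_mul_of_nonneg_left ((h (j + t) (by omega)).trans_eq ?_) (norm_nonneg _)
    ring
  by_contra hne
  have hpos : 0 < ‖c w‖ := norm_pos_iff.mpr hne
  have hr : 1 < ‖w‖ / ρ := by rwa [one_lt_div hρ]
  obtain ⟨n, hn⟩ := pow_unbounded_of_one_lt (C' / ‖c w‖) hr
  have hlt : C' / ‖c w‖ < (‖w‖ / ρ) ^ (n + 1) :=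
    hn.trans_le (pow_le_pow_right₀ hr.le (Nat.le_succ n))
  rw [div_pow, div_lt_div_iff₀ hpos (by positivity)] at hlt
  linarith [bound (n + 1) (by omega), mul_comm ‖c w‖ (‖w‖ ^ (n + 1))]

section PowerSums

variable {K : Type*} [NormedField K] [CharZero K] {Ω : Multiset K} {η : K} {ρ C : ℝ}

theorem count_eq_ite_of_norm_powerSum_sub_le (hρ : 0 < ρ)
    (h : ∀ j : ℕ, 1 ≤ j → ‖(Ω.map (· ^ j)).sum - η ^ j‖ ≤ C * ρ ^ j)
    {z : K} (hz : ρ < ‖z‖) : Ω.count z = if z = η then 1 else 0 := by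
  let s : Finset K := insert z (insert η Ω.toFinset)
  let c : K → K := fun z => (Ω.count z : K) - if z = η then 1 else 0
  have hsum (j : ℕ) : (Ω.map (· ^ j)).sum - η ^ j = ∑ z ∈ s, c z * z ^ j := by
    have hΩ : (Ω.map (· ^ j)).sum = ∑ z ∈ s, (Ω.count z : K) * z ^ j := by
      simp only [Finset.sum_multiset_map_count, nsmul_eq_mul]
      refine Finset.sum_subset (fun x hx => by simp [s, Multiset.mem_toFinset.mp hx]) ?_
      intro x _ hx
      rw [Multiset.mem_toFinset, ← Multiset.count_eq_zero] at hx
      simp [hx]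
    simp only [hΩ, c, sub_mul, Finset.sum_sub_distrib]
    simp [s]
  have hcz : c z = 0 := coeff_eq_zero_of_norm_sum_mul_pow_le hρ
    (fun j hj => hsum j ▸ h j hj) (Finset.mem_insert_self z _) hz
  exact_mod_cast sub_eq_zero.mp hcz

/- If `|η| > ρ`, comparing growth rates shows that `η` occurs in `Ω` and that every other
member of `Ω` has norm at most `ρ`. -/
theorem norm_sum_sub_le_of_norm_powerSum_sub_le (hρ : 0 < ρ) (hη : ρ < ‖η‖)
    (h : ∀ j : ℕ, 1 ≤ j → ‖(Ω.map (· ^ j)).sum - η ^ j‖ ≤ C * ρ ^ j) :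
    ‖Ω.sum - η‖ ≤ (Ω.card - 1 : ℝ) * ρ := by
  have hcount {z : K} (hz : ρ < ‖z‖) := count_eq_ite_of_norm_powerSum_sub_le hρ h hz
  have hmem : η ∈ Ω := by
    rw [← Multiset.one_le_count_iff_mem, hcount hη, if_pos rfl]
  obtain ⟨Ω', rfl⟩ := Multiset.exists_cons_of_mem hmem
  have hsmall : ∀ z ∈ Ω', ‖z‖ ≤ ρ := by
    intro z hz
    by_contra! hlt
    have := hcount hlt
    rw [Multiset.count_cons] at this
    have := Multiset.one_le_count_iff_mem.mpr hz
    omega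
  have hsum : ‖Ω'.sum‖ ≤ Ω'.card * ρ := by
    simpa using (norm_multiset_sum_le Ω').trans
      (Multiset.sum_le_card_nsmul (Ω'.map norm) ρ (by simpa using hsmall))
  simpa using hsum

end PowerSums

section PowerSumSeries

variable {R : Type*} [CommRing R]

/-- The generating series `∑_{r ≥ 1} (∑_{z ∈ Ω} z ^ r) X ^ r` of the power sums of `Ω`, with
constant term `0`. -/
noncomputable def powerSumSeries (Ω : Multiset R) : PowerSeries R :=
  PowerSeries.mk fun r => if r = 0 then 0 else (Ω.map (· ^ r)).sum

/-- The product `∏_{z ∈ Ω} (1 - z X)`, whose reciprocal roots are the members of `Ω`. -/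
noncomputable def reciprocalRootsProd (Ω : Multiset R) : PowerSeries R :=
  (Ω.map fun z => 1 - PowerSeries.C z * PowerSeries.X).prod

theorem one_sub_C_mul_X_mul_powerSumSeries_singleton (w : R) :
    (1 - PowerSeries.C w * PowerSeries.X) * powerSumSeries {w} =
      PowerSeries.C w * PowerSeries.X := by
  ext n
  rw [sub_mul, one_mul, mul_assoc, map_sub, PowerSeries.coeff_C_mul, PowerSeries.coeff_C_mul]
  rcases n with _ | _ | n
  · simp [powerSumSeries]
  · simp [powerSumSeries]
  · rw [PowerSeries.coeff_succ_X_mul]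
    simp [powerSumSeries, PowerSeries.coeff_X, pow_succ']

theorem powerSumSeries_cons (w : R) (Ω : Multiset R) :
    powerSumSeries (w ::ₘ Ω) = powerSumSeries {w} + powerSumSeries Ω := by
  ext n
  by_cases h : n = 0 <;> simp [powerSumSeries, h]

theorem derivative_one_sub_C_mul_X (w : R) :
    PowerSeries.derivative R (1 - PowerSeries.C w * PowerSeries.X) = -PowerSeries.C w := by
  simp [Derivation.leibniz, PowerSeries.derivative_C, PowerSeries.derivative_X]

theorem X_mul_derivative_reciprocalRootsProd (Ω : Multiset R) :
    PowerSeries.X * PowerSeries.derivative R (reciprocalRootsProd Ω) =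
      -(reciprocalRootsProd Ω * powerSumSeries Ω) := by
  induction Ω using Multiset.induction_on with
  | empty =>
    have : powerSumSeries (0 : Multiset R) = 0 := by ext n; simp [powerSumSeries]
    simp [reciprocalRootsProd, this]
  | cons w Ω ih =>
    have hcons : reciprocalRootsProd (w ::ₘ Ω) =
        (1 - PowerSeries.C w * PowerSeries.X) * reciprocalRootsProd Ω := by
      simp [reciprocalRootsProd]
    rw [hcons, Derivation.leibniz, derivative_one_sub_C_mul_X, powerSumSeries_cons, smul_eq_mul,
      smul_eq_mul]
    linear_combination (1 - PowerSeries.C w * PowerSeries.X) * ih +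
      reciprocalRootsProd Ω * one_sub_C_mul_X_mul_powerSumSeries_singleton w

theorem X_mul_derivative_mk_eq {a T : ℕ → R}
    (hrec : ∀ N : ℕ, (N : R) * a N = ∑ r ∈ Finset.Icc 1 N, T r * a (N - r)) :
    PowerSeries.X * PowerSeries.derivative R (PowerSeries.mk a) =
      PowerSeries.mk a * PowerSeries.mk fun r => if r = 0 then 0 else T r := by
  ext n
  have hleft : PowerSeries.coeff n (PowerSeries.X * PowerSeries.derivative R (PowerSeries.mk a)) =
      (n : R) * a n := by
    rcases n with _ | n
    · simp
    · rw [PowerSeries.coeff_succ_X_mul, PowerSeries.coeff_derivative, PowerSeries.coeff_mk]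
      push_cast
      ring
  rw [hleft, hrec n, mul_comm, PowerSeries.coeff_mul,
    Finset.Nat.sum_antidiagonal_eq_sum_range_succ_mk]
  refine (Finset.sum_congr rfl fun r hr => ?_).trans
    (Finset.sum_subset (fun r hr => ?_) fun r hr hr' => ?_)
  · simp [Nat.one_le_iff_ne_zero.mp (Finset.mem_Icc.mp hr).1]
  · have := Finset.mem_Icc.mp hr
    exact Finset.mem_range.mpr (by omega)
  · rw [Finset.mem_Icc, not_and'] at hr'
    have := hr' (by have := Finset.mem_range.mp hr; omega)
    simp [show r = 0 by omega]

end PowerSumSeries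

section AlgClosed

variable {K : Type*} [Field K]

theorem reverse_prod_X_sub_C (Ω : Multiset K) :
    (((Ω.map fun z => X - C z).prod.reverse : K[X]) : PowerSeries K) = reciprocalRootsProd Ω := by
  induction Ω using Multiset.induction_on with
  | empty =>
    have reverse_one : (1 : K[X]).reverse = 1 := by rw [← C_1, reverse_C]
    simp [reciprocalRootsProd, reverse_one]
  | cons w Ω ih =>
    have reverse_X_sub_C : (X - C w : K[X]).reverse = 1 - C w * X := by
      have := reflect_monomial (R := K) 1 1
      rw [pow_one, revAt_le le_rfl, Nat.sub_self, pow_zero] at this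
      rw [Polynomial.reverse, natDegree_X_sub_C, reflect_sub, reflect_C, this, pow_one]
    rw [Multiset.map_cons, Multiset.prod_cons, reverse_mul_of_domain, Polynomial.coe_mul, ih,
      reverse_X_sub_C]
    simp [reciprocalRootsProd]

theorem exists_mk_eq_reciprocalRootsProd [IsAlgClosed K] {b : ℕ → K} {M : ℕ} (h0 : b 0 = 1)
    (hM : ∀ i, M < i → b i = 0) :
    ∃ Ω : Multiset K, Ω.card = M ∧ PowerSeries.mk b = reciprocalRootsProd Ω := by
  set P : K[X] := PowerSeries.trunc (M + 1) (PowerSeries.mk b) with hP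
  have coeff_P (i : ℕ) : P.coeff i = b i := by
    rw [hP, PowerSeries.coeff_trunc, PowerSeries.coeff_mk]
    split_ifs with hi
    · rfl
    · exact (hM i (by omega)).symm
  set Q := P.reflect M with hQ
  have hP0 : P.natDegree ≤ M := natDegree_le_iff_coeff_eq_zero.mpr fun i hi => by
    rw [coeff_P, hM i hi]
  have hQdeg : Q.natDegree ≤ M := (natDegree_reflect_le).trans (by simp [hP0])
  have coeff_Q : Q.coeff M = 1 := by
    rw [hQ, coeff_reflect, revAt_le le_rfl, Nat.sub_self, coeff_P, h0]
  have hmonic : Q.Monic := monic_of_natDegree_le_of_coeff_eq_one M hQdeg coeff_Q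
  have hnat : Q.natDegree = M := hQdeg.antisymm (le_natDegree_of_ne_zero (by simp [coeff_Q]))
  have hsplit : Q.Splits := IsAlgClosed.splits Q
  refine ⟨Q.roots, hsplit.natDegree_eq_card_roots.symm.trans hnat, ?_⟩
  rw [← reverse_prod_X_sub_C, ← hsplit.eq_prod_roots_of_monic hmonic, Polynomial.reverse, hnat]
  ext i
  rw [PowerSeries.coeff_mk, Polynomial.coeff_coe, hQ, reflect_reflect, coeff_P]

/- The generating series of `a` equals `∏ (1 - z X) / (1 - η X)`; the claim compares logarithmic
derivatives. -/
theorem exists_powerSums_of_recurrence [IsAlgClosed K] {a T : ℕ → K} {η : K} {M : ℕ}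
    (ha : a 0 = 1)
    (hrec : ∀ N : ℕ, (N : K) * a N = ∑ r ∈ Finset.Icc 1 N, T r * a (N - r))
    (hη : ∀ N, M ≤ N → a (N + 1) = η * a N) :
    ∃ Ω : Multiset K, Ω.card = M ∧ ∀ r, 1 ≤ r → T r = η ^ r - (Ω.map (· ^ r)).sum := by
  let L : PowerSeries K := PowerSeries.mk a
  let S : PowerSeries K := PowerSeries.mk fun r => if r = 0 then 0 else T r
  let b : ℕ → K := fun i => if i = 0 then 1 else a i - η * a (i - 1)
  obtain ⟨Ω, hcard, hΩ⟩ := exists_mk_eq_reciprocalRootsProd (b := b) (M := M) rfl (by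
    rintro (_ | i) hi
    · omega
    · simp [b, hη i (by omega)])
  have hL : (1 - PowerSeries.C η * PowerSeries.X) * L = reciprocalRootsProd Ω := by
    rw [← hΩ]
    ext i
    rw [sub_mul, one_mul, mul_assoc, map_sub, PowerSeries.coeff_C_mul]
    rcases i with _ | i
    · simp [L, b, ha]
    · simp [L, b, PowerSeries.coeff_succ_X_mul]
  have hne : (1 - PowerSeries.C η * PowerSeries.X) * L ≠ 0 := fun h0 => by
    simpa [L, ha] using congrArg (PowerSeries.coeff 0) h0
  have hlog := X_mul_derivative_reciprocalRootsProd Ω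
  rw [← hL, Derivation.leibniz, derivative_one_sub_C_mul_X, smul_eq_mul, smul_eq_mul] at hlog
  have hzero : (1 - PowerSeries.C η * PowerSeries.X) * L *
      (S - powerSumSeries {η} + powerSumSeries Ω) = 0 := by
    linear_combination hlog - (1 - PowerSeries.C η * PowerSeries.X) * X_mul_derivative_mk_eq hrec -
      L * one_sub_C_mul_X_mul_powerSumSeries_singleton η
  refine ⟨Ω, hcard, fun r hr => ?_⟩
  have hcoeff := congrArg (PowerSeries.coeff r) ((mul_eq_zero.mp hzero).resolve_left hne)
  simp only [S, powerSumSeries, map_add, map_sub, PowerSeries.coeff_mk, map_zero,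
    Nat.one_le_iff_ne_zero.mp hr, if_false, Multiset.map_singleton, Multiset.sum_singleton]
    at hcoeff
  linear_combination hcoeff

end AlgClosed

/-! ### Multiplicative functions on monic polynomials -/

section MonicPolynomials

variable {F : Type*} [Field F]

/-- The analogue over `F[X]` of the von Mangoldt function: `deg P` at a power of an irreducible
`P`, and `0` at all other polynomials. -/
noncomputable def polyVonMangoldt (h : F[X]) : ℕ :=
  if IsPrimePow h then (radical h).natDegree else 0

theorem polyVonMangoldt_pow {P : F[X]} (hP : P.Monic) (hirr : Irreducible P) {j : ℕ} (hj : j ≠ 0) :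
    polyVonMangoldt (P ^ j) = P.natDegree := by
  rw [polyVonMangoldt, if_pos (hirr.prime.isPrimePow.pow hj), radical_pow _ hj,
    radical_of_prime hirr.prime, hP.normalize_eq_self]

theorem exists_pow_eq_of_polyVonMangoldt_ne_zero {h : F[X]} (hm : h.Monic)
    (h0 : polyVonMangoldt h ≠ 0) :
    ∃ P : F[X], P.Monic ∧ Irreducible P ∧ ∃ j ≠ 0, P ^ j = h := by
  obtain ⟨P, j, hP, hj, rfl⟩ : IsPrimePow h := by
    by_contra hn
    exact h0 (if_neg hn)
  refine ⟨normalize P, monic_normalize hP.ne_zero,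
    (associated_normalize P).irreducible hP.irreducible, j, hj.ne', ?_⟩
  exact eq_of_monic_of_associated ((monic_normalize hP.ne_zero).pow j) hm
    (normalize_associated P).pow_pow

theorem eq_of_pow_eq_pow_of_irreducible {P Q : F[X]} (hP : P.Monic) (hQ : Q.Monic)
    (hPi : Irreducible P) (hQi : Irreducible Q) {i j : ℕ} (hi : i ≠ 0) (h : P ^ i = Q ^ j) :
    P = Q :=
  eq_of_monic_of_associated hP hQ <| hPi.associated_of_dvd hQi <|
    hPi.prime.dvd_of_dvd_pow (h ▸ dvd_pow_self P hi)

theorem pow_dvd_iff_le_count_normalizedFactors {P g : F[X]} (hP : P.Monic) (hirr : Irreducible P)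
    (hg : g ≠ 0) {j : ℕ} : P ^ j ∣ g ↔ j ≤ (normalizedFactors g).count P := by
  rw [pow_dvd_iff_le_emultiplicity, emultiplicity_eq_count_normalizedFactors hirr hg,
    hP.normalize_eq_self, Nat.cast_le]

theorem sum_count_normalizedFactors_mul_natDegree {g : F[X]} (hg : g.Monic) :
    ∑ P ∈ (normalizedFactors g).toFinset, (normalizedFactors g).count P * P.natDegree =
      g.natDegree := by
  have hprod : (normalizedFactors g).prod = g := by
    rw [prod_normalizedFactors_eq hg.ne_zero, hg.normalize_eq_self]
  conv_rhs => rw [← hprod, natDegree_multiset_prod _ (zero_notMem_normalizedFactors g)]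
  simp [Finset.sum_multiset_map_count]

/-- Complete multiplicativity on the monic polynomials. -/
structure MonicMultiplicative {R : Type*} [CommSemiring R] (χ : F[X] → R) : Prop where
  map_one : χ 1 = 1
  map_mul : ∀ {g h : F[X]}, g.Monic → h.Monic → χ (g * h) = χ g * χ h

namespace MonicMultiplicative

variable {R : Type*} [CommSemiring R] {χ : F[X] → R} (hχ : MonicMultiplicative χ)
include hχ

theorem map_pow {g : F[X]} (hg : g.Monic) (j : ℕ) : χ (g ^ j) = χ g ^ j := by
  induction j with
  | zero => simp [hχ.map_one]
  | succ j ih => rw [pow_succ, hχ.map_mul (hg.pow j) hg, ih, pow_succ]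

end MonicMultiplicative

theorem mem_sigma_normalizedFactors_iff {g : F[X]} (hg : g.Monic) (P : F[X]) (j : ℕ) :
    ⟨P, j⟩ ∈ (normalizedFactors g).toFinset.sigma
      (fun P => Finset.Icc 1 ((normalizedFactors g).count P)) ↔
        P.Monic ∧ Irreducible P ∧ j ≠ 0 ∧ P ^ j ∣ g := by
  simp only [Finset.mem_sigma, Finset.mem_Icc, Multiset.mem_toFinset, Nat.one_le_iff_ne_zero,
    Polynomial.mem_normalizedFactors_iff hg.ne_zero]
  constructor
  · rintro ⟨⟨hPi, hPm, -⟩, hj, hle⟩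
    exact ⟨hPm, hPi, hj, (pow_dvd_iff_le_count_normalizedFactors hPm hPi hg.ne_zero).mpr hle⟩
  · rintro ⟨hPm, hPi, hj, hdvd⟩
    exact ⟨⟨hPi, hPm, (dvd_pow_self P hj).trans hdvd⟩, hj,
      (pow_dvd_iff_le_count_normalizedFactors hPm hPi hg.ne_zero).mp hdvd⟩

variable [Finite F]

theorem finite_setOf_monic_natDegree_eq (N : ℕ) : {g : F[X] | g.Monic ∧ g.natDegree = N}.Finite :=
  have : Finite (degreeLT F N) := .of_equiv _ (degreeLTEquiv F N).symm.toEquiv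
  .of_equiv _ (monicEquivDegreeLT (R := F) N).symm

variable (F) in
/-- The monic polynomials of degree `N` over a finite field. -/
noncomputable def monicsOfDegree (N : ℕ) : Finset F[X] :=
  (finite_setOf_monic_natDegree_eq (F := F) N).toFinset

theorem mem_monicsOfDegree {N : ℕ} {g : F[X]} :
    g ∈ monicsOfDegree F N ↔ g.Monic ∧ g.natDegree = N := by
  simp [monicsOfDegree]

theorem sum_polyVonMangoldt_dvd {N : ℕ} {g : F[X]} (hg : g ∈ monicsOfDegree F N) :
    ∑ r ∈ Finset.Icc 1 N, ∑ h ∈ monicsOfDegree F r with h ∣ g, polyVonMangoldt h = N := by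
  obtain ⟨hmon, rfl⟩ := mem_monicsOfDegree.mp hg
  have hcount (P : F[X]) : (normalizedFactors g).count P * P.natDegree =
      ∑ _ ∈ Finset.Icc 1 ((normalizedFactors g).count P), P.natDegree := by simp
  conv_rhs => rw [← sum_count_normalizedFactors_mul_natDegree hmon]
  simp only [hcount, Finset.sum_sigma']
  have hmem := mem_sigma_normalizedFactors_iff hmon
  symm
  refine Finset.sum_of_injOn (fun x => ⟨x.2 * x.1.natDegree, x.1 ^ x.2⟩) ?_ ?_ ?_ ?_
  · rintro ⟨P, i⟩ hP ⟨Q, _⟩ hQ heq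
    obtain ⟨hPm, hPi, hi, -⟩ := (hmem P i).mp hP
    obtain ⟨hQm, hQi, -⟩ := (hmem Q _).mp hQ
    simp only [Sigma.mk.injEq, heq_eq_eq] at heq
    obtain rfl := eq_of_pow_eq_pow_of_irreducible hPm hQm hPi hQi hi heq.2
    rw [Nat.eq_of_mul_eq_mul_right hPi.natDegree_pos heq.1]
  · rintro ⟨P, j⟩ hP
    obtain ⟨hPm, hPi, hj, hdvd⟩ := (hmem P j).mp hP
    have hdeg := natDegree_pow P j
    have hpos := Nat.mul_pos (Nat.pos_of_ne_zero hj) hPi.natDegree_pos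
    simp only [Finset.coe_sigma, Set.mem_sigma_iff, Finset.mem_coe, Finset.mem_Icc,
      Finset.mem_filter, mem_monicsOfDegree]
    exact ⟨⟨hpos, hdeg ▸ natDegree_le_of_dvd hdvd hmon.ne_zero⟩, ⟨hPm.pow j, hdeg⟩, hdvd⟩
  · rintro ⟨r, h⟩ hh hnot
    simp only [Finset.mem_sigma, Finset.mem_filter, mem_monicsOfDegree] at hh
    by_contra h0
    obtain ⟨P, hPm, hPi, j, hj, rfl⟩ := exists_pow_eq_of_polyVonMangoldt_ne_zero hh.2.1.1 h0
    exact hnot ⟨⟨P, j⟩, (hmem P j).mpr ⟨hPm, hPi, hj, hh.2.2⟩,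
      by rw [← hh.2.1.2, natDegree_pow]⟩
  · rintro ⟨P, j⟩ hP
    obtain ⟨hPm, hPi, hj, -⟩ := (hmem P j).mp hP
    exact (polyVonMangoldt_pow hPm hPi hj).symm

namespace MonicMultiplicative

variable {R : Type*} [CommSemiring R] {χ : F[X] → R} (hχ : MonicMultiplicative χ)
include hχ

theorem sum_dvd {N r : ℕ} (hr : r ≤ N) {h : F[X]} (hh : h ∈ monicsOfDegree F r) :
    ∑ g ∈ monicsOfDegree F N with h ∣ g, χ g = χ h * ∑ g ∈ monicsOfDegree F (N - r), χ g := by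
  obtain ⟨hm, rfl⟩ := mem_monicsOfDegree.mp hh
  rw [Finset.mul_sum]
  symm
  refine Finset.sum_bij (fun g _ => h * g) (fun g hg => ?_)
    (fun g _ g' _ heq => mul_left_cancel₀ hm.ne_zero heq) (fun g hg => ?_) fun g hg => ?_
  · obtain ⟨hgm, hgd⟩ := mem_monicsOfDegree.mp hg
    refine Finset.mem_filter.mpr ⟨mem_monicsOfDegree.mpr ⟨hm.mul hgm, ?_⟩, dvd_mul_right _ _⟩
    rw [hm.natDegree_mul hgm, hgd]
    omega
  · obtain ⟨hg, g', rfl⟩ := Finset.mem_filter.mp hg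
    obtain ⟨hgm, hgd⟩ := mem_monicsOfDegree.mp hg
    have hg'm := hm.of_mul_monic_left hgm
    rw [hm.natDegree_mul hg'm] at hgd
    exact ⟨g', mem_monicsOfDegree.mpr ⟨hg'm, by omega⟩, rfl⟩
  · rw [hχ.map_mul hm (mem_monicsOfDegree.mp hg).1]

theorem natCast_mul_sum_monicsOfDegree (N : ℕ) :
    (N : R) * ∑ g ∈ monicsOfDegree F N, χ g =
      ∑ r ∈ Finset.Icc 1 N, (∑ h ∈ monicsOfDegree F r, (polyVonMangoldt h : R) * χ h) *
        ∑ g ∈ monicsOfDegree F (N - r), χ g := by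
  calc (N : R) * ∑ g ∈ monicsOfDegree F N, χ g
      = ∑ g ∈ monicsOfDegree F N, ∑ r ∈ Finset.Icc 1 N,
          ∑ h ∈ monicsOfDegree F r, if h ∣ g then (polyVonMangoldt h : R) * χ g else 0 := by
        rw [Finset.mul_sum]
        refine Finset.sum_congr rfl fun g hg => ?_
        rw [← congrArg (Nat.cast (R := R)) (sum_polyVonMangoldt_dvd hg)]
        simp only [Nat.cast_sum, Finset.sum_mul, Finset.sum_filter, Nat.cast_ite, ite_mul,
          Nat.cast_zero, zero_mul]
    _ = ∑ r ∈ Finset.Icc 1 N, ∑ h ∈ monicsOfDegree F r,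
          (polyVonMangoldt h : R) * ∑ g ∈ monicsOfDegree F N with h ∣ g, χ g := by
        rw [Finset.sum_comm]
        refine Finset.sum_congr rfl fun r _ => ?_
        rw [Finset.sum_comm]
        simp only [Finset.mul_sum, Finset.sum_filter, mul_ite, mul_zero]
    _ = _ := by
        refine Finset.sum_congr rfl fun r hr => ?_
        rw [Finset.sum_mul]
        refine Finset.sum_congr rfl fun h hh => ?_
        rw [hχ.sum_dvd (Finset.mem_Icc.mp hr).2 hh, mul_assoc]

end MonicMultiplicative

section Extension

variable {k : Type*} [Field k] [Algebra F k]

theorem minpoly_pow_mem_monicsOfDegree [Finite k] (x : k) :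
    minpoly F x ^ (Module.finrank F k / (minpoly F x).natDegree) ∈
      monicsOfDegree F (Module.finrank F k) := by
  have hx : IsIntegral F x := .of_finite F x
  refine mem_monicsOfDegree.mpr ⟨(minpoly.monic hx).pow _, ?_⟩
  rw [natDegree_pow, Nat.div_mul_cancel (minpoly.degree_dvd hx)]

variable [Fintype k]

theorem card_filter_minpoly_eq {P : F[X]} (hP : P.Monic) (hirr : Irreducible P)
    (hdvd : P.natDegree ∣ Module.finrank F k) :
    (Finset.univ.filter fun x : k => minpoly F x = P).card = P.natDegree := by
  have hfin : Module.Finite F k := .of_finite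
  have hcard : Nat.card k = Nat.card F ^ Module.finrank F k := Module.natCard_eq_pow_finrank
  have hsplit : (P.map (algebraMap F k)).Splits := by
    have hX : (((X : F[X]) ^ Nat.card F ^ Module.finrank F k - X).map (algebraMap F k)).Splits := by
      rw [← hcard, Nat.card_eq_fintype_card]
      exact (FiniteField.isSplittingField_sub k F).splits
    refine hX.of_dvd (Polynomial.map_ne_zero ?_) (Polynomial.map_dvd _ ?_)
    · exact FiniteField.X_pow_card_pow_sub_X_ne_zero F Module.finrank_pos.ne' Finite.one_lt_card
    · rwa [← hirr.natDegree_dvd_iff_dvd_X_pow_card_pow_sub_X]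
  have hsep : (P.map (algebraMap F k)).Separable :=
    (PerfectField.separable_of_irreducible hirr).map
  have hroots : (Finset.univ.filter fun x : k => minpoly F x = P) =
      (P.map (algebraMap F k)).roots.toFinset := by
    ext x
    simp only [Finset.mem_filter, Finset.mem_univ, true_and, Multiset.mem_toFinset,
      mem_roots (Polynomial.map_ne_zero hP.ne_zero), IsRoot.def, eval_map_algebraMap]
    exact ⟨fun h => h ▸ minpoly.aeval F x,
      fun h => (minpoly.eq_of_irreducible_of_monic hirr h hP).symm⟩
  rw [hroots, Multiset.toFinset_card_of_nodup (nodup_roots hsep), ← hsplit.natDegree_eq_card_roots,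
    natDegree_map]

theorem card_filter_minpoly_pow_eq {h : F[X]} (hh : h ∈ monicsOfDegree F (Module.finrank F k)) :
    (Finset.univ.filter fun x : k =>
      minpoly F x ^ (Module.finrank F k / (minpoly F x).natDegree) = h).card =
        polyVonMangoldt h := by
  obtain ⟨hm, hd⟩ := mem_monicsOfDegree.mp hh
  have hpos : 0 < Module.finrank F k := Module.finrank_pos
  by_cases h0 : polyVonMangoldt h = 0
  · rw [h0, Finset.card_eq_zero, Finset.filter_eq_empty_iff]
    rintro x - rfl
    have hx : IsIntegral F x := .of_finite F x
    refine (minpoly.natDegree_pos hx).ne' (h0 ▸ (polyVonMangoldt_pow (minpoly.monic hx)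
      (minpoly.irreducible hx) ?_)).symm
    exact (Nat.div_pos (Nat.le_of_dvd hpos (minpoly.degree_dvd hx)) (minpoly.natDegree_pos hx)).ne'
  obtain ⟨P, hP, hirr, j, hj, rfl⟩ := exists_pow_eq_of_polyVonMangoldt_ne_zero hm h0
  rw [natDegree_pow] at hd
  rw [polyVonMangoldt_pow hP hirr hj,
    ← card_filter_minpoly_eq (k := k) hP hirr ⟨j, by rw [← hd, mul_comm]⟩]
  congr 1
  ext x
  have hx : IsIntegral F x := .of_finite F x
  simp only [Finset.mem_filter, Finset.mem_univ, true_and]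
  constructor
  · exact fun h => (eq_of_pow_eq_pow_of_irreducible hP (minpoly.monic hx) hirr
      (minpoly.irreducible hx) hj h.symm).symm
  · rintro rfl
    rw [← hd, Nat.mul_div_cancel _ (minpoly.natDegree_pos hx)]

theorem MonicMultiplicative.sum_polyVonMangoldt_mul {R : Type*} [CommSemiring R] {χ : F[X] → R}
    (hχ : MonicMultiplicative χ) :
    ∑ h ∈ monicsOfDegree F (Module.finrank F k), (polyVonMangoldt h : R) * χ h =
      ∑ x : k, χ (minpoly F x) ^ (Module.finrank F k / (minpoly F x).natDegree) := by
  rw [← Finset.sum_fiberwise_of_maps_to (s := Finset.univ)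
    (fun x _ => minpoly_pow_mem_monicsOfDegree (F := F) (k := k) x)]
  refine Finset.sum_congr rfl fun h hh => ?_
  rw [← card_filter_minpoly_pow_eq hh, ← nsmul_eq_mul, ← Finset.sum_const]
  refine Finset.sum_congr rfl fun x hx => ?_
  rw [← (Finset.mem_filter.mp hx).2, hχ.map_pow (minpoly.monic (.of_finite F x))]

end Extension

end MonicPolynomials

section NormAndTrace

variable {F : Type*} [Field F]

theorem resultant_add_mul_left_of_monic {f u p : F[X]} (hu : u.Monic)
    (hd : (f + u * p).natDegree = f.natDegree + 1) (hdeg : u.natDegree ≤ f.natDegree) :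
    resultant (f + u * p) u = (-1) ^ u.natDegree * resultant f u := by
  have hp : p.natDegree + u.natDegree ≤ f.natDegree + 1 := by
    rcases eq_or_ne p 0 with rfl | hp0
    · simp only [natDegree_zero]
      omega
    have h : (u * p).natDegree ≤ f.natDegree + 1 := by
      rw [← add_sub_cancel_left f (u * p)]
      exact natDegree_sub_le_of_le hd.le (Nat.le_succ _) |>.trans (max_self _).le
    rwa [hu.natDegree_mul' hp0, add_comm] at h
  rw [hd, resultant_add_mul_left _ _ _ _ _ hp le_rfl, resultant_add_left_deg _ _ _ _ _ le_rfl,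
    hu.coeff_natDegree, one_pow, mul_one, mul_one]

variable {k : Type*} [Field k] [Algebra F k]

theorem norm_aeval_gen_eq_resultant [Algebra.IsSeparable F k] (pb : PowerBasis F k) (u : F[X]) :
    Algebra.norm F (aeval pb.gen u) = resultant (minpoly F pb.gen) u := by
  have : FiniteDimensional F k := pb.finite
  let E := AlgebraicClosure k
  have hsep : (minpoly F pb.gen).Separable := Algebra.IsSeparable.isSeparable F _
  have hmonic : (minpoly F pb.gen).Monic := minpoly.monic (.of_finite F _)
  apply (algebraMap F E).injective
  calc algebraMap F E (Algebra.norm F (aeval pb.gen u))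
      = ∏ σ : k →ₐ[F] E, (u.map (algebraMap F E)).eval (σ pb.gen) := by
        rw [Algebra.norm_eq_prod_embeddings F E]
        exact Fintype.prod_congr _ _ fun σ => by rw [← aeval_algHom_apply, aeval_def, eval_map]
    _ = ∏ z : {z : E // z ∈ (minpoly F pb.gen).aroots E}, (u.map (algebraMap F E)).eval z.1 :=
        Fintype.prod_equiv pb.liftEquiv' _ _ fun σ => by rw [pb.liftEquiv'_apply_coe]
    _ = (((minpoly F pb.gen).aroots E).map (u.map (algebraMap F E)).eval).prod := by
        rw [Finset.prod_mem_multiset _ _ (u.map (algebraMap F E)).eval fun _ => rfl,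
          Finset.prod_eq_multiset_prod, Multiset.toFinset_val,
          Multiset.dedup_eq_self.mpr (nodup_roots hsep.map)]
    _ = algebraMap F E (resultant (minpoly F pb.gen) u) := by
        have h := resultant_eq_prod_eval ((minpoly F pb.gen).map (algebraMap F E))
          (u.map (algebraMap F E)) u.natDegree natDegree_map_le (IsAlgClosed.splits _)
        rw [natDegree_map, resultant_map_map, (hmonic.map _).leadingCoeff, one_pow, one_mul] at h
        exact h.symm

theorem minpoly_inv_dvd_reverse {x : k} (hx : x ≠ 0) : minpoly F x⁻¹ ∣ (minpoly F x).reverse := by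
  let : Invertible x := invertibleOfNonzero hx
  refine minpoly.dvd F _ ?_
  rw [← invOf_eq_inv]
  exact (eval₂_reverse_eq_zero_iff (algebraMap F k) x _).mpr (minpoly.aeval F x)

variable [FiniteDimensional F k]

open IntermediateField in
theorem finrank_div_natDegree_minpoly (x : k) :
    Module.finrank F k / (minpoly F x).natDegree = Module.finrank F⟮x⟯ k := by
  rw [← Module.finrank_mul_finrank F F⟮x⟯ k, adjoin.finrank (.of_finite F x),
    Nat.mul_div_cancel_left _ (minpoly.natDegree_pos (.of_finite F x))]

open IntermediateField in
theorem norm_aeval_eq_resultant_pow [Algebra.IsSeparable F k] (x : k) (u : F[X]) :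
    Algebra.norm F (aeval x u) =
      resultant (minpoly F x) u ^ (Module.finrank F k / (minpoly F x).natDegree) := by
  have hx : IsIntegral F x := .of_finite F x
  have hgen : algebraMap F⟮x⟯ k (aeval (adjoin.powerBasis hx).gen u) = aeval x u := by
    rw [← aeval_algebraMap_apply, adjoin.powerBasis_gen, AdjoinSimple.algebraMap_gen]
  rw [finrank_div_natDegree_minpoly, ← hgen, ← Algebra.norm_norm (R := F) (S := F⟮x⟯),
    Algebra.norm_algebraMap, map_pow, norm_aeval_gen_eq_resultant, adjoin.powerBasis_gen,
    minpoly_gen]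

theorem natDegree_minpoly_inv {x : k} (hx : x ≠ 0) :
    (minpoly F x⁻¹).natDegree = (minpoly F x).natDegree := by
  have hle {y : k} (hy : y ≠ 0) : (minpoly F y⁻¹).natDegree ≤ (minpoly F y).natDegree :=
    (natDegree_le_of_dvd (minpoly_inv_dvd_reverse hy)
      (by simpa using minpoly.ne_zero (.of_finite F y))).trans (reverse_natDegree_le _)
  exact (hle hx).antisymm (by simpa using hle (inv_ne_zero hx))

theorem minpoly_inv {x : k} (hx : x ≠ 0) :
    minpoly F x⁻¹ = C ((minpoly F x).coeff 0)⁻¹ * (minpoly F x).reverse := by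
  have hc : (minpoly F x).coeff 0 ≠ 0 := minpoly.coeff_zero_ne_zero (.of_finite F x) hx
  have ht : (minpoly F x).natTrailingDegree = 0 := natTrailingDegree_eq_zero.mpr (.inr hc)
  symm
  refine eq_of_monic_of_dvd_of_natDegree_le (minpoly.monic (.of_finite F x⁻¹)) ?_
    ((minpoly_inv_dvd_reverse hx).mul_left _) ?_
  · rw [Monic, leadingCoeff_mul, reverse_leadingCoeff, trailingCoeff, ht, leadingCoeff_C,
      inv_mul_cancel₀ hc]
  · rw [natDegree_C_mul (inv_ne_zero hc), natDegree_minpoly_inv hx]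
    exact reverse_natDegree_le _

theorem nextCoeff_minpoly_inv {x : k} (hx : x ≠ 0) :
    (minpoly F x⁻¹).nextCoeff = (minpoly F x).coeff 1 / (minpoly F x).coeff 0 := by
  have hpos : 0 < (minpoly F x).natDegree := minpoly.natDegree_pos (.of_finite F x)
  rw [nextCoeff_of_natDegree_pos (minpoly.natDegree_pos (.of_finite F _)),
    natDegree_minpoly_inv hx, minpoly_inv hx, coeff_C_mul, coeff_reverse, revAt_le (Nat.sub_le _ _),
    Nat.sub_sub_self hpos, inv_mul_eq_div]

theorem trace_eq_natCast_mul_nextCoeff (x : k) : Algebra.trace F k x =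
    (Module.finrank F k / (minpoly F x).natDegree : ℕ) * -(minpoly F x).nextCoeff := by
  rw [finrank_div_natDegree_minpoly, trace_eq_finrank_mul_minpoly_nextCoeff]

theorem trace_inv_eq_natCast_mul {x : k} (hx : x ≠ 0) : Algebra.trace F k x⁻¹ =
    (Module.finrank F k / (minpoly F x).natDegree : ℕ) *
      -((minpoly F x).coeff 1 / (minpoly F x).coeff 0) := by
  rw [trace_eq_natCast_mul_nextCoeff, natDegree_minpoly_inv hx, nextCoeff_minpoly_inv hx]

end NormAndTrace

/-! ### The `L`-function of a mixed character -/

section ShiftQuotient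

variable {F : Type*} [Field F] {M : F[X]}

/-- Appends the constant term `c` to the quotient of `g` by `M`, keeping the remainder. This is a
`|F|`-to-one correspondence between polynomials of consecutive degrees that preserves the residue
class modulo `M` and the second highest coefficient. -/
noncomputable def shiftQuotient (M : F[X]) (c : F) (g : F[X]) : F[X] :=
  M * (g /ₘ M * X + C c) + g %ₘ M

theorem monic_divByMonic (hM : M.Monic) {g : F[X]} (hg : g.Monic)
    (h : M.natDegree ≤ g.natDegree) : (g /ₘ M).Monic := by
  rw [Monic, leadingCoeff_divByMonic_of_monic hM, hg]
  rwa [degree_eq_natDegree hM.ne_zero, degree_eq_natDegree hg.ne_zero, Nat.cast_le]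

theorem mul_add_mem_monicsOfDegree [Finite F] (hM : M.Monic) {w ρ : F[X]} {d : ℕ}
    (hw : w ∈ monicsOfDegree F d) (hρ : ρ.degree < M.degree) :
    M * w + ρ ∈ monicsOfDegree F (M.natDegree + d) := by
  obtain ⟨hwm, rfl⟩ := mem_monicsOfDegree.mp hw
  have hlt : ρ.degree < (M * w).degree :=
    hρ.trans_le (degree_le_mul_left M hwm.ne_zero)
  rw [mem_monicsOfDegree, natDegree_add_eq_left_of_degree_lt hlt, hM.natDegree_mul hwm]
  exact ⟨(hM.mul hwm).add_of_left hlt, rfl⟩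

theorem nextCoeff_mul_add (hM : M.Monic) {w ρ : F[X]} (hw : w.Monic) (hd : 0 < w.natDegree)
    (hρ : ρ.degree < M.degree) : (M * w + ρ).nextCoeff = M.nextCoeff + w.nextCoeff := by
  have hlt : ρ.degree < (M * w).degree := hρ.trans_le (degree_le_mul_left M hw.ne_zero)
  have hdeg := hM.natDegree_mul hw
  rw [← hM.nextCoeff_mul hw, nextCoeff_of_natDegree_pos (by
    rw [natDegree_add_eq_left_of_degree_lt hlt]; omega), nextCoeff_of_natDegree_pos (by omega),
    natDegree_add_eq_left_of_degree_lt hlt, coeff_add, coeff_eq_zero_of_degree_lt (p := ρ),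
    add_zero]
  refine hρ.trans_le ?_
  rw [degree_eq_natDegree hM.ne_zero, Nat.cast_le]
  omega

theorem mul_X_add_C_mem_monicsOfDegree [Finite F] {w : F[X]} {d : ℕ}
    (hw : w ∈ monicsOfDegree F d) (c : F) : w * X + C c ∈ monicsOfDegree F (d + 1) := by
  have h := mul_add_mem_monicsOfDegree (ρ := C c) monic_X hw (degree_X (R := F) ▸ degree_C_lt)
  rwa [natDegree_X, mul_comm, add_comm 1] at h

theorem divX_mem_monicsOfDegree [Finite F] {w : F[X]} {d : ℕ} (hw : w ∈ monicsOfDegree F (d + 1)) :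
    w.divX ∈ monicsOfDegree F d := by
  obtain ⟨hwm, hwd⟩ := mem_monicsOfDegree.mp hw
  have hd : w.divX.natDegree = d := by rw [natDegree_divX_eq_natDegree_tsub_one, hwd,
    Nat.add_sub_cancel]
  refine mem_monicsOfDegree.mpr ⟨?_, hd⟩
  rw [Monic, leadingCoeff, hd, coeff_divX, ← hwd, hwm.coeff_natDegree]

theorem shiftQuotient_divByMonic_modByMonic (hM : M.Monic) (c : F) (g : F[X]) :
    shiftQuotient M c g /ₘ M = g /ₘ M * X + C c ∧ shiftQuotient M c g %ₘ M = g %ₘ M :=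
  div_modByMonic_unique _ _ hM ⟨by rw [shiftQuotient, add_comm], degree_modByMonic_lt _ hM⟩

theorem dvd_shiftQuotient_sub (M : F[X]) (c : F) (g : F[X]) : M ∣ shiftQuotient M c g - g :=
  ⟨g /ₘ M * X + C c - g /ₘ M, by
    rw [shiftQuotient]
    linear_combination modByMonic_add_div g M⟩

theorem shiftQuotient_injective (hM : M.Monic) {c c' : F} {g g' : F[X]}
    (h : shiftQuotient M c g = shiftQuotient M c' g') : g = g' ∧ c = c' := by
  obtain ⟨hq, hr⟩ := shiftQuotient_divByMonic_modByMonic hM c g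
  obtain ⟨hq', hr'⟩ := shiftQuotient_divByMonic_modByMonic hM c' g'
  rw [h, hr'] at hr
  rw [h, hq'] at hq
  have hc : c' = c := by simpa using congrArg (coeff · 0) hq
  subst hc
  rw [add_left_inj, mul_left_inj' X_ne_zero] at hq
  exact ⟨by rw [← modByMonic_add_div g M, ← modByMonic_add_div g' M, hq, hr], rfl⟩

variable [Finite F] {N : ℕ}

theorem divByMonic_mem_monicsOfDegree (hM : M.Monic) (hN : M.natDegree ≤ N) {g : F[X]}
    (hg : g ∈ monicsOfDegree F N) : g /ₘ M ∈ monicsOfDegree F (N - M.natDegree) := by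
  obtain ⟨hgm, rfl⟩ := mem_monicsOfDegree.mp hg
  exact mem_monicsOfDegree.mpr ⟨monic_divByMonic hM hgm hN, natDegree_divByMonic g hM⟩

theorem shiftQuotient_mem_monicsOfDegree (hM : M.Monic) (hN : M.natDegree ≤ N) (c : F) {g : F[X]}
    (hg : g ∈ monicsOfDegree F N) : shiftQuotient M c g ∈ monicsOfDegree F (N + 1) := by
  have h := mul_add_mem_monicsOfDegree hM (mul_X_add_C_mem_monicsOfDegree
    (divByMonic_mem_monicsOfDegree hM hN hg) c) (degree_modByMonic_lt g hM)
  rwa [← add_assoc, Nat.add_sub_cancel' hN] at h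

theorem exists_shiftQuotient_eq (hM : M.Monic) (hN : M.natDegree ≤ N) {g : F[X]}
    (hg : g ∈ monicsOfDegree F (N + 1)) :
    ∃ g' ∈ monicsOfDegree F N, ∃ c, shiftQuotient M c g' = g := by
  have hdiv := divByMonic_mem_monicsOfDegree hM (hN.trans N.le_succ) hg
  rw [Nat.succ_sub hN] at hdiv
  have hmem := mul_add_mem_monicsOfDegree hM (divX_mem_monicsOfDegree hdiv)
    (degree_modByMonic_lt g hM)
  rw [Nat.add_sub_cancel' hN] at hmem
  obtain ⟨hq, hr⟩ := div_modByMonic_unique (f := M * (g /ₘ M).divX + g %ₘ M) _ _ hM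
    ⟨add_comm _ _, degree_modByMonic_lt g hM⟩
  refine ⟨_, hmem, (g /ₘ M).coeff 0, ?_⟩
  rw [shiftQuotient, hq, hr, divX_mul_X_add, add_comm, modByMonic_add_div]

theorem nextCoeff_shiftQuotient (hM : M.Monic) (hN : M.natDegree < N) (c : F) {g : F[X]}
    (hg : g ∈ monicsOfDegree F N) : (shiftQuotient M c g).nextCoeff = g.nextCoeff := by
  have hw := divByMonic_mem_monicsOfDegree hM hN.le hg
  obtain ⟨hwm, hwd⟩ := mem_monicsOfDegree.mp hw
  obtain ⟨hwm', hwd'⟩ := mem_monicsOfDegree.mp (mul_X_add_C_mem_monicsOfDegree hw c)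
  have hpos : 0 < (g /ₘ M).natDegree := by omega
  have hρ := degree_modByMonic_lt g hM
  obtain ⟨d, hd⟩ := Nat.exists_eq_succ_of_ne_zero hpos.ne'
  conv_rhs => rw [← modByMonic_add_div g M, add_comm]
  rw [shiftQuotient, nextCoeff_mul_add hM hwm' (by omega) hρ, nextCoeff_mul_add hM hwm hpos hρ,
    nextCoeff_of_natDegree_pos hpos, nextCoeff_of_natDegree_pos (p := _ * X + C c) (by omega),
    hwd', ← hwd, hd]
  simp

theorem sum_monicsOfDegree_succ {R : Type*} [CommSemiring R] (hM : M.Monic)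
    (hN : M.natDegree < N) {χ : F[X] → R} {κ : R}
    (hχ : ∀ g ∈ monicsOfDegree F N, ∀ g' ∈ monicsOfDegree F (N + 1),
      M ∣ g' - g → g'.nextCoeff = g.nextCoeff → χ g' = κ * χ g) :
    ∑ g ∈ monicsOfDegree F (N + 1), χ g =
      κ * Nat.card F * ∑ g ∈ monicsOfDegree F N, χ g := by
  have := Fintype.ofFinite F
  calc ∑ g ∈ monicsOfDegree F (N + 1), χ g
      = ∑ x ∈ monicsOfDegree F N ×ˢ (Finset.univ : Finset F), κ * χ x.1 := by
        symm
        refine Finset.sum_bij (fun x _ => shiftQuotient M x.2 x.1) (fun x hx => ?_)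
          (fun x _ y _ h => Prod.ext_iff.mpr (shiftQuotient_injective hM h)) (fun g hg => ?_)
          fun x hx => ?_
        · exact shiftQuotient_mem_monicsOfDegree hM hN.le _ (Finset.mem_product.mp hx).1
        · obtain ⟨g', hg', c, rfl⟩ := exists_shiftQuotient_eq hM hN.le hg
          exact ⟨(g', c), Finset.mk_mem_product hg' (Finset.mem_univ c), rfl⟩
        · have hx := (Finset.mem_product.mp hx).1
          exact (hχ _ hx _ (shiftQuotient_mem_monicsOfDegree hM hN.le _ hx)
            (dvd_shiftQuotient_sub M _ _) (nextCoeff_shiftQuotient hM hN _ hx)).symm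
    _ = κ * Nat.card F * ∑ g ∈ monicsOfDegree F N, χ g := by
        simp only [Finset.sum_product, Finset.sum_const, Finset.card_univ, nsmul_eq_mul,
          Finset.mul_sum, Nat.card_eq_fintype_card]
        exact Finset.sum_congr rfl fun _ _ => by ring

end ShiftQuotient

section LFunction

theorem MonicMultiplicative.norm_sum_minpoly_le {F : Type*} [Field F] [Fintype F] {χ : F[X] → ℂ}
    (hχ : MonicMultiplicative χ) {M : ℕ} {η : ℂ} {C ρ : ℝ} (hρ : 0 < ρ) (hη : ρ < ‖η‖)
    (hsum : ∀ N, M ≤ N →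
      ∑ g ∈ monicsOfDegree F (N + 1), χ g = η * ∑ g ∈ monicsOfDegree F N, χ g)
    (h : ∀ r, 1 ≤ r →
      ‖∑ g ∈ monicsOfDegree F r, (polyVonMangoldt g : ℂ) * χ g‖ ≤ C * ρ ^ r) :
    ‖∑ x : F, χ (minpoly F x)‖ ≤ (M - 1 : ℝ) * ρ := by
  have hzero : monicsOfDegree F 0 = {1} := by
    ext g
    rw [mem_monicsOfDegree, Finset.mem_singleton]
    exact ⟨fun hg => eq_one_of_monic_natDegree_zero hg.1 hg.2,
      by rintro rfl; exact ⟨monic_one, natDegree_one⟩⟩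
  obtain ⟨Ω, rfl, hΩ⟩ := exists_powerSums_of_recurrence
    (by simp only [hzero, Finset.sum_singleton, hχ.map_one]) hχ.natCast_mul_sum_monicsOfDegree hsum
  have hone : ∑ x : F, χ (minpoly F x) = η - Ω.sum := by
    have h1 := hχ.sum_polyVonMangoldt_mul (k := F)
    rw [Module.finrank_self, hΩ 1 le_rfl] at h1
    simpa [minpoly.eq_X_sub_C'] using h1.symm
  rw [hone, norm_sub_rev]
  exact norm_sum_sub_le_of_norm_powerSum_sub_le hρ hη fun r hr => by
    rw [norm_sub_rev, ← hΩ r hr]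
    exact h r hr

end LFunction

section MixedCharacterSums

variable {F : Type*} [Field F]

/-- The mixed character sum over an extension `k` of `F`, obtained by composing the characters of
`F` with the norm and the trace. -/
noncomputable def mixedCharSum (χ₁ χ₂ χ₃ : MulChar F ℂ) (ψ : AddChar F ℂ) (u v : F[X]) (β γ : F)
    (k : Type*) [Field k] [Fintype k] [Algebra F k] : ℂ :=
  ∑ x : k, χ₁ (Algebra.norm F x) * χ₂ (Algebra.norm F (aeval x u)) *
    χ₃ (Algebra.norm F (aeval x v)) *
    ψ (β * Algebra.trace F k x + γ * Algebra.trace F k x⁻¹)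

/-- The multiplicative function on monic polynomials whose `L`-function has the sums
`mixedCharSum` as power sums: its value at `∏ (X - αᵢ)` is the summand of `mixedCharSum` with norms
and traces replaced by products and sums over the `αᵢ`. -/
noncomputable def mixedChar (χ₁ χ₂ χ₃ : MulChar F ℂ) (ψ : AddChar F ℂ) (u v : F[X]) (β γ : F)
    (g : F[X]) : ℂ :=
  χ₁ (resultant g X) * χ₂ (resultant g u) * χ₃ (resultant g v) *
    ψ (β * -g.nextCoeff + γ * -(g.coeff 1 / g.coeff 0))

theorem resultant_X_eq_zero_iff {g : F[X]} : resultant g X = 0 ↔ g.coeff 0 = 0 := by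
  rw [resultant_comm, natDegree_X, ← pow_one (X : F[X]), resultant_X_pow_left _ _ _ le_rfl]
  simp

theorem mixedChar_eq_zero {χ₁ χ₂ χ₃ : MulChar F ℂ} {ψ : AddChar F ℂ} {u v : F[X]} {β γ : F}
    {g : F[X]} (h : g.coeff 0 = 0) : mixedChar χ₁ χ₂ χ₃ ψ u v β γ g = 0 := by
  rw [mixedChar, resultant_X_eq_zero_iff.mpr h, MulChar.map_zero, zero_mul, zero_mul, zero_mul]

variable (χ₁ χ₂ χ₃ : MulChar F ℂ) (ψ : AddChar F ℂ) (u v : F[X]) (β γ : F)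

theorem monicMultiplicative_mixedChar :
    MonicMultiplicative (mixedChar χ₁ χ₂ χ₃ ψ u v β γ) where
  map_one := by simp [mixedChar, coeff_one, nextCoeff]
  map_mul {g h} hg hh := by
    by_cases hg0 : g.coeff 0 = 0
    · rw [mixedChar_eq_zero (by simp [mul_coeff_zero, hg0]), mixedChar_eq_zero hg0, zero_mul]
    by_cases hh0 : h.coeff 0 = 0
    · rw [mixedChar_eq_zero (by simp [mul_coeff_zero, hh0]), mixedChar_eq_zero hh0, mul_zero]
    have hadd : β * -(g * h).nextCoeff + γ * -((g * h).coeff 1 / (g * h).coeff 0) =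
        (β * -g.nextCoeff + γ * -(g.coeff 1 / g.coeff 0)) +
          (β * -h.nextCoeff + γ * -(h.coeff 1 / h.coeff 0)) := by
      rw [hg.nextCoeff_mul hh, mul_coeff_zero, mul_coeff_one]
      field_simp
      ring
    have hres (w : F[X]) : resultant (g * h) w = resultant g w * resultant h w := by
      rw [hg.natDegree_mul hh, resultant_mul_left _ _ _ _ le_rfl]
    simp only [mixedChar, hadd, hres, AddChar.map_add_eq_mul, map_mul]
    ring

theorem mixedChar_minpoly_pow {k : Type*} [Field k] [Algebra F k] [FiniteDimensional F k]
    [Algebra.IsSeparable F k] (x : k) :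
    mixedChar χ₁ χ₂ χ₃ ψ u v β γ (minpoly F x) ^ (Module.finrank F k / (minpoly F x).natDegree) =
      χ₁ (Algebra.norm F x) * χ₂ (Algebra.norm F (aeval x u)) * χ₃ (Algebra.norm F (aeval x v)) *
        ψ (β * Algebra.trace F k x + γ * Algebra.trace F k x⁻¹) := by
  rcases eq_or_ne x 0 with rfl | hx
  · rw [mixedChar_eq_zero (by simp [minpoly.zero]), minpoly.zero, natDegree_X, Nat.div_one,
      zero_pow Module.finrank_pos.ne', Algebra.norm_zero, MulChar.map_zero, zero_mul, zero_mul,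
      zero_mul]
  have hnorm : Algebra.norm F x = Algebra.norm F (aeval x (X : F[X])) := by rw [aeval_X]
  rw [hnorm, norm_aeval_eq_resultant_pow, norm_aeval_eq_resultant_pow, norm_aeval_eq_resultant_pow,
    trace_eq_natCast_mul_nextCoeff, trace_inv_eq_natCast_mul hx, mixedChar, mul_pow, mul_pow,
    mul_pow, ← AddChar.map_nsmul_eq_pow, map_pow, map_pow, map_pow]
  congr 2
  rw [nsmul_eq_mul]
  ring

variable {u v}

/- Modulo `u * v * X ^ 2` the residue class determines the resultants up to sign, as well as the two
lowest coefficients. -/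
theorem mixedChar_congr (hu : u.Monic) (hv : v.Monic) {g g' : F[X]}
    (hd : g'.natDegree = g.natDegree + 1) (hN : u.natDegree + v.natDegree + 2 < g.natDegree)
    (hdvd : u * v * X ^ 2 ∣ g' - g) (hnext : g'.nextCoeff = g.nextCoeff) :
    mixedChar χ₁ χ₂ χ₃ ψ u v β γ g' =
      χ₁ (-1) * χ₂ ((-1) ^ u.natDegree) * χ₃ ((-1) ^ v.natDegree) *
        mixedChar χ₁ χ₂ χ₃ ψ u v β γ g := by
  have hcoeff {i : ℕ} (hi : i < 2) : g'.coeff i = g.coeff i := by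
    have := X_pow_dvd_iff.mp ((Dvd.intro_left _ rfl).trans hdvd) i hi
    rwa [coeff_sub, sub_eq_zero] at this
  have hres {w : F[X]} (hw : w.Monic) (hwd : w.natDegree ≤ g.natDegree)
      (hwdvd : w ∣ u * v * X ^ 2) : resultant g' w = (-1) ^ w.natDegree * resultant g w := by
    obtain ⟨p, hp⟩ := hwdvd.trans hdvd
    obtain rfl : g' = g + w * p := by rw [← hp, add_sub_cancel]
    exact resultant_add_mul_left_of_monic hw hd hwd
  rw [mixedChar, mixedChar, hres monic_X (by rw [natDegree_X]; omega) ⟨u * v * X, by ring⟩,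
    hres hu (by omega) ⟨v * X ^ 2, by ring⟩, hres hv (by omega) ⟨u * X ^ 2, by ring⟩, hnext,
    hcoeff one_lt_two, hcoeff two_pos, natDegree_X, pow_one, map_mul, map_mul, map_mul]
  ring

theorem sum_polyVonMangoldt_mul_mixedChar [Finite F] (k : Type*) [Field k] [Fintype k]
    [Algebra F k] :
    ∑ g ∈ monicsOfDegree F (Module.finrank F k),
        (polyVonMangoldt g : ℂ) * mixedChar χ₁ χ₂ χ₃ ψ u v β γ g =
      mixedCharSum χ₁ χ₂ χ₃ ψ u v β γ k := by
  rw [(monicMultiplicative_mixedChar χ₁ χ₂ χ₃ ψ u v β γ).sum_polyVonMangoldt_mul (k := k)]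
  exact Finset.sum_congr rfl fun x _ => mixedChar_minpoly_pow χ₁ χ₂ χ₃ ψ u v β γ x

theorem norm_mulChar_units [Finite F] (χ : MulChar F ℂ) (x : Fˣ) : ‖χ x‖ = 1 :=
  have := Fintype.ofFinite Fˣ
  Complex.norm_eq_one_of_mem_rootsOfUnity (χ.apply_mem_rootsOfUnity x)

/- The `L`-function of `mixedChar` is `P / (1 - η X)` with `|η| = |F|` and `P` of degree at most
`deg u + deg v + 3`; the crude bound forces the pole to cancel against a root of `P` and all other
inverse roots of `P` to have absolute value at most `√|F|`. -/
theorem norm_mixedCharSum_le_of_forall_extension [Fintype F] (hu : u.Monic) (hv : v.Monic) {C : ℝ}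
    (h : ∀ (k : Type) [Field k] [Fintype k] [Algebra F k],
      ‖mixedCharSum χ₁ χ₂ χ₃ ψ u v β γ k‖ ≤ C * √(Fintype.card k)) :
    ‖mixedCharSum χ₁ χ₂ χ₃ ψ u v β γ F‖ ≤
      (u.natDegree + v.natDegree + 2 : ℝ) * √(Fintype.card F) := by
  obtain ⟨p, hp⟩ := CharP.exists F
  have : Fact p.Prime := ⟨CharP.char_is_prime F p⟩
  have hcard : (1 : ℝ) < Fintype.card F := by exact_mod_cast Fintype.one_lt_card
  set κ : ℂ := χ₁ (-1) * χ₂ ((-1) ^ u.natDegree) * χ₃ ((-1) ^ v.natDegree) with hκ_def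
  have hκ : ‖κ‖ = 1 := by
    simpa [hκ_def] using congr_arg₂ (· * ·) (congr_arg₂ (· * ·) (norm_mulChar_units χ₁ (-1))
      (norm_mulChar_units χ₂ ((-1) ^ u.natDegree))) (norm_mulChar_units χ₃ ((-1) ^ v.natDegree))
  have hmonic : (u * v * X ^ 2).Monic := (hu.mul hv).mul (monic_X_pow 2)
  have hdeg : (u * v * X ^ 2).natDegree = u.natDegree + v.natDegree + 2 := by
    rw [(hu.mul hv).natDegree_mul (monic_X_pow 2), hu.natDegree_mul hv, natDegree_X_pow]
  have hsum : mixedCharSum χ₁ χ₂ χ₃ ψ u v β γ F =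
      ∑ x : F, mixedChar χ₁ χ₂ χ₃ ψ u v β γ (minpoly F x) :=
    Finset.sum_congr rfl fun x _ => by
      simpa [minpoly.eq_X_sub_C'] using (mixedChar_minpoly_pow χ₁ χ₂ χ₃ ψ u v β γ x).symm
  rw [hsum]
  refine ((monicMultiplicative_mixedChar χ₁ χ₂ χ₃ ψ u v β γ).norm_sum_minpoly_le
    (M := u.natDegree + v.natDegree + 3) (η := κ * Nat.card F) (C := C)
    (ρ := √(Fintype.card F)) (by positivity) ?_ (fun N hN => ?_) fun r hr => ?_).trans_eq
    (by push_cast; ring)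
  · rw [norm_mul, hκ, one_mul, Complex.norm_natCast, Nat.card_eq_fintype_card]
    exact Real.sqrt_lt_self_iff.mpr hcard
  · refine sum_monicsOfDegree_succ hmonic (by omega) fun g hg g' hg' hdvd hnext => ?_
    rw [mem_monicsOfDegree] at hg hg'
    exact mixedChar_congr χ₁ χ₂ χ₃ ψ β γ hu hv (by omega) (by omega) hdvd hnext
  · have : NeZero r := ⟨by omega⟩
    have := Fintype.ofFinite (FiniteField.Extension F p r)
    have hk := sum_polyVonMangoldt_mul_mixedChar χ₁ χ₂ χ₃ ψ (u := u) (v := v) β γ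
      (FiniteField.Extension F p r)
    rw [FiniteField.finrank_extension] at hk
    have hpow : √(Fintype.card F : ℝ) ^ r = √(Fintype.card (FiniteField.Extension F p r)) := by
      rw [← Nat.card_eq_fintype_card (α := FiniteField.Extension F p r),
        FiniteField.natCard_extension, Nat.card_eq_fintype_card, Nat.cast_pow,
        eq_comm, Real.sqrt_eq_iff_mul_self_eq (by positivity) (by positivity), ← mul_pow,
        Real.mul_self_sqrt (by positivity)]
    rw [hk, hpow]
    exact h _

end MixedCharacterSums

/-! ### Stepanov's method -/

section CoordDegree

variable {k R ι : Type*} [Field k] [CommRing R] [Algebra k[X] R]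

/-- All coordinates of `r` with respect to the `k[X]`-basis `b` have degree at most `A`. -/
def CoordDegreeLE (b : Module.Basis ι k[X] R) (A : ℕ) (r : R) : Prop :=
  ∀ i, (b.repr r i).natDegree ≤ A

namespace CoordDegreeLE

variable {b : Module.Basis ι k[X] R} {A B c : ℕ} {r r' : R}

theorem mono (h : CoordDegreeLE b A r) (hAB : A ≤ B) : CoordDegreeLE b B r :=
  fun i => (h i).trans hAB

theorem add (h : CoordDegreeLE b A r) (h' : CoordDegreeLE b A r') :
    CoordDegreeLE b A (r + r') := fun i => by
  rw [map_add, Finsupp.add_apply]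
  exact (natDegree_add_le _ _).trans (max_le (h i) (h' i))

theorem sum {J : Type*} {s : Finset J} {f : J → R} (h : ∀ j ∈ s, CoordDegreeLE b A (f j)) :
    CoordDegreeLE b A (∑ j ∈ s, f j) :=
  Finset.sum_induction f _ (fun _ _ => add) (fun i => by simp) h

theorem smul (h : CoordDegreeLE b A r) {f : k[X]} (hf : f.natDegree ≤ B) :
    CoordDegreeLE b (B + A) (f • r) := fun i => by
  rw [map_smul, Finsupp.smul_apply, smul_eq_mul]
  exact natDegree_mul_le_of_le hf (h i)

theorem basis (i : ι) : CoordDegreeLE b 0 (b i) := fun j => by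
  rw [b.repr_self, Finsupp.single_apply]
  split_ifs <;> simp

theorem map (h : CoordDegreeLE b A r) {f : R →ₗ[k[X]] R}
    (hf : ∀ i, CoordDegreeLE b c (f (b i))) : CoordDegreeLE b (A + c) (f r) := by
  rw [← b.linearCombination_repr r, Finsupp.linearCombination_apply, Finsupp.sum, map_sum]
  exact sum fun i _ => by rw [map_smul]; exact (hf i).smul (h i)

theorem mul (hmul : ∀ i j, CoordDegreeLE b c (b i * b j)) (h : CoordDegreeLE b A r)
    (h' : CoordDegreeLE b B r') : CoordDegreeLE b (A + B + c) (r * r') := by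
  have hbasis (i : ι) : CoordDegreeLE b (B + c) (b i * r') :=
    h'.map (f := LinearMap.mulLeft k[X] (b i)) (hmul i)
  rw [add_assoc]
  exact h.map (f := LinearMap.mulRight k[X] r') hbasis

theorem prod (hmul : ∀ i j, CoordDegreeLE b c (b i * b j)) {J : Type*} {s : Finset J}
    (hs : s.Nonempty) {f : J → R} (h : ∀ j ∈ s, CoordDegreeLE b A (f j)) :
    CoordDegreeLE b (s.card * (A + c)) (∏ j ∈ s, f j) := by
  induction hs using Finset.Nonempty.cons_induction with
  | singleton a =>
    rw [Finset.prod_singleton, Finset.card_singleton]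
    exact (h a (Finset.mem_singleton_self a)).mono (by omega)
  | cons a s ha _ ih =>
    rw [Finset.prod_cons, Finset.card_cons]
    exact (mul hmul (h a (Finset.mem_cons_self a s))
      (ih fun j hj => h j (Finset.mem_cons_of_mem hj))).mono (by rw [Nat.succ_mul]; omega)

theorem pow (hmul : ∀ i j, CoordDegreeLE b c (b i * b j)) (h : CoordDegreeLE b A r) {n : ℕ}
    (hn : n ≠ 0) : CoordDegreeLE b (n * (A + c)) (r ^ n) := by
  simpa using prod hmul (Finset.nonempty_range_iff.mpr hn) (f := fun _ => r) fun _ _ => h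

theorem card_le_of_forall_eval_eq_zero (h : CoordDegreeLE b A r) (hr : r ≠ 0) {s : Finset k}
    (hs : ∀ x ∈ s, ∀ i, (b.repr r i).eval x = 0) : s.card ≤ A := by
  by_contra! hlt
  refine hr ((b.forall_coord_eq_zero_iff).mp fun i => ?_)
  exact eq_zero_of_natDegree_lt_card_of_eval_eq_zero' _ s (fun x hx => hs x hx i)
    ((h i).trans_lt hlt)

end CoordDegreeLE

end CoordDegree

section Stepanov

variable {k R ι Γ J : Type*} [Field k] [CommRing R] [Algebra k[X] R] [Fintype J]
  {b : Module.Basis ι k[X] R} {A B c : ℕ}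

theorem exists_sum_mul_eq_zero [Fintype ι] (hmul : ∀ i j, CoordDegreeLE b c (b i * b j)) {v : J → R}
    (hv : ∀ j, CoordDegreeLE b A (v j)) (hι : 0 < Fintype.card ι)
    (hcard : A + B + c + 1 < Fintype.card J * (B + 1)) :
    ∃ y : J → R, y ≠ 0 ∧ (∀ j, CoordDegreeLE b B (y j)) ∧ ∑ j, v j * y j = 0 := by
  have hdeg (N : ℕ) {f : k[X]} : f ∈ degreeLT k (N + 1) ↔ f.natDegree ≤ N := by
    rw [degreeLT_succ_eq_degreeLE, mem_degreeLE, natDegree_le_iff_degree_le]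
  have hrank (N : ℕ) : Module.finrank k (degreeLT k N) = N := by
    rw [(degreeLTEquiv k N).finrank_eq, Module.finrank_fin_fun]
  have (N : ℕ) : FiniteDimensional k (degreeLT k N) :=
    Module.Finite.equiv (degreeLTEquiv k N).symm
  let y (u : J → ι → degreeLT k (B + 1)) (j : J) : R := b.equivFun.symm fun i => (u j i : k[X])
  have hrepr (u j i) : b.repr (y u j) i = u j i := by
    rw [← b.equivFun_apply, LinearEquiv.apply_symm_apply]
  have hy (u j) : CoordDegreeLE b B (y u j) := fun i => by
    rw [hrepr]
    exact (hdeg B).mp (u j i).2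
  have hL (u) : CoordDegreeLE b (A + B + c) (∑ j, v j * y u j) :=
    CoordDegreeLE.sum fun j _ => (hv j).mul hmul (hy u j)
  have hadd (u w j) : y (u + w) j = y u j + y w j := by
    rw [← map_add]
    rfl
  have hsmul (a : k) (u j) : y (a • u) j = (C a : k[X]) • y u j := by
    rw [← map_smul]
    exact congr_arg b.equivFun.symm (funext fun i => smul_eq_C_mul a)
  let L : (J → ι → degreeLT k (B + 1)) →ₗ[k] ι → degreeLT k (A + B + c + 1) :=
    { toFun u i := ⟨b.repr (∑ j, v j * y u j) i, (hdeg _).mpr (hL u i)⟩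
      map_add' u w := by
        ext1 i
        simp [hadd, mul_add, Finset.sum_add_distrib]
      map_smul' a u := by
        ext1 i
        simp [hsmul, ← Finset.smul_sum, smul_eq_C_mul] }
  obtain ⟨u, hu, hu0⟩ := L.ker.ne_bot_iff.mp <| LinearMap.ker_ne_bot_of_finrank_lt (f := L) <| by
    simp only [Module.finrank_pi_fintype, hrank, Finset.sum_const, Finset.card_univ, smul_eq_mul]
    nlinarith
  refine ⟨y u, fun h => hu0 ?_, hy u, ?_⟩
  · refine funext fun j => funext fun i => Subtype.ext ?_
    rw [← hrepr, h]
    simp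
  · refine b.ext_elem fun i => ?_
    simpa [L] using congr_arg Subtype.val (congr_fun (LinearMap.mem_ker.mp hu) i)

theorem repr_sum_C_smul_coeff [Fintype ι] (a : Fin (A + 1) × ι → k) (i : Fin (A + 1)) (j : ι) :
    (b.repr (∑ s, (C (a s) : k[X]) • (X ^ (s.1 : ℕ) : k[X]) • b s.2) j).coeff i = a (i, j) := by
  simp [Fintype.sum_prod_type, Finsupp.single_apply, coeff_X_pow, Fin.val_inj]

variable [Group Γ] {σ : Γ →* (R →ₐ[k[X]] R)} {x : k} {φ : R →+* k}

/-- `φ` is a `k`-rational point of `R` above `x` whose fibre consists of the conjugates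
`φ ∘ σ g` and is unramified: an element vanishing at all of them is divisible by `X - x`. -/
structure IsSplitPoint (b : Module.Basis ι k[X] R) (σ : Γ →* (R →ₐ[k[X]] R)) (x : k)
    (φ : R →+* k) : Prop where
  map_algebraMap (f : k[X]) : φ (algebraMap k[X] R f) = f.eval x
  eval_repr_eq_zero (r : R) (h : ∀ g, φ (σ g r) = 0) (i : ι) : (b.repr r i).eval x = 0

theorem IsSplitPoint.X_sub_C_dvd (hφ : IsSplitPoint b σ x φ) {r : R}
    (h : ∀ g, φ (σ g r) = 0) : algebraMap k[X] R (X - C x) ∣ r := by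
  rw [← b.linearCombination_repr r, Finsupp.linearCombination_apply]
  refine Finset.dvd_sum fun i _ => ?_
  beta_reduce
  rw [Algebra.smul_def]
  exact (_root_.map_dvd _ (dvd_iff_isRoot.mpr (hφ.eval_repr_eq_zero r h i))).mul_right _

theorem injective_conj (σ : Γ →* (R →ₐ[k[X]] R)) (g : Γ) : Function.Injective (σ g) :=
  Function.LeftInverse.injective (g := σ g⁻¹) fun r => by
    rw [← AlgHom.mul_apply, ← map_mul, inv_mul_cancel, map_one, AlgHom.one_apply]

variable [Fintype Γ]

/- Every product of conjugates `∏ τ, σ τ (t (f τ))` vanishes on the whole fibre above `x`. -/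
theorem IsSplitPoint.X_sub_C_pow_dvd_prod (hφ : IsSplitPoint b σ x φ) {g : Γ} {t : J → R}
    (ht : ∀ j, φ (σ g (t j)) = 0) (v : J → R) (N : ℕ) :
    algebraMap k[X] R ((X - C x) ^ N) ∣ ∏ τ, σ τ (∑ j, v j * t j ^ N) := by
  simp_rw [map_sum, map_mul, map_pow, Finset.prod_univ_sum, Finset.prod_mul_distrib,
    Finset.prod_pow]
  refine Finset.dvd_sum fun f _ => (pow_dvd_pow_of_dvd (hφ.X_sub_C_dvd fun g' => ?_) N).mul_left _
  rw [map_prod, map_prod]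
  refine Finset.prod_eq_zero (Finset.mem_univ (g'⁻¹ * g)) ?_
  rw [← AlgHom.mul_apply, ← map_mul, mul_inv_cancel_left, ht]

variable [IsDomain R]

theorem CoordDegreeLE.sum_mul_pow_eq_zero (hmul : ∀ i j, CoordDegreeLE b c (b i * b j))
    (hσ : ∀ g i, CoordDegreeLE b c (σ g (b i))) (hφ : IsSplitPoint b σ x φ) {g : Γ} {t v : J → R}
    {N : ℕ} (ht : ∀ j, φ (σ g (t j)) = 0) (hN : Fintype.card Γ * (A + 2 * c) < N)
    (h : CoordDegreeLE b A (∑ j, v j * t j ^ N)) : ∑ j, v j * t j ^ N = 0 := by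
  set V := ∑ j, v j * t j ^ N
  have hprod : CoordDegreeLE b (Fintype.card Γ * (A + c + c)) (∏ τ, σ τ V) :=
    prod hmul Finset.univ_nonempty fun τ _ => h.map (f := (σ τ).toLinearMap) (hσ τ)
  have hzero : ∏ τ, σ τ V = 0 := by
    obtain ⟨w, hw⟩ := hφ.X_sub_C_pow_dvd_prod ht v N
    refine b.ext_elem fun i => ?_
    by_contra hi
    have hdvd : b.repr (∏ τ, σ τ V) i = (X - C x) ^ N * b.repr w i := by
      rw [hw, ← Algebra.smul_def, map_smul, Finsupp.smul_apply, smul_eq_mul]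
    have hle := natDegree_le_of_dvd (Dvd.intro _ hdvd.symm) (by simpa using hi)
    rw [natDegree_pow, natDegree_X_sub_C, mul_one] at hle
    have := hprod i
    rw [add_assoc, ← two_mul] at this
    omega
  obtain ⟨τ, -, hτ⟩ := Finset.prod_eq_zero_iff.mp hzero
  exact (map_eq_zero_iff _ (injective_conj σ τ)).mp hτ

theorem IsSplitPoint.apply_eq_zero [Fintype ι] {p n : ℕ} [Fact p.Prime] [CharP R p]
    (hmul : ∀ i j, CoordDegreeLE b c (b i * b j)) (hσ : ∀ g i, CoordDegreeLE b c (σ g (b i)))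
    (hφ : IsSplitPoint b σ x φ) (hN : Fintype.card Γ * (A + 2 * c) < p ^ n)
    {y : Fin (A + 1) × ι → R}
    (hy : ∑ s, ((X ^ (s.1 : ℕ) : k[X]) • b s.2) * y s ^ p ^ n = 0) (g : Γ)
    (s : Fin (A + 1) × ι) : φ (σ g (y s)) = 0 := by
  set v : Fin (A + 1) × ι → R := fun s => (X ^ (s.1 : ℕ) : k[X]) • b s.2
  set a : Fin (A + 1) × ι → k := fun s => φ (σ g (y s))
  set t : Fin (A + 1) × ι → R := fun s => algebraMap k[X] R (C (a s)) - y s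
  have ht (s) : φ (σ g (t s)) = 0 := by
    rw [map_sub, AlgHom.commutes, map_sub, hφ.map_algebraMap, eval_C, sub_self]
  have hV : ∑ s, v s * t s ^ p ^ n = ∑ s, (C (a s ^ p ^ n) : k[X]) • v s := by
    rw [← sub_zero (∑ s, (C (a s ^ p ^ n) : k[X]) • v s), ← hy, ← Finset.sum_sub_distrib]
    refine Finset.sum_congr rfl fun s _ => ?_
    rw [sub_pow_char_pow, mul_sub, Algebra.smul_def, C_pow, map_pow, mul_comm (v s)]
  have hdeg : CoordDegreeLE b A (∑ s, v s * t s ^ p ^ n) := by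
    rw [hV]
    refine CoordDegreeLE.sum fun s _ => ?_
    have hX : (X ^ (s.1 : ℕ) : k[X]).natDegree ≤ A := by
      rw [natDegree_X_pow]
      omega
    exact (((CoordDegreeLE.basis s.2).smul hX).smul (natDegree_C _).le).mono (by omega)
  have hzero := hdeg.sum_mul_pow_eq_zero hmul hσ hφ ht hN
  have hcoeff := repr_sum_C_smul_coeff (b := b) (fun s => a s ^ p ^ n) s.1 s.2
  rw [← hV, hzero] at hcoeff
  rw [map_zero, Finsupp.zero_apply, coeff_zero] at hcoeff
  exact eq_zero_of_pow_eq_zero hcoeff.symm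

/- The auxiliary function `G = ∑ v * y ^ p ^ n` vanishes at every split point, since its `p ^ m`-th
power takes there the same value as `∑ v ^ p ^ m * y`, which is zero by the choice of `y`. -/
theorem card_le_of_isSplitPoint [Fintype ι] [Fintype k] (p m n : ℕ) [Fact p.Prime] [CharP k p]
    [CharP R p] (hcard : Fintype.card k = p ^ n * p ^ m)
    (hmul : ∀ i j, CoordDegreeLE b c (b i * b j)) (hσ : ∀ g i, CoordDegreeLE b c (σ g (b i)))
    {s : Finset k} (hs : ∀ x ∈ s, ∃ φ, IsSplitPoint b σ x φ)
    (hAB : p ^ m * (A + c) + B + c + 1 < Fintype.card ι * ((A + 1) * (B + 1)))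
    (hA : Fintype.card Γ * (A + 2 * c) < p ^ n) : s.card ≤ A + c + p ^ n * (B + c) := by
  have hp : p ≠ 0 := (Fact.out : p.Prime).ne_zero
  set v : Fin (A + 1) × ι → R := fun s => (X ^ (s.1 : ℕ) : k[X]) • b s.2
  have hv (s) : CoordDegreeLE b A (v s) := (CoordDegreeLE.basis s.2).smul (by
    rw [natDegree_X_pow]
    omega)
  obtain ⟨y, hy0, hy, hsum⟩ := exists_sum_mul_eq_zero (B := B) hmul
    (fun j => (hv j).pow hmul (pow_ne_zero m hp)) (by by_contra! h; simp_all) (by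
      rw [Fintype.card_prod, Fintype.card_fin]
      nlinarith)
  set G := ∑ s, v s * y s ^ p ^ n
  have hG : CoordDegreeLE b (A + c + p ^ n * (B + c)) G := CoordDegreeLE.sum fun s _ =>
    ((hv s).mul hmul ((hy s).pow hmul (pow_ne_zero n hp))).mono (by omega)
  by_cases hG0 : G = 0
  · obtain ⟨j, hj⟩ := Function.ne_iff.mp hy0
    refine ((hy j).card_le_of_forall_eval_eq_zero hj fun x hx => ?_).trans ?_
    · obtain ⟨φ, hφ⟩ := hs x hx
      exact hφ.eval_repr_eq_zero _ fun g => hφ.apply_eq_zero hmul hσ hA hG0 g j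
    · have := Nat.one_le_pow n p (Nat.pos_of_ne_zero hp)
      nlinarith
  · refine hG.card_le_of_forall_eval_eq_zero hG0 fun x hx => ?_
    obtain ⟨φ, hφ⟩ := hs x hx
    refine hφ.eval_repr_eq_zero _ fun g => eq_zero_of_pow_eq_zero (n := p ^ m) ?_
    calc φ (σ g G) ^ p ^ m = φ (σ g (∑ s, v s ^ p ^ m * y s)) := by
          simp only [G, map_sum, sum_pow_char_pow, map_mul, map_pow, mul_pow, ← pow_mul, ← hcard,
            FiniteField.pow_card]
      _ = 0 := by rw [hsum, map_zero, map_zero]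

theorem exists_stepanov_parameters {P Q c D : ℕ} (hPQ : P ≤ Q) (hD : 0 < D)
    (hQ : 15 * D * (c + 1) ≤ Q) :
    ∃ A B, P * (A + c) + B + c + 1 < D * ((A + 1) * (B + 1)) ∧ D * (A + 2 * c) < Q ∧
      D * (A + c + Q * (B + c)) ≤ Q * P + 15 * D ^ 2 * (c + 1) * Q := by
  set K := 2 * D * (c + 2) with hK
  have hd := Nat.mul_div_le (Q - 1) D
  have hd' := Nat.lt_mul_div_succ (Q - 1) hD
  have hB := Nat.mul_div_le (P + K) D
  have hB' := Nat.lt_mul_div_succ (P + K) hD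
  set B := (P + K) / D
  obtain ⟨A, hA⟩ : ∃ A, (Q - 1) / D = A + 2 * c := by
    refine Nat.exists_eq_add_of_le' ((Nat.le_div_iff_mul_le hD).mpr ?_)
    have : 2 * c * D + 1 ≤ 15 * D * (c + 1) := by nlinarith
    omega
  rw [hA] at hd hd'
  have hAQ : Q ≤ 2 * (D * (A + 1)) := by
    have : D * (A + 2 * c + 1) = D * (A + 1) + 2 * (c * D) := by ring
    have : 15 * D * (c + 1) = 15 * (c * D) + 15 * D := by ring
    omega
  have hone : 1 ≤ Q := by nlinarith
  refine ⟨A, B, ?_, by omega, ?_⟩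
  · have hlow : (A + 1) * (P + K) < D * ((A + 1) * (B + 1)) := by nlinarith
    have hQK : Q * (c + 2) ≤ (A + 1) * K := by nlinarith
    have hBP : B ≤ P + K := Nat.div_le_self _ _
    have hKQ : K + c + 1 ≤ Q := by nlinarith
    nlinarith
  · have hDA : D * A ≤ Q := by
      have := Nat.mul_le_mul_left D (Nat.le_add_right A (2 * c))
      omega
    have hDc : D * c ≤ Q * (D * c) := Nat.le_mul_of_pos_left _ hone
    have hconst : K + 2 * D * c + 1 ≤ 15 * D ^ 2 * (c + 1) := by
      have : D ≤ D ^ 2 := Nat.le_self_pow two_ne_zero D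
      have : D * c ≤ D ^ 2 * c := Nat.mul_le_mul_right c this
      nlinarith
    calc D * (A + c + Q * (B + c)) = D * A + D * c + Q * (D * B) + Q * (D * c) := by ring
      _ ≤ Q + Q * (D * c) + Q * (P + K) + Q * (D * c) :=
        add_le_add_left (add_le_add (add_le_add hDA hDc) (Nat.mul_le_mul_left Q hB)) _
      _ = Q * P + (K + 2 * D * c + 1) * Q := by ring
      _ ≤ Q * P + 15 * D ^ 2 * (c + 1) * Q := by gcongr

theorem card_mul_card_le_of_isSplitPoint [Fintype ι] [Fintype k] {p : ℕ} [Fact p.Prime] [CharP k p]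
    [CharP R p] (hmul : ∀ i j, CoordDegreeLE b c (b i * b j))
    (hσ : ∀ g i, CoordDegreeLE b c (σ g (b i))) (hιΓ : Fintype.card ι = Fintype.card Γ)
    {s : Finset k} (hs : ∀ x ∈ s, ∃ φ, IsSplitPoint b σ x φ) :
    (Fintype.card Γ * s.card : ℝ) ≤ Fintype.card k +
      15 * (Fintype.card Γ : ℝ) ^ 2 * (c + 1) * p * √(Fintype.card k) := by
  have hp := (Fact.out : p.Prime).pos
  obtain ⟨N, -, hN⟩ := FiniteField.card k p
  set D := Fintype.card Γ
  set P := p ^ ((N : ℕ) / 2)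
  set Q := p ^ ((N : ℕ) - N / 2)
  have hQP : Fintype.card k = Q * P := by
    rw [hN, ← pow_add]
    congr 1
    omega
  have hPQ : P ≤ Q := Nat.pow_le_pow_right hp (by omega)
  have hQpP : Q ≤ p * P := by
    rw [← pow_succ']
    exact Nat.pow_le_pow_right hp (by omega)
  have hmain : D * s.card ≤ Q * P + 15 * D ^ 2 * (c + 1) * Q := by
    rcases le_or_gt (15 * D * (c + 1)) Q with hQ | hQ
    · obtain ⟨A, B, hAB, hA, hle⟩ := exists_stepanov_parameters hPQ Fintype.card_pos hQ
      exact (Nat.mul_le_mul_left D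
        (card_le_of_isSplitPoint p _ _ hQP hmul hσ hs (hιΓ ▸ hAB) hA)).trans hle
    · calc D * s.card ≤ D * (Q * P) := Nat.mul_le_mul_left D (hQP ▸ s.card_le_univ)
        _ ≤ D * (Q * (15 * D * (c + 1))) := by gcongr; omega
        _ = 15 * D ^ 2 * (c + 1) * Q := by ring
        _ ≤ Q * P + 15 * D ^ 2 * (c + 1) * Q := Nat.le_add_left _ _
  have hsq : Q ^ 2 ≤ p ^ 2 * (Q * P) :=
    calc Q ^ 2 = Q * Q := sq Q
      _ ≤ Q * (p * P) := by gcongr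
      _ = p * (Q * P) := by ring
      _ ≤ p ^ 2 * (Q * P) := by gcongr; exact Nat.le_self_pow two_ne_zero p
  have hsqrt : (Q : ℝ) ≤ p * √(Fintype.card k) := by
    refine le_of_sq_le_sq ?_ (by positivity)
    rw [mul_pow, Real.sq_sqrt (by positivity), hQP]
    exact_mod_cast hsq
  calc (D * s.card : ℝ) ≤ Fintype.card k + 15 * D ^ 2 * (c + 1) * Q := by
        rw [hQP]
        exact_mod_cast hmain
    _ ≤ Fintype.card k + 15 * D ^ 2 * (c + 1) * (p * √(Fintype.card k)) := by gcongr
    _ = _ := by ring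

end Stepanov

/-! ### Kummer–Artin–Schreier covers -/

/-- The ring `A[y, z]` with `y ^ d = S` and `z ^ p = e ^ (p - 1) * z + h`. The factor `e ^ (p - 1)`
makes `z ↦ z + e` an automorphism in characteristic `p`: in terms of `z / e` the second equation is
an Artin–Schreier equation. -/
def KummerArtinSchreier {A : Type*} [CommRing A] (d p : ℕ) (S e h : A) : Type _ :=
  AdjoinRoot (X ^ p - (C (algebraMap A (AdjoinRoot (X ^ d - C S)) (e ^ (p - 1))) * X +
    C (algebraMap A (AdjoinRoot (X ^ d - C S)) h)))

theorem monic_X_pow_sub_linear {A : Type*} [CommRing A] {p : ℕ} (hp : 2 ≤ p) (a b : A) :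
    (X ^ p - (C a * X + C b)).Monic :=
  monic_X_pow_sub (degree_linear_le.trans_lt (by exact_mod_cast hp))

theorem natDegree_X_pow_sub_linear {A : Type*} [CommRing A] [Nontrivial A] {p : ℕ} (hp : 2 ≤ p)
    (a b : A) : (X ^ p - (C a * X + C b)).natDegree = p := by
  rw [natDegree_sub_eq_left_of_natDegree_lt, natDegree_X_pow]
  rw [natDegree_X_pow]
  exact natDegree_linear_le.trans_lt hp

/-- The basis of powers of the root of a monic polynomial `f`, indexed by `Fin n` for a given
`n = f.natDegree`. -/
noncomputable def adjoinRootBasis {A : Type*} [CommRing A] {f : A[X]} (hf : f.Monic) {n : ℕ}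
    (hn : f.natDegree = n) : Module.Basis (Fin n) A (AdjoinRoot f) :=
  (AdjoinRoot.powerBasis' hf).basis.reindex (finCongr hn)

theorem adjoinRootBasis_apply {A : Type*} [CommRing A] {f : A[X]} (hf : f.Monic) {n : ℕ}
    (hn : f.natDegree = n) (i : Fin n) :
    adjoinRootBasis hf hn i = AdjoinRoot.root f ^ (i : ℕ) := by
  subst hn
  exact (AdjoinRoot.powerBasis' hf).basis_eq_pow i

theorem adjoinRootBasis_smulTower_apply {A : Type*} [CommRing A] {f : A[X]} (hf : f.Monic) {m : ℕ}
    (hm : f.natDegree = m) {g : (AdjoinRoot f)[X]} (hg : g.Monic) {n : ℕ} (hn : g.natDegree = n)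
    (i : Fin m × Fin n) :
    (adjoinRootBasis hf hm).smulTower (adjoinRootBasis hg hn) i =
      AdjoinRoot.of g (AdjoinRoot.root f) ^ (i.1 : ℕ) * AdjoinRoot.root g ^ (i.2 : ℕ) := by
  rw [Module.Basis.smulTower_apply, adjoinRootBasis_apply, adjoinRootBasis_apply,
    Algebra.smul_def, map_pow, AdjoinRoot.algebraMap_eq]

namespace KummerArtinSchreier

variable {A : Type*} [CommRing A] {d p : ℕ} {S e h : A}

noncomputable instance : CommRing (KummerArtinSchreier d p S e h) :=
  inferInstanceAs (CommRing (AdjoinRoot _))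

noncomputable instance : Algebra A (KummerArtinSchreier d p S e h) :=
  inferInstanceAs (Algebra A (AdjoinRoot _))

/-- The generator of `KummerArtinSchreier d p S e h` with `y ^ d = S`. -/
noncomputable def y : KummerArtinSchreier d p S e h :=
  AdjoinRoot.of _ (AdjoinRoot.root (X ^ d - C S))

/-- The generator of `KummerArtinSchreier d p S e h` with `z ^ p = e ^ (p - 1) * z + h`. -/
noncomputable def z : KummerArtinSchreier d p S e h :=
  AdjoinRoot.root _

theorem y_pow : (y : KummerArtinSchreier d p S e h) ^ d = algebraMap A _ S := by
  have h := AdjoinRoot.eval₂_root (X ^ d - C S)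
  rw [eval₂_sub, eval₂_X_pow, eval₂_C, sub_eq_zero] at h
  exact (map_pow (AdjoinRoot.of _) _ d).symm.trans (congrArg _ h)

theorem z_pow : (z : KummerArtinSchreier d p S e h) ^ p =
    algebraMap A _ (e ^ (p - 1)) * z + algebraMap A _ h := by
  have h := AdjoinRoot.eval₂_root
    (X ^ p - (C (algebraMap A (AdjoinRoot (X ^ d - C S)) (e ^ (p - 1))) * X + C (algebraMap A _ h)))
  rw [eval₂_sub, eval₂_X_pow, eval₂_add, eval₂_mul, eval₂_C, eval₂_C, eval₂_X, sub_eq_zero] at h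
  exact h

theorem exists_lift {B : Type*} [CommRing B] (f : A →+* B) {y₀ z₀ : B} (hy : y₀ ^ d = f S)
    (hz : z₀ ^ p = f (e ^ (p - 1)) * z₀ + f h) :
    ∃ φ : KummerArtinSchreier d p S e h →+* B,
      (∀ a, φ (algebraMap A _ a) = f a) ∧ φ y = y₀ ∧ φ z = z₀ := by
  have hy' : eval₂ f y₀ (X ^ d - C S) = 0 := by simp [hy]
  let φ := AdjoinRoot.lift f y₀ hy'
  have hφ (a : A) : φ (algebraMap A _ a) = f a := AdjoinRoot.lift_of hy'
  have hz' : eval₂ φ z₀ (X ^ p - (C (algebraMap A (AdjoinRoot (X ^ d - C S)) (e ^ (p - 1))) * X +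
      C (algebraMap A _ h))) = 0 := by
    rw [eval₂_sub, eval₂_X_pow, eval₂_add, eval₂_mul, eval₂_C, eval₂_C, eval₂_X, hφ, hφ, hz,
      sub_self]
  exact ⟨AdjoinRoot.lift φ z₀ hz', fun a => (AdjoinRoot.lift_of hz').trans (hφ a),
    (AdjoinRoot.lift_of hz').trans (AdjoinRoot.lift_root hy'), AdjoinRoot.lift_root hz'⟩

instance [Nontrivial A] [NeZero d] : Nontrivial (AdjoinRoot (X ^ d - C S)) :=
  have b := adjoinRootBasis (monic_X_pow_sub_C S (NeZero.ne d)) natDegree_X_pow_sub_C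
  nontrivial_of_ne _ _ (b.ne_zero 0)

variable (S e h) in
/-- The basis of monomials `y ^ i * z ^ j` of `KummerArtinSchreier d p S e h` over `A`. -/
noncomputable def basis [Nontrivial A] [NeZero d] (hp : 2 ≤ p) :
    Module.Basis (Fin d × Fin p) A (KummerArtinSchreier d p S e h) :=
  ((adjoinRootBasis (monic_X_pow_sub_C S (NeZero.ne d)) natDegree_X_pow_sub_C).smulTower
    (adjoinRootBasis (monic_X_pow_sub_linear hp _ _) (natDegree_X_pow_sub_linear hp _ _)) :
    Module.Basis _ A (AdjoinRoot _))

theorem basis_apply [Nontrivial A] [NeZero d] (hp : 2 ≤ p) (i : Fin d × Fin p) :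
    basis S e h hp i = y ^ (i.1 : ℕ) * z ^ (i.2 : ℕ) :=
  adjoinRootBasis_smulTower_apply _ _ _ _ i

theorem algHom_ext [Nontrivial A] [NeZero d] (hp : 2 ≤ p) {B : Type*} [CommRing B] [Algebra A B]
    {f g : KummerArtinSchreier d p S e h →ₐ[A] B} (hy : f y = g y) (hz : f z = g z) : f = g :=
  AlgHom.toLinearMap_injective <| (basis S e h hp).ext fun i => by
    simp only [AlgHom.toLinearMap_apply, basis_apply, map_mul, map_pow, hy, hz]

end KummerArtinSchreier

section Independence

theorem eq_zero_of_forall_sum_pow_mul_pow_eq_zero {L : Type*} [CommRing L] [IsDomain L] {m n : ℕ}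
    {f : Fin m → L} (hf : Function.Injective f) {g : Fin n → L} (hg : Function.Injective g)
    {a : Fin m × Fin n → L}
    (h : ∀ s t, ∑ i, a i * (f s ^ (i.1 : ℕ) * g t ^ (i.2 : ℕ)) = 0) (i : Fin m × Fin n) :
    a i = 0 := by
  refine congrFun (Matrix.eq_zero_of_forall_index_sum_mul_pow_eq_zero
    (v := fun i₁ => a (i₁, i.2)) hf fun s => ?_) i.1
  refine congrFun (Matrix.eq_zero_of_forall_index_sum_mul_pow_eq_zero
    (v := fun i₂ => ∑ i₁, a (i₁, i₂) * f s ^ (i₁ : ℕ)) hg fun t => ?_) i.2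
  simp only [← h s t, Fintype.sum_prod_type_right, Finset.sum_mul, mul_assoc]

theorem eq_zero_of_forall_rootsOfUnity_zmod {K L : Type*} [Field K] [Field L] [Algebra K L]
    {d p : ℕ} [NeZero d] [Fact p.Prime] [CharP L p] {ζ : K} (hζ : IsPrimitiveRoot ζ d)
    {y E : L} (hy : y ≠ 0) (hE : E ≠ 0) (z : L) {a : Fin d × Fin p → L}
    (h : ∀ (u : rootsOfUnity d K) (t : ZMod p),
      ∑ i, a i * ((algebraMap K L (u : Kˣ) * y) ^ (i.1 : ℕ) *
        (z + ZMod.castHom dvd_rfl L t * E) ^ (i.2 : ℕ)) = 0) (i : Fin d × Fin p) : a i = 0 := by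
  have := Fintype.ofFinite (rootsOfUnity d K)
  let eu : Fin d ≃ rootsOfUnity d K :=
    (Fintype.equivFinOfCardEq (by rw [← Nat.card_eq_fintype_card, hζ.card_rootsOfUnity])).symm
  let et : Fin p ≃ ZMod p := (Fintype.equivFinOfCardEq (ZMod.card p)).symm
  refine eq_zero_of_forall_sum_pow_mul_pow_eq_zero (f := fun s => algebraMap K L (eu s : Kˣ) * y)
    (fun s s' hs => ?_) (g := fun s => z + ZMod.castHom dvd_rfl L (et s) * E) (fun s s' hs => ?_)
    (fun s t => h (eu s) (et t)) i
  · exact eu.injective (Subtype.ext (Units.ext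
      ((algebraMap K L).injective (mul_right_cancel₀ hy hs))))
  · exact et.injective ((ZMod.castHom dvd_rfl L).injective
      (mul_right_cancel₀ hE (add_left_cancel hs)))

theorem exists_apply_eq_and_apply_eq_of_coprime {G A B : Type*} [Group G] [Group A] [Group B]
    {f : G →* A} {g : G →* B} (hf : Function.Surjective f) (hg : Function.Surjective g)
    (h : (Nat.card B).Coprime (Nat.card A)) (a : A) (b : B) : ∃ τ, f τ = a ∧ g τ = b := by
  obtain ⟨σ, rfl⟩ := hf a
  obtain ⟨b', hb'⟩ := h.pow_left_bijective.surjective ((g σ)⁻¹ * b)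
  obtain ⟨τ, rfl⟩ := hg b'
  refine ⟨σ * τ ^ Nat.card A, ?_, ?_⟩
  · rw [map_mul, map_pow, pow_card_eq_one', mul_one]
  · rw [map_mul, map_pow]
    exact (congrArg _ hb').trans (mul_inv_cancel_left _ _)

theorem map_zmodCastHom {R R' F : Type*} [Ring R] [Ring R'] [FunLike F R R'] [RingHomClass F R R']
    {p : ℕ} [CharP R p] [CharP R' p] (f : F) (t : ZMod p) :
    f (ZMod.castHom dvd_rfl R t) = ZMod.castHom dvd_rfl R' t :=
  RingHom.congr_fun
    (Subsingleton.elim ((f : R →+* R').comp (ZMod.castHom dvd_rfl R)) (ZMod.castHom dvd_rfl R')) t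

section Galois

variable {K L : Type*} [Field K] [Field L] [Algebra K L]

theorem exists_kummerCharacter {d : ℕ} [NeZero d] {ζ : K} (hζ : IsPrimitiveRoot ζ d) {S : K}
    {y : L} (hy : y ^ d = algebraMap K L S) (hy0 : y ≠ 0) :
    ∃ χ : (L ≃ₐ[K] L) →* rootsOfUnity d K, ∀ τ, τ y = algebraMap K L (χ τ : Kˣ) * y := by
  have hex (τ : L ≃ₐ[K] L) : ∃ u : rootsOfUnity d K, τ y = algebraMap K L (u : Kˣ) * y := by
    have hpow : (τ y / y) ^ d = 1 := by
      rw [div_pow, ← map_pow, hy, AlgEquiv.commutes, ← hy, div_self (pow_ne_zero d hy0)]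
    obtain ⟨i, -, hi⟩ :=
      (hζ.map_of_injective (algebraMap K L).injective).eq_pow_of_pow_eq_one hpow
    refine ⟨hζ.toRootsOfUnity ^ i, ?_⟩
    rw [← div_eq_iff hy0, ← hi]
    simp
  choose χ hχ using hex
  refine ⟨.mk' χ fun σ τ => Subtype.ext (Units.ext ?_), hχ⟩
  refine (algebraMap K L).injective (mul_right_cancel₀ hy0 ?_)
  rw [← hχ, AlgEquiv.mul_apply, hχ τ, map_mul, hχ σ, AlgEquiv.commutes, Subgroup.coe_mul,
    Units.val_mul, map_mul]
  ring

theorem kummerCharacter_surjective [IsGalois K L] {d : ℕ} [NeZero d] {ζ : K}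
    (hζ : IsPrimitiveRoot ζ d) {S : K} {y : L} (hy : y ^ d = algebraMap K L S)
    (hS : ∀ ℓ : ℕ, ℓ.Prime → ℓ ∣ d → ∀ w : K, w ^ ℓ ≠ S)
    {χ : (L ≃ₐ[K] L) →* rootsOfUnity d K} (hχ : ∀ τ, τ y = algebraMap K L (χ τ : Kˣ) * y) :
    Function.Surjective χ := by
  rw [← MonoidHom.range_eq_top, ← Subgroup.card_eq_iff_eq_top, hζ.card_rootsOfUnity]
  set n := Nat.card χ.range
  obtain ⟨r, hr⟩ : n ∣ d := hζ.card_rootsOfUnity ▸ Subgroup.card_subgroup_dvd_card χ.range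
  by_contra hne
  obtain ⟨ℓ, hℓ, r', rfl⟩ := Nat.exists_prime_and_dvd (n := r) (by rintro rfl; omega)
  have hfix (τ : L ≃ₐ[K] L) : τ (y ^ n) = y ^ n := by
    have hpow : χ τ ^ n = 1 :=
      congrArg Subtype.val (pow_card_eq_one' (x := (⟨χ τ, τ, rfl⟩ : χ.range)))
    have hpow' : ((χ τ : Kˣ) : K) ^ n = 1 := by
      simpa using congrArg (fun u : rootsOfUnity d K => ((u : Kˣ) : K)) hpow
    rw [map_pow, hχ, mul_pow, ← map_pow, hpow', map_one, one_mul]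
  obtain ⟨w, hw⟩ := (InfiniteGalois.mem_range_algebraMap_iff_fixed _).mpr hfix
  refine hS ℓ hℓ ⟨n * r', hr.trans (by ring)⟩ (w ^ r') ((algebraMap K L).injective ?_)
  rw [map_pow, map_pow, hw, ← hy, hr]
  ring

variable {p : ℕ} [Fact p.Prime] [CharP L p]

theorem exists_artinSchreierCharacter {e h : K} (he : e ≠ 0) {z : L}
    (hz : z ^ p = algebraMap K L (e ^ (p - 1)) * z + algebraMap K L h) :
    ∃ ψ : (L ≃ₐ[K] L) →* Multiplicative (ZMod p), ∀ τ,
      τ z = z + ZMod.castHom dvd_rfl L (ψ τ).toAdd * algebraMap K L e := by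
  have hp := (Fact.out : p.Prime)
  set E := algebraMap K L e with hE
  have hE0 : E ≠ 0 := (_root_.map_ne_zero _).2 he
  have hex (τ : L ≃ₐ[K] L) : ∃ t : ZMod p, τ z = z + ZMod.castHom dvd_rfl L t * E := by
    have hpow : ((τ z - z) / E) ^ p = (τ z - z) / E := by
      have hτ : τ z ^ p = E ^ (p - 1) * τ z + algebraMap K L h := by
        rw [← map_pow, hz, map_add, map_mul, AlgEquiv.commutes, AlgEquiv.commutes, map_pow]
      rw [map_pow] at hz
      rw [div_pow, sub_pow_char, hτ, hz, add_sub_add_right_eq_sub, ← mul_sub,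
        ← pow_sub_one_mul hp.ne_zero E, mul_div_mul_left _ _ (pow_ne_zero _ hE0)]
    rw [← Subfield.mem_bot_iff_pow_eq_self, ← ZMod.fieldRange_castHom_eq_bot p] at hpow
    obtain ⟨t, ht⟩ := hpow
    exact ⟨t, by rw [ht, div_mul_cancel₀ _ hE0, add_sub_cancel]⟩
  choose ψ hψ using hex
  refine ⟨.mk' (fun τ => .ofAdd (ψ τ)) fun σ τ => congrArg Multiplicative.ofAdd ?_, hψ⟩
  refine (ZMod.castHom dvd_rfl L).injective (mul_right_cancel₀ hE0 (add_left_cancel (a := z) ?_))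
  have hfix (t : ZMod p) : σ (ZMod.castHom dvd_rfl L t * E) = ZMod.castHom dvd_rfl L t * E := by
    rw [map_mul, hE, AlgEquiv.commutes, map_zmodCastHom]
  rw [← hψ, AlgEquiv.mul_apply, hψ τ, map_add, hψ σ, hfix, map_add, toAdd_ofAdd, toAdd_ofAdd]
  ring

theorem artinSchreierCharacter_surjective [IsGalois K L] {e h : K} {z : L}
    (hz : z ^ p = algebraMap K L (e ^ (p - 1)) * z + algebraMap K L h)
    (hK : ∀ w : K, w ^ p ≠ e ^ (p - 1) * w + h)
    {ψ : (L ≃ₐ[K] L) →* Multiplicative (ZMod p)}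
    (hψ : ∀ τ, τ z = z + ZMod.castHom dvd_rfl L (ψ τ).toAdd * algebraMap K L e) :
    Function.Surjective ψ := by
  have hprime : (Nat.card (Multiplicative (ZMod p))).Prime := by
    rw [Nat.card_congr Multiplicative.toAdd, Nat.card_zmod]
    exact Fact.out
  have := Fact.mk hprime
  rw [← MonoidHom.range_eq_top]
  refine (ψ.range.eq_bot_or_eq_top_of_prime_card).resolve_left fun hbot => ?_
  have hfix (τ : L ≃ₐ[K] L) : τ z = z := by
    have : ψ τ = 1 := by rw [← Subgroup.mem_bot, ← hbot]; exact ⟨τ, rfl⟩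
    simp [hψ, this]
  obtain ⟨w, rfl⟩ := (InfiniteGalois.mem_range_algebraMap_iff_fixed _).mpr hfix
  exact hK w ((algebraMap K L).injective (by simpa using hz))

/- The Kummer and the Artin–Schreier characters are onto groups of coprime orders, hence jointly
onto: every `(u * y, z + t * e)` is conjugate to `(y, z)`. -/
theorem eq_zero_of_sum_kummer_artinSchreier_eq_zero [IsGalois K L] {d : ℕ} [NeZero d] {ζ : K}
    (hζ : IsPrimitiveRoot ζ d) {S e h : K} (hS0 : S ≠ 0) (he : e ≠ 0)
    (hS : ∀ ℓ : ℕ, ℓ.Prime → ℓ ∣ d → ∀ w : K, w ^ ℓ ≠ S)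
    (hh : ∀ w : K, w ^ p ≠ e ^ (p - 1) * w + h) {y z : L} (hy : y ^ d = algebraMap K L S)
    (hz : z ^ p = algebraMap K L (e ^ (p - 1)) * z + algebraMap K L h) {a : Fin d × Fin p → K}
    (ha : ∑ i, algebraMap K L (a i) * (y ^ (i.1 : ℕ) * z ^ (i.2 : ℕ)) = 0) (i : Fin d × Fin p) :
    a i = 0 := by
  have hy0 : y ≠ 0 := by
    rintro rfl
    rw [zero_pow (NeZero.ne d), eq_comm, map_eq_zero] at hy
    exact hS0 hy
  obtain ⟨χ, hχ⟩ := exists_kummerCharacter hζ hy hy0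
  obtain ⟨ψ, hψ⟩ := exists_artinSchreierCharacter he hz
  have hcop : (Nat.card (Multiplicative (ZMod p))).Coprime (Nat.card (rootsOfUnity d K)) := by
    rw [Nat.card_congr Multiplicative.toAdd, Nat.card_zmod, hζ.card_rootsOfUnity,
      (Fact.out : p.Prime).coprime_iff_not_dvd, ← CharP.cast_eq_zero_iff L p]
    exact (hζ.map_of_injective (algebraMap K L).injective).neZero'.ne
  refine (map_eq_zero (algebraMap K L)).1 (eq_zero_of_forall_rootsOfUnity_zmod hζ hy0
    ((_root_.map_ne_zero (algebraMap K L)).2 he) z (a := fun i => algebraMap K L (a i))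
    (fun u t => ?_) i)
  obtain ⟨τ, rfl, hτ⟩ := exists_apply_eq_and_apply_eq_of_coprime
    (kummerCharacter_surjective hζ hy hS hχ) (artinSchreierCharacter_surjective hz hh hψ) hcop
    u (.ofAdd t)
  have hzτ := hψ τ
  rw [hτ, toAdd_ofAdd] at hzτ
  rw [← hχ, ← hzτ]
  simpa using congrArg τ ha

end Galois

namespace KummerArtinSchreier

variable {k A : Type*} [Field k] [CommRing A] [IsDomain A] [IsIntegrallyClosed A] [Algebra k A]
  {d p : ℕ} [NeZero d] [Fact p.Prime] {ζ : k} {S e h : A}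

theorem injective_of_isGalois {K L : Type*} [Field K] [Algebra A K] [IsFractionRing A K] [Field L]
    [Algebra K L] [IsGalois K L] [CharP L p] (hζ : IsPrimitiveRoot ζ d) (hS0 : S ≠ 0) (he : e ≠ 0)
    (hS : ∀ ℓ : ℕ, ℓ.Prime → ℓ ∣ d → ∀ w : A, w ^ ℓ ≠ S)
    (hh : ∀ w : A, w ^ p ≠ e ^ (p - 1) * w + h) {φ : KummerArtinSchreier d p S e h →+* L}
    (hφ : ∀ a, φ (algebraMap A _ a) = algebraMap K L (algebraMap A K a)) :
    Function.Injective φ := by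
  have hp := (Fact.out : p.Prime).two_le
  have hAK : Function.Injective (algebraMap A K) := IsFractionRing.injective A K
  have hSK (ℓ : ℕ) (hℓ : ℓ.Prime) (hℓd : ℓ ∣ d) (w : K) : w ^ ℓ ≠ algebraMap A K S := fun hw => by
    obtain ⟨w, rfl⟩ := IsIntegrallyClosed.exists_algebraMap_eq_of_isIntegral_pow (R := A) hℓ.pos
      (hw ▸ isIntegral_algebraMap)
    exact hS ℓ hℓ hℓd w (hAK (by rw [map_pow, hw]))
  have hhK (w : K) : w ^ p ≠ algebraMap A K e ^ (p - 1) * w + algebraMap A K h := fun hw => by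
    have hint : IsIntegral A w :=
      ⟨_, monic_X_pow_sub_linear hp (e ^ (p - 1)) h, by simp [hw]⟩
    obtain ⟨w, rfl⟩ := IsIntegrallyClosed.algebraMap_eq_of_integral hint
    exact hh w (hAK (by rw [map_pow, hw, map_add, map_mul, map_pow]))
  refine (injective_iff_map_eq_zero φ).2 fun r hr => (basis S e h hp).ext_elem fun i => ?_
  rw [map_zero, Finsupp.zero_apply, ← map_eq_zero_iff _ hAK]
  refine eq_zero_of_sum_kummer_artinSchreier_eq_zero
    ((hζ.map_of_injective (algebraMap k A).injective).map_of_injective hAK)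
    ((map_ne_zero_iff _ hAK).2 hS0) ((map_ne_zero_iff _ hAK).2 he) hSK hhK (y := φ y) (z := φ z)
    (by rw [← map_pow, y_pow, hφ])
    (by rw [← map_pow, z_pow, map_add, map_mul, hφ, hφ, map_pow])
    (a := fun i => algebraMap A K ((basis S e h hp).repr r i)) ?_ i
  rw [← (basis S e h hp).sum_repr r, map_sum] at hr
  simpa only [Algebra.smul_def, map_mul, hφ, basis_apply, map_pow] using hr

theorem isDomain [CharP A p] (hζ : IsPrimitiveRoot ζ d) (hS0 : S ≠ 0) (he : e ≠ 0)
    (hS : ∀ ℓ : ℕ, ℓ.Prime → ℓ ∣ d → ∀ w : A, w ^ ℓ ≠ S)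
    (hh : ∀ w : A, w ^ p ≠ e ^ (p - 1) * w + h) : IsDomain (KummerArtinSchreier d p S e h) := by
  let K := FractionRing A
  let L := SeparableClosure K
  let f := (algebraMap K L).comp (algebraMap A K)
  have hf : Function.Injective f :=
    (algebraMap K L).injective.comp (IsFractionRing.injective A K)
  have : CharP L p := charP_of_injective_ringHom hf p
  have : IsGalois K L := IsSepClosure.isGalois
  have : NeZero (d : L) :=
    ((hζ.map_of_injective (algebraMap k A).injective).map_of_injective hf).neZero'
  obtain ⟨y₀, hy₀⟩ := IsSepClosed.exists_pow_nat_eq (f S) d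
  obtain ⟨z₀, hz₀⟩ := IsSepClosed.exists_root_C_mul_X_pow_add_C_mul_X_add_C' p p (1 : L)
    (-f (e ^ (p - 1))) (-f h) dvd_rfl (Fact.out : p.Prime).two_le
    (neg_ne_zero.2 ((map_ne_zero_iff _ hf).2 (pow_ne_zero _ he)))
  obtain ⟨φ, hφ, -, -⟩ := exists_lift f hy₀
    (show z₀ ^ p = f (e ^ (p - 1)) * z₀ + f h by linear_combination hz₀)
  exact (injective_of_isGalois (K := K) hζ hS0 he hS hh hφ).isDomain φ

end KummerArtinSchreier

end Independence

section ArtinSchreierPolynomial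

variable {k : Type*} [Field k]

/-- The polynomial form of the Artin–Schreier right-hand side `β x + γ / x - b`: dividing
`w ^ p = X ^ (p - 1) * w + artinSchreierPoly p β γ b` by `X ^ p` gives
`z ^ p - z = β x + γ / x - b` for `z = w / x`. -/
noncomputable def artinSchreierPoly (p : ℕ) (β γ b : k) : k[X] :=
  C β * X ^ (p + 1) + C γ * X ^ (p - 1) - C b * X ^ p

theorem natDegree_artinSchreierPoly_le (p : ℕ) (β γ b : k) :
    (artinSchreierPoly p β γ b).natDegree ≤ p + 1 := by
  unfold artinSchreierPoly
  compute_degree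
  omega

theorem coeff_artinSchreierPoly_succ {p : ℕ} (β γ b : k) :
    (artinSchreierPoly p β γ b).coeff (p + 1) = β := by
  simp [artinSchreierPoly, coeff_X_pow, show p + 1 ≠ p - 1 by omega]

theorem pow_ne_X_pow_mul_add_artinSchreierPoly_of_left {p : ℕ} (hp : 2 ≤ p) {β : k} (hβ : β ≠ 0)
    (γ b : k) (w : k[X]) : w ^ p ≠ X ^ (p - 1) * w + artinSchreierPoly p β γ b := by
  intro hw
  have hdeg : p * w.natDegree ≤ max (p - 1 + w.natDegree) (p + 1) := by
    rw [← natDegree_pow, hw]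
    exact natDegree_add_le_of_le
      (natDegree_mul_le.trans (Nat.add_le_add_right (natDegree_X_pow_le _) _))
      (natDegree_artinSchreierPoly_le p β γ b)
  have hw1 : w.natDegree ≤ 1 := by
    by_contra! hw2
    rcases le_max_iff.mp hdeg with h | h
    · obtain ⟨p, rfl⟩ := Nat.exists_eq_add_of_le' (one_le_two.trans hp)
      rw [Nat.add_sub_cancel] at h
      nlinarith
    · nlinarith
  have hβ' := congrArg (coeff · (p + 1)) hw
  simp only [coeff_add, coeff_artinSchreierPoly_succ] at hβ'
  rw [coeff_eq_zero_of_natDegree_lt, coeff_eq_zero_of_natDegree_lt, zero_add] at hβ'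
  · exact hβ hβ'.symm
  · exact natDegree_mul_le.trans_lt (by rw [natDegree_X_pow]; omega)
  · rw [natDegree_pow]
    nlinarith

theorem pow_ne_X_pow_mul_add_artinSchreierPoly_of_right {p : ℕ} (hp : 2 ≤ p) {γ : k} (hγ : γ ≠ 0)
    (b : k) (w : k[X]) : w ^ p ≠ X ^ (p - 1) * w + artinSchreierPoly p 0 γ b := by
  intro hw
  obtain ⟨p, rfl⟩ := Nat.exists_eq_add_of_le' hp
  have hw' : w ^ (p + 2) = X ^ (p + 1) * (w + C γ - C b * X) := by
    rw [hw, artinSchreierPoly, map_zero, Nat.add_succ_sub_one]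
    ring
  obtain ⟨v, rfl⟩ : X ∣ w :=
    prime_X.dvd_of_dvd_pow (hw' ▸ (dvd_pow_self X p.succ_ne_zero).mul_right _)
  rw [mul_pow, pow_succ, mul_assoc] at hw'
  have h0 := congrArg (eval 0) (mul_left_cancel₀ (pow_ne_zero _ X_ne_zero) hw')
  simp only [eval_mul, eval_X, zero_mul, eval_sub, eval_add, eval_C, zero_add, mul_zero,
    sub_zero] at h0
  exact hγ h0.symm

theorem pow_ne_X_pow_mul_add_artinSchreierPoly {p : ℕ} (hp : 2 ≤ p) {β γ : k}
    (hβγ : β ≠ 0 ∨ γ ≠ 0) (b : k) (w : k[X]) :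
    w ^ p ≠ X ^ (p - 1) * w + artinSchreierPoly p β γ b := by
  by_cases hβ : β = 0
  · subst hβ
    exact pow_ne_X_pow_mul_add_artinSchreierPoly_of_right hp (hβγ.neg_resolve_left rfl) b w
  · exact pow_ne_X_pow_mul_add_artinSchreierPoly_of_left hp hβ γ b w

end ArtinSchreierPolynomial

theorem CoordDegreeLE.pow_mul {k R ι : Type*} [Field k] [CommRing R] [Algebra k[X] R]
    {b : Module.Basis ι k[X] R} {δ : ℕ} {w : R}
    (hw : ∀ {n r}, CoordDegreeLE b n r → CoordDegreeLE b (n + δ) (w * r)) {n : ℕ} {r : R}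
    (hr : CoordDegreeLE b n r) (m : ℕ) : CoordDegreeLE b (n + m * δ) (w ^ m * r) := by
  induction m with
  | zero => simpa using hr
  | succ m ih =>
    rw [pow_succ', mul_assoc, Nat.succ_mul, ← Nat.add_assoc]
    exact hw ih

namespace KummerArtinSchreier

variable {A : Type*} [CommRing A] {d p : ℕ} {S e h : A}

theorem algebraMap_injective [Nontrivial A] [NeZero d] (hp : 2 ≤ p) :
    Function.Injective (algebraMap A (KummerArtinSchreier d p S e h)) := by
  have b := basis (d := d) S e h hp
  have := Module.Free.of_basis b
  have : Nontrivial (KummerArtinSchreier d p S e h) :=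
    ⟨_, _, b.ne_zero (⟨0, NeZero.pos d⟩, ⟨0, by omega⟩)⟩
  exact FaithfulSMul.algebraMap_injective _ _

variable (S e h) in
theorem exists_conj {k : Type*} [Field k] [Algebra k A] [Nontrivial A] [NeZero d]
    [Fact p.Prime] [CharP A p] :
    ∃ σ : rootsOfUnity d k × Multiplicative (ZMod p) →*
        (KummerArtinSchreier d p S e h →ₐ[A] KummerArtinSchreier d p S e h),
      ∀ g, σ g y = algebraMap A _ (algebraMap k A (g.1 : kˣ)) * y ∧
        σ g z = z + algebraMap A _ (ZMod.castHom dvd_rfl A g.2.toAdd * e) := by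
  have hp := (Fact.out : p.Prime)
  have : CharP (KummerArtinSchreier d p S e h) p :=
    charP_of_injective_algebraMap (algebraMap_injective hp.two_le) p
  have hσ (g : rootsOfUnity d k × Multiplicative (ZMod p)) :
      ∃ σ : KummerArtinSchreier d p S e h →ₐ[A] KummerArtinSchreier d p S e h,
        σ y = algebraMap A _ (algebraMap k A (g.1 : kˣ)) * y ∧
        σ z = z + algebraMap A _ (ZMod.castHom dvd_rfl A g.2.toAdd * e) := by
    obtain ⟨φ, hφ, hφy, hφz⟩ := exists_lift (S := S) (e := e) (h := h)
      (algebraMap A (KummerArtinSchreier d p S e h))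
      (y₀ := algebraMap A _ (algebraMap k A (g.1 : kˣ)) * y)
      (z₀ := z + algebraMap A _ (ZMod.castHom dvd_rfl A g.2.toAdd * e)) (by
        rw [mul_pow, y_pow, ← map_pow, ← map_pow, ← Units.val_pow_eq_pow_val,
          (mem_rootsOfUnity _ _).mp g.1.2, Units.val_one, map_one, map_one, one_mul]) (by
        rw [add_pow_char, z_pow, ← map_pow, mul_pow, ← map_pow (ZMod.castHom _ _), ZMod.pow_card,
          ← pow_sub_one_mul hp.ne_zero e]
        simp only [map_mul]
        ring)
    exact ⟨{ toRingHom := φ, commutes' := hφ }, hφy, hφz⟩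
  choose σ hσy hσz using hσ
  refine ⟨⟨⟨σ, ?_⟩, fun g g' => ?_⟩, fun g => ⟨hσy g, hσz g⟩⟩
  · refine algHom_ext hp.two_le ?_ ?_ <;> simp [hσy, hσz]
  · refine algHom_ext hp.two_le ?_ ?_
    · simp only [hσy, AlgHom.mul_apply, map_mul, AlgHom.commutes, Prod.fst_mul, Subgroup.coe_mul,
        Units.val_mul]
      ring
    · simp only [hσz, AlgHom.mul_apply, map_add, AlgHom.commutes, Prod.snd_mul, toAdd_mul, add_mul]
      ring

section CoordDegree

variable {k : Type*} [Field k] {d p δ : ℕ} [NeZero d] {S e h : k[X]} (hp : 2 ≤ p)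
include hp

theorem coordDegreeLE_y_mul (hS : S.natDegree ≤ δ) {n : ℕ} {r : KummerArtinSchreier d p S e h}
    (hr : CoordDegreeLE (basis S e h hp) n r) : CoordDegreeLE (basis S e h hp) (n + δ) (y * r) := by
  refine hr.map (f := LinearMap.mulLeft k[X] y) fun i => ?_
  rw [LinearMap.mulLeft_apply]
  obtain ⟨i, j⟩ := i
  rcases (Nat.succ_le_of_lt i.2).lt_or_eq with hi | hi
  · have hyb : y * basis S e h hp (i, j) = basis S e h hp (⟨i + 1, hi⟩, j) := by
      rw [basis_apply, basis_apply, pow_succ']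
      ring
    rw [hyb]
    exact (CoordDegreeLE.basis _).mono (Nat.zero_le δ)
  · have hyb : y * basis S e h hp (i, j) = S • basis S e h hp (⟨0, NeZero.pos d⟩, j) := by
      rw [basis_apply, basis_apply, Algebra.smul_def, ← y_pow, pow_zero, one_mul, ← mul_assoc,
        ← pow_succ', ← Nat.succ_eq_add_one, hi]
    rw [hyb]
    exact (CoordDegreeLE.basis _).smul hS

theorem coordDegreeLE_z_mul (he : (e ^ (p - 1)).natDegree ≤ δ) (hh : h.natDegree ≤ δ) {n : ℕ}
    {r : KummerArtinSchreier d p S e h} (hr : CoordDegreeLE (basis S e h hp) n r) :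
    CoordDegreeLE (basis S e h hp) (n + δ) (z * r) := by
  refine hr.map (f := LinearMap.mulLeft k[X] z) fun i => ?_
  rw [LinearMap.mulLeft_apply]
  obtain ⟨i, j⟩ := i
  rcases (Nat.succ_le_of_lt j.2).lt_or_eq with hj | hj
  · have hzb : z * basis S e h hp (i, j) = basis S e h hp (i, ⟨j + 1, hj⟩) := by
      rw [basis_apply, basis_apply, pow_succ']
      ring
    rw [hzb]
    exact (CoordDegreeLE.basis _).mono (Nat.zero_le δ)
  · have hzb : z * basis S e h hp (i, j) = e ^ (p - 1) • basis S e h hp (i, ⟨1, hp⟩) +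
        h • basis S e h hp (i, ⟨0, by omega⟩) := by
      rw [basis_apply, basis_apply, basis_apply, Algebra.smul_def, Algebra.smul_def,
        mul_left_comm, ← pow_succ', ← Nat.succ_eq_add_one, hj, z_pow]
      ring
    rw [hzb]
    exact ((CoordDegreeLE.basis _).smul he).add ((CoordDegreeLE.basis _).smul hh)

theorem coordDegreeLE_monomial_mul (hS : S.natDegree ≤ δ) (he : (e ^ (p - 1)).natDegree ≤ δ)
    (hh : h.natDegree ≤ δ) {f : k[X]} (hf : f.natDegree ≤ δ) (i : Fin d × Fin p) {n : ℕ}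
    {r : KummerArtinSchreier d p S e h} (hr : CoordDegreeLE (basis S e h hp) n r) :
    CoordDegreeLE (basis S e h hp) (n + (d + p) * δ)
      (y ^ (i.1 : ℕ) * (z + algebraMap _ _ f) ^ (i.2 : ℕ) * r) := by
  have hz {n : ℕ} {r : KummerArtinSchreier d p S e h} (hr : CoordDegreeLE (basis S e h hp) n r) :
      CoordDegreeLE (basis S e h hp) (n + δ) ((z + algebraMap _ _ f) * r) := by
    rw [add_mul, ← Algebra.smul_def]
    exact (coordDegreeLE_z_mul hp he hh hr).add ((hr.smul hf).mono (Nat.add_comm δ n).le)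
  rw [mul_assoc]
  refine (CoordDegreeLE.pow_mul (coordDegreeLE_y_mul hp hS)
    (CoordDegreeLE.pow_mul hz hr i.2) i.1).mono ?_
  rw [add_assoc, ← add_mul, add_comm (i.2 : ℕ)]
  gcongr <;> exact Fin.is_le'

theorem coordDegreeLE_basis_mul_basis (hS : S.natDegree ≤ δ) (he : (e ^ (p - 1)).natDegree ≤ δ)
    (hh : h.natDegree ≤ δ) (i j : Fin d × Fin p) :
    CoordDegreeLE (basis S e h hp) ((d + p) * δ) (basis S e h hp i * basis S e h hp j) := by
  have hij := coordDegreeLE_monomial_mul hp hS he hh (natDegree_zero.trans_le δ.zero_le) i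
    (CoordDegreeLE.basis (b := basis (d := d) S e h hp) j)
  rwa [map_zero, add_zero, zero_add, ← basis_apply hp i] at hij

theorem coordDegreeLE_conj_basis (hS : S.natDegree ≤ δ) (he : (e ^ (p - 1)).natDegree ≤ δ)
    (hh : h.natDegree ≤ δ)
    {τ : KummerArtinSchreier d p S e h →ₐ[k[X]] KummerArtinSchreier d p S e h}
    {u : k} (hy : τ y = algebraMap k[X] _ (algebraMap k k[X] u) * y) {f : k[X]}
    (hf : f.natDegree ≤ δ) (hz : τ z = z + algebraMap k[X] _ f) (i : Fin d × Fin p) :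
    CoordDegreeLE (basis S e h hp) ((d + p) * δ) (τ (basis S e h hp i)) := by
  have h1 : CoordDegreeLE (basis (d := d) S e h hp) 0 1 := by
    have hb := CoordDegreeLE.basis (b := basis (d := d) S e h hp) (⟨0, NeZero.pos d⟩, ⟨0, by omega⟩)
    rwa [basis_apply, pow_zero, pow_zero, mul_one] at hb
  have hi := (coordDegreeLE_monomial_mul hp hS he hh hf i h1).smul
    (natDegree_C (u ^ (i.1 : ℕ))).le
  rwa [zero_add, zero_add, mul_one, Algebra.smul_def, C_pow, map_pow, ← mul_assoc, ← mul_pow,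
    ← algebraMap_eq, ← hy, ← hz, ← map_pow, ← map_pow, ← map_mul, ← basis_apply hp] at hi

end CoordDegree

section SplitPoint

variable {k : Type*} [Field k] {d p : ℕ} [NeZero d] [Fact p.Prime] [CharP k p] {S e h : k[X]}
  {ζ x y₀ z₀ : k} {σ : rootsOfUnity d k × Multiplicative (ZMod p) →*
    (KummerArtinSchreier d p S e h →ₐ[k[X]] KummerArtinSchreier d p S e h)}

theorem exists_isSplitPoint (hζ : IsPrimitiveRoot ζ d) (hσ : ∀ g,
      σ g y = algebraMap k[X] _ (algebraMap k k[X] (g.1 : kˣ)) * y ∧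
      σ g z = z + algebraMap k[X] _ (ZMod.castHom dvd_rfl k[X] g.2.toAdd * e))
    (hy : y₀ ^ d = S.eval x) (hy₀ : y₀ ≠ 0) (he : e.eval x ≠ 0)
    (hz : z₀ ^ p = (e ^ (p - 1)).eval x * z₀ + h.eval x) :
    ∃ φ, IsSplitPoint (basis S e h (Fact.out : p.Prime).two_le) σ x φ := by
  obtain ⟨φ, hφ, hφy, hφz⟩ := exists_lift (S := S) (e := e) (h := h) (evalRingHom x) hy hz
  refine ⟨φ, hφ, fun r hr => eq_zero_of_forall_rootsOfUnity_zmod hζ hy₀ he z₀ fun u t => ?_⟩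
  rw [← hr (u, Multiplicative.ofAdd t)]
  conv_rhs => rw [← (basis S e h (Fact.out : p.Prime).two_le).sum_repr r]
  rw [map_sum, map_sum]
  refine Finset.sum_congr rfl fun i _ => ?_
  rw [map_smul, Algebra.smul_def, map_mul, hφ]
  simp only [basis_apply, map_mul, map_pow, map_add, hσ, hφ, hφy, hφz, map_zmodCastHom,
    toAdd_ofAdd, coe_evalRingHom, Polynomial.algebraMap_apply, eval_C]

end SplitPoint

theorem mul_card_le_of_forall_exists_pow_eq {k : Type*} [Field k] [Fintype k] {d p : ℕ}
    [NeZero d] [Fact p.Prime] [CharP k p] {ζ : k} (hζ : IsPrimitiveRoot ζ d) {S : k[X]}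
    (hS₀ : S ≠ 0) (hS : ∀ ℓ : ℕ, ℓ.Prime → ℓ ∣ d → ∀ w : k[X], w ^ ℓ ≠ S)
    {β γ : k} (hβγ : β ≠ 0 ∨ γ ≠ 0) (b : k) {s : Finset k}
    (hs : ∀ x ∈ s, x ≠ 0 ∧ (∃ y, y ≠ 0 ∧ y ^ d = S.eval x) ∧
      ∃ z, z ^ p - z = β * x + γ * x⁻¹ - b) :
    (d * p * s.card : ℝ) ≤ Fintype.card k +
      15 * (d * p : ℝ) ^ 2 * ((d + p) * (S.natDegree + p + 1) + 1) * p * √(Fintype.card k) := by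
  have hp := (Fact.out : p.Prime)
  have := isDomain (e := X) hζ hS₀ X_ne_zero hS
    (pow_ne_X_pow_mul_add_artinSchreierPoly hp.two_le hβγ b)
  have : CharP (KummerArtinSchreier d p S X (artinSchreierPoly p β γ b)) p :=
    charP_of_injective_algebraMap (algebraMap_injective hp.two_le) p
  have := Fintype.ofFinite (rootsOfUnity d k)
  obtain ⟨σ, hσ⟩ := exists_conj (k := k) (d := d) (p := p) S X (artinSchreierPoly p β γ b)
  have hcard : Fintype.card (rootsOfUnity d k × Multiplicative (ZMod p)) = d * p := by
    rw [Fintype.card_prod, ← Nat.card_eq_fintype_card, hζ.card_rootsOfUnity,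
      Fintype.card_multiplicative, ZMod.card]
  have hS' : S.natDegree ≤ S.natDegree + p + 1 := by omega
  have hX : ((X : k[X]) ^ (p - 1)).natDegree ≤ S.natDegree + p + 1 := by
    rw [natDegree_X_pow]
    omega
  have hh := (natDegree_artinSchreierPoly_le p β γ b).trans
    (show p + 1 ≤ S.natDegree + p + 1 by omega)
  have hcast (t : ZMod p) :
      (ZMod.castHom dvd_rfl k[X] t * X).natDegree ≤ S.natDegree + p + 1 := by
    rw [← map_zmodCastHom (C : k →+* k[X])]
    exact (natDegree_C_mul_le _ _).trans (natDegree_X_le.trans (by omega))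
  have hsplit : ∀ x ∈ s, ∃ φ,
      IsSplitPoint (basis S X (artinSchreierPoly p β γ b) hp.two_le) σ x φ := by
    intro x hx
    obtain ⟨hx0, ⟨y₀, hy₀, hy⟩, z₀, hz⟩ := hs x hx
    refine exists_isSplitPoint hζ hσ hy hy₀ (z₀ := x * z₀) (by rwa [eval_X]) ?_
    simp only [artinSchreierPoly, eval_add, eval_sub, eval_mul, eval_C, eval_pow, eval_X]
    rw [mul_pow, sub_eq_iff_eq_add.mp hz, pow_succ, ← pow_sub_one_mul hp.ne_zero x]
    field_simp
    ring
  have hle := card_mul_card_le_of_isSplitPoint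
    (coordDegreeLE_basis_mul_basis hp.two_le hS' hX hh)
    (fun g => coordDegreeLE_conj_basis hp.two_le hS' hX hh (hσ g).1
      (hcast _) (hσ g).2)
    (by rw [hcard, Fintype.card_prod, Fintype.card_fin, Fintype.card_fin]) hsplit
  rw [hcard] at hle
  exact_mod_cast hle

end KummerArtinSchreier

/-! ### Character sums -/

theorem norm_sum_hom_le_of_card_fiber_le {ι Q : Type*} [Fintype ι] [CommGroup Q] [Finite Q]
    [DecidableEq Q]
    {θ : Q →* ℂ} (hθ : θ ≠ 1) (f : ι → Q) {μ : ℝ}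
    (hμ : ∀ c, (Finset.card {i | f i = c} : ℝ) ≤ μ) :
    ‖∑ i, θ (f i)‖ ≤ Nat.card Q * μ - Fintype.card ι := by
  have := Fintype.ofFinite Q
  have hnorm (c : Q) : ‖θ c‖ = 1 :=
    Complex.norm_eq_one_of_pow_eq_one (by rw [← map_pow, pow_card_eq_one', map_one])
      Nat.card_pos.ne'
  have hsum : ∑ i, θ (f i) = ∑ c, ((Finset.card {i | f i = c} - μ : ℝ) : ℂ) * θ c := by
    simp only [Complex.ofReal_sub, sub_mul, Finset.sum_sub_distrib, ← Finset.mul_sum,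
      sum_hom_units_eq_zero θ hθ, mul_zero, sub_zero]
    rw [← Finset.sum_fiberwise Finset.univ f]
    refine Finset.sum_congr rfl fun c _ => ?_
    rw [Finset.sum_congr rfl fun i hi => by rw [(Finset.mem_filter.mp hi).2], Finset.sum_const,
      nsmul_eq_mul, Complex.ofReal_natCast]
  calc ‖∑ i, θ (f i)‖ ≤ ∑ c, (μ - (Finset.card {i | f i = c} : ℝ)) := by
        rw [hsum]
        refine norm_sum_le_of_le _ fun c _ => ?_
        rw [norm_mul, hnorm, mul_one, Complex.norm_real, Real.norm_eq_abs, abs_sub_comm,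
          abs_of_nonneg (sub_nonneg.mpr (hμ c))]
    _ = Nat.card Q * μ - Fintype.card ι := by
        rw [Finset.sum_sub_distrib, Finset.sum_const, Finset.card_univ, nsmul_eq_mul,
          Nat.card_eq_fintype_card, ← Finset.card_univ (α := ι),
          Finset.card_eq_sum_card_fiberwise (t := Finset.univ) (fun i _ => Finset.mem_univ (f i)),
          Nat.cast_sum]

section PowerClasses

variable (k : Type*) [Field k] (d p : ℕ)

/-- The endomorphism `(u, z) ↦ (u ^ d, z ^ p - z)` of `kˣ × k` (written multiplicatively); two
pairs are congruent modulo its range when they have the same Kummer and Artin–Schreier classes. -/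
noncomputable def kummerArtinSchreierHom [ExpChar k p] :
    kˣ × Multiplicative k →* kˣ × Multiplicative k :=
  (powMonoidHom d).prodMap
    ((frobenius k p : k →+ k) - AddMonoidHom.id k).toMultiplicative

theorem index_range_kummerArtinSchreierHom [Finite k] [NeZero d] [Fact p.Prime] [CharP k p] {ζ : k}
    (hζ : IsPrimitiveRoot ζ d) : (kummerArtinSchreierHom k d p).range.index = d * p := by
  have hd : Nat.card (powMonoidHom d : kˣ →* kˣ).ker = d := hζ.card_rootsOfUnity
  have hp : Nat.card ((frobenius k p : k →+ k) - AddMonoidHom.id k).toMultiplicative.ker = p := by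
    refine (Nat.card_congr (Equiv.subtypeEquiv Multiplicative.toAdd fun z => ?_)).trans
      (Subfield.card_bot k p)
    rw [Subfield.mem_bot_iff_pow_eq_self k p, ← sub_eq_zero]
    exact Iff.rfl
  rw [Subgroup.index_range, kummerArtinSchreierHom, MonoidHom.ker_prodMap,
    Nat.card_congr (Subgroup.prodEquiv _ _).toEquiv, Nat.card_prod, hd, hp]

/-- The finite group of pairs of a Kummer class in `kˣ / (kˣ) ^ d` and an Artin–Schreier class in
`k / {z ^ p - z}`. -/
abbrev KummerArtinSchreierClass [ExpChar k p] : Type _ :=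
  (kˣ × Multiplicative k) ⧸ (kummerArtinSchreierHom k d p).range

variable {k}

/-- The pair of classes of `s(x)` and `β x + γ / x`. -/
noncomputable def kummerArtinSchreierClass [ExpChar k p] (s : k[X]) (β γ : k)
    (x : {x : k // x ≠ 0 ∧ s.eval x ≠ 0}) : KummerArtinSchreierClass k d p :=
  ((Units.mk0 (s.eval x) x.2.2, Multiplicative.ofAdd (β * x + γ * (x : k)⁻¹)) :
    kˣ × Multiplicative k)

variable {d p}

theorem mul_card_kummerArtinSchreierClass_eq_le [Fintype k] [NeZero d] [Fact p.Prime] [CharP k p]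
    {ζ : k} (hζ : IsPrimitiveRoot ζ d) {s : k[X]} (hs₀ : s ≠ 0)
    (hs : ∀ a : k, a ≠ 0 → ∀ ℓ : ℕ, ℓ.Prime → ℓ ∣ d → ∀ w : k[X], w ^ ℓ ≠ C a * s) {β γ : k}
    (hβγ : β ≠ 0 ∨ γ ≠ 0) (c : KummerArtinSchreierClass k d p) :
    (d * p * Finset.card {x | kummerArtinSchreierClass d p s β γ x = c} : ℝ) ≤
      Fintype.card k + 15 * (d * p : ℝ) ^ 2 * ((d + p) * (s.natDegree + p + 1) + 1) * p *
        √(Fintype.card k) := by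
  induction c using QuotientGroup.induction_on with | H g =>
  obtain ⟨a, b⟩ := g
  have ha := inv_ne_zero a.ne_zero
  rw [← Finset.card_map (Function.Embedding.subtype _), ← natDegree_C_mul (p := s) ha]
  refine KummerArtinSchreier.mul_card_le_of_forall_exists_pow_eq hζ
    (mul_ne_zero (C_ne_zero.mpr ha) hs₀) (hs _ ha) hβγ b.toAdd fun x hx => ?_
  rw [Finset.mem_map] at hx
  obtain ⟨x, hx, rfl⟩ := hx
  rw [Finset.mem_filter, eq_comm, kummerArtinSchreierClass, QuotientGroup.eq] at hx
  obtain ⟨⟨u, z⟩, huz⟩ := hx.2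
  rw [Prod.ext_iff, Units.ext_iff] at huz
  refine ⟨x.2.1, ⟨u, u.ne_zero, ?_⟩, z.toAdd, ?_⟩
  · rw [eval_mul, eval_C, ← Units.val_inv_eq_inv_val]
    exact huz.1
  · rw [sub_eq_neg_add _ b.toAdd]
    exact huz.2

theorem exists_hom_kummerArtinSchreierClass [ExpChar k p] (hd : d ≠ 0) {χ : MulChar k ℂ}
    (hχ : χ ^ d = 1) {ψ : AddChar k ℂ} (hψ : ∀ z, ψ (z ^ p - z) = 1) :
    ∃ θ : KummerArtinSchreierClass k d p →* ℂ,
      ∀ u z, θ ((u, Multiplicative.ofAdd z) : kˣ × Multiplicative k) = χ u * ψ z := by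
  refine ⟨QuotientGroup.lift _
    ((χ.toMonoidHom.comp (Units.coeHom k)).coprod ψ.toMonoidHom) ?_, fun u z => rfl⟩
  rintro _ ⟨⟨u, z⟩, rfl⟩
  change χ (u ^ d : kˣ) * ψ (z.toAdd ^ p - z.toAdd) = 1
  rw [hψ, mul_one, Units.val_pow_eq_pow_val, map_pow, ← MulChar.pow_apply' χ hd, hχ,
    MulChar.one_apply_coe]

theorem card_eq_zero_or_eval_eq_zero_le [Fintype k] {s : k[X]} (hs₀ : s ≠ 0) :
    Finset.card {x : k | ¬(x ≠ 0 ∧ s.eval x ≠ 0)} ≤ s.natDegree + 1 := by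
  refine (Finset.card_le_card (t := insert 0 s.roots.toFinset) fun x hx => ?_).trans
    ((Finset.card_insert_le _ _).trans
      (Nat.succ_le_succ ((Multiset.toFinset_card_le _).trans (card_roots' s))))
  rw [Finset.mem_insert, Multiset.mem_toFinset, mem_roots hs₀]
  exact or_iff_not_and_not.mpr (Finset.mem_filter.mp hx).2

theorem norm_mulChar_le_one [Finite k] (χ : MulChar k ℂ) (x : k) : ‖χ x‖ ≤ 1 := by
  rcases eq_or_ne x 0 with rfl | hx
  · rw [MulChar.map_zero, norm_zero]
    exact zero_le_one
  · exact (norm_mulChar_units χ (Units.mk0 x hx)).le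

variable [Fintype k] [NeZero d] [Fact p.Prime] [CharP k p] {ζ : k} {s : k[X]} {β γ : k}
  {χ : MulChar k ℂ} {ψ : AddChar k ℂ}

theorem norm_sum_subtype_mulChar_eval_mul_addChar_le (hζ : IsPrimitiveRoot ζ d) (hs₀ : s ≠ 0)
    (hs : ∀ a : k, a ≠ 0 → ∀ ℓ : ℕ, ℓ.Prime → ℓ ∣ d → ∀ w : k[X], w ^ ℓ ≠ C a * s)
    (hβγ : β ≠ 0 ∨ γ ≠ 0) (hχ : χ ^ d = 1) (hψ : ∀ z, ψ (z ^ p - z) = 1) (hχψ : χ ≠ 1 ∨ ψ ≠ 1) :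
    ‖∑ x : {x : k // x ≠ 0 ∧ s.eval x ≠ 0}, χ (s.eval x.1) * ψ (β * x.1 + γ * x.1⁻¹)‖ ≤
      Fintype.card k + 15 * (d * p : ℝ) ^ 2 * ((d + p) * (s.natDegree + p + 1) + 1) * p *
        √(Fintype.card k) - Fintype.card {x : k // x ≠ 0 ∧ s.eval x ≠ 0} := by
  obtain ⟨θ, hθ⟩ := exists_hom_kummerArtinSchreierClass (NeZero.ne d) hχ hψ
  have hθ₁ : θ ≠ 1 := by
    rintro rfl
    simp only [MonoidHom.one_apply] at hθ
    refine hχψ.elim (fun h => h (MulChar.ext fun u => ?_))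
      (fun h => h (DFunLike.ext _ _ fun z => ?_))
    · simpa using (hθ u 0).symm
    · simpa using (hθ 1 z).symm
  have hdp : (0 : ℝ) < d * p :=
    mul_pos (Nat.cast_pos.mpr (NeZero.pos d)) (Nat.cast_pos.mpr (Fact.out : p.Prime).pos)
  have hmain := norm_sum_hom_le_of_card_fiber_le hθ₁ (kummerArtinSchreierClass d p s β γ)
    (fun c => (le_div_iff₀' hdp).mpr
      (mul_card_kummerArtinSchreierClass_eq_le hζ hs₀ hs hβγ c))
  rw [← Subgroup.index, index_range_kummerArtinSchreierHom k d p hζ, Nat.cast_mul,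
    mul_div_cancel₀ _ hdp.ne'] at hmain
  simpa only [kummerArtinSchreierClass, hθ, Units.val_mk0] using hmain

theorem norm_sum_mulChar_eval_mul_addChar_le (hζ : IsPrimitiveRoot ζ d) (hs₀ : s ≠ 0)
    (hs : ∀ a : k, a ≠ 0 → ∀ ℓ : ℕ, ℓ.Prime → ℓ ∣ d → ∀ w : k[X], w ^ ℓ ≠ C a * s)
    (hβγ : β ≠ 0 ∨ γ ≠ 0) (hχ : χ ^ d = 1) (hψ : ∀ z, ψ (z ^ p - z) = 1) (hχψ : χ ≠ 1 ∨ ψ ≠ 1) :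
    ‖∑ x, χ (s.eval x) * ψ (β * x + γ * x⁻¹)‖ ≤
      (15 * (d * p : ℝ) ^ 2 * ((d + p) * (s.natDegree + p + 1) + 1) * p +
        2 * (s.natDegree + 1)) * √(Fintype.card k) := by
  have hmain := norm_sum_subtype_mulChar_eval_mul_addChar_le hζ hs₀ hs hβγ hχ hψ hχψ
  have hcompl : ‖∑ x with ¬(x ≠ 0 ∧ s.eval x ≠ 0), χ (s.eval x) * ψ (β * x + γ * x⁻¹)‖ ≤
      Finset.card {x : k | ¬(x ≠ 0 ∧ s.eval x ≠ 0)} := by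
    refine (norm_sum_le _ _).trans ((Finset.sum_le_card_nsmul _ _ 1 fun x _ => ?_).trans_eq
      (nsmul_one _))
    rw [norm_mul, AddChar.norm_apply, mul_one]
    exact norm_mulChar_le_one χ _
  have hcard : (Fintype.card {x : k // x ≠ 0 ∧ s.eval x ≠ 0} : ℝ) +
      Finset.card {x : k | ¬(x ≠ 0 ∧ s.eval x ≠ 0)} = Fintype.card k := by
    rw [Fintype.card_subtype, ← Nat.cast_add, Finset.card_filter_add_card_filter_not,
      Finset.card_univ]
  have hle : (Finset.card {x : k | ¬(x ≠ 0 ∧ s.eval x ≠ 0)} : ℝ) ≤ s.natDegree + 1 :=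
    mod_cast card_eq_zero_or_eval_eq_zero_le hs₀
  have hsqrt : (1 : ℝ) ≤ √(Fintype.card k) :=
    Real.one_le_sqrt.mpr (mod_cast Fintype.card_pos)
  rw [← Finset.sum_filter_add_sum_filter_not Finset.univ fun x => x ≠ 0 ∧ s.eval x ≠ 0,
    ← Finset.sum_subtype_eq_sum_filter, Finset.subtype_univ]
  refine (norm_add_le_of_le hmain hcompl).trans ?_
  nlinarith

end PowerClasses

theorem exists_monic_pow_eq_of_pow_eq_C_mul_map {F k : Type*} [Field F] [Field k] [Algebra F k]
    [FiniteDimensional F k] [IsGalois F k] {s : F[X]} (hs : s.Monic) {ℓ : ℕ} (hℓ : ℓ ≠ 0) {a : k}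
    (ha : a ≠ 0) {w : k[X]} (hw : w ^ ℓ = C a * s.map (algebraMap F k)) :
    ∃ g : F[X], g.Monic ∧ g ^ ℓ = s := by
  have hlc : w.leadingCoeff ^ ℓ = a := by
    rw [← leadingCoeff_pow, hw, leadingCoeff_mul, leadingCoeff_C, (hs.map _).leadingCoeff, mul_one]
  have hw₀ : w ≠ 0 := leadingCoeff_ne_zero.mp (ne_zero_pow hℓ (hlc.trans_ne ha))
  have hmonic : (w * C w.leadingCoeff⁻¹).Monic := monic_mul_leadingCoeff_inv hw₀
  set g := w * C w.leadingCoeff⁻¹ with hg_def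
  have hg : g ^ ℓ = s.map (algebraMap F k) := by
    rw [hg_def, mul_pow, hw, mul_right_comm, ← C_pow, ← C_mul, inv_pow, hlc, mul_inv_cancel₀ ha,
      C_1, one_mul]
  have hfix (σ : k ≃ₐ[F] k) : g.map (σ : k →+* k) = g := by
    have hσ : g.map (σ : k →+* k) ^ ℓ = g ^ ℓ := by
      rw [← Polynomial.map_pow, hg, Polynomial.map_map]
      exact congrArg s.map (RingHom.ext σ.commutes)
    exact eq_of_monic_of_associated (hmonic.map _) hmonic (associated_of_dvd_dvd
      (IsIntegrallyClosed.pow_dvd_pow_iff hℓ |>.mp hσ.dvd)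
      (IsIntegrallyClosed.pow_dvd_pow_iff hℓ |>.mp hσ.symm.dvd))
  have hlift : g ∈ lifts (algebraMap F k) := by
    rw [lifts_iff_coeff_lifts]
    refine fun i => (IsGalois.mem_range_algebraMap_iff_fixed _).mpr fun σ => ?_
    conv_rhs => rw [← hfix σ, coeff_map]
    rfl
  obtain ⟨g₀, hg₀, -, hg₀m⟩ := lifts_and_natDegree_eq_and_monic hlift hmonic
  refine ⟨g₀, hg₀m, map_injective _ (algebraMap F k).injective ?_⟩
  rw [Polynomial.map_pow, hg₀, hg]

theorem exists_monic_pow_eq_and_forall_prime_pow_ne {F : Type*} [Field F] {N : ℕ} (hN : N ≠ 0)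
    {U : F[X]} (hU : U.Monic) : ∃ (e d : ℕ) (s : F[X]), e * d = N ∧ s.Monic ∧ s ^ e = U ∧
      ∀ ℓ : ℕ, ℓ.Prime → ℓ ∣ d → ∀ g : F[X], g.Monic → g ^ ℓ ≠ s := by
  induction N using Nat.strong_induction_on generalizing U with
  | _ N ih =>
    by_cases h : ∃ ℓ : ℕ, ℓ.Prime ∧ ℓ ∣ N ∧ ∃ g : F[X], g.Monic ∧ g ^ ℓ = U
    · obtain ⟨ℓ, hℓ, ⟨N, rfl⟩, g, hg, rfl⟩ := h
      have hN₀ := right_ne_zero_of_mul hN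
      obtain ⟨e, d, s, rfl, hs, rfl, hmax⟩ :=
        ih N (lt_mul_of_one_lt_left (Nat.pos_of_ne_zero hN₀) hℓ.one_lt) hN₀ hg
      exact ⟨e * ℓ, d, s, by ring, hs, pow_mul s e ℓ, hmax⟩
    · push Not at h
      exact ⟨1, N, U, one_mul N, hU, pow_one U, h⟩

theorem exists_isPrimitiveRoot_of_dvd_card_sub_one {k : Type*} [Field k] [Fintype k] {d : ℕ}
    (hd : d ∣ Fintype.card k - 1) : ∃ ζ : k, IsPrimitiveRoot ζ d := by
  obtain ⟨g, hg⟩ := IsCyclic.exists_ofOrder_eq_natCard (α := kˣ)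
  rw [Nat.card_eq_fintype_card, Fintype.card_units] at hg
  obtain ⟨e, he⟩ := hd
  exact ⟨_, IsPrimitiveRoot.coe_units_iff.mpr ((IsPrimitiveRoot.orderOf g).pow
    (orderOf_pos g) (hg.trans (he.trans (mul_comm d e))))⟩

section Lift

variable {F : Type*} [Field F] (k : Type*) [Field k] [Algebra F k]

/-- The multiplicative character `ω ∘ N` of an extension `k` of `F`, where `N` is the norm. -/
noncomputable def normMulChar (ω : MulChar F ℂ) : MulChar k ℂ :=
  MulChar.ofUnitHom (ω.toUnitHom.comp (Units.map (Algebra.norm F)))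

/-- The additive character `ψ ∘ Tr` of an extension `k` of `F`. -/
noncomputable def traceAddChar (ψ : AddChar F ℂ) : AddChar k ℂ :=
  ψ.compAddMonoidHom (Algebra.trace F k).toAddMonoidHom

variable {k}

theorem normMulChar_apply [FiniteDimensional F k] (ω : MulChar F ℂ) (x : k) :
    normMulChar k ω x = ω (Algebra.norm F x) := by
  rcases eq_or_ne x 0 with rfl | hx
  · rw [Algebra.norm_zero, MulChar.map_zero, MulChar.map_zero]
  · lift x to kˣ using IsUnit.mk0 x hx
    simp [normMulChar]

theorem traceAddChar_apply (ψ : AddChar F ℂ) (x : k) :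
    traceAddChar k ψ x = ψ (Algebra.trace F k x) :=
  rfl

theorem trace_pow_char [Finite F] [Finite k] (p : ℕ) [ExpChar F p] (z : k) :
    Algebra.trace F k (z ^ p) = Algebra.trace F k z ^ p := by
  have := Fintype.ofFinite F
  have := Fintype.ofFinite k
  have : ExpChar k p := expChar_of_injective_algebraMap (algebraMap F k).injective p
  apply (algebraMap F k).injective
  simp only [map_pow, FiniteField.algebraMap_trace_eq_sum_pow, sum_pow_char, ← pow_mul, mul_comm]

theorem normMulChar_pow_eq_one_iff [Finite F] [Finite k] {ω : MulChar F ℂ} {e : ℕ} :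
    normMulChar k ω ^ e = 1 ↔ ω ^ e = 1 := by
  have := Fintype.ofFinite F
  have := Fintype.ofFinite k
  simp only [MulChar.ext_iff, MulChar.pow_apply_coe, MulChar.one_apply_coe, normMulChar_apply]
  refine ⟨fun h y => ?_, fun h x => ?_⟩
  · obtain ⟨x, rfl⟩ := FiniteField.unitsMap_norm_surjective F k y
    exact h x
  · exact h (Units.map (Algebra.norm F) x)

theorem traceAddChar_ne_one [Finite F] [Finite k] {ψ : AddChar F ℂ} (hψ : ψ ≠ 1) :
    traceAddChar k ψ ≠ 1 := by
  refine fun h => hψ (AddChar.ext _ _ fun y => ?_)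
  obtain ⟨x, rfl⟩ := Algebra.trace_surjective F k y
  rw [← traceAddChar_apply, h, AddChar.one_apply, AddChar.one_apply]

theorem traceAddChar_pow_sub_self [Finite F] [Finite k] {p : ℕ} [ExpChar F p] {ψ : AddChar F ℂ}
    (hψ : ∀ z, ψ (z ^ p - z) = 1) (z : k) : traceAddChar k ψ (z ^ p - z) = 1 := by
  rw [traceAddChar_apply, map_sub, trace_pow_char, hψ]

end Lift

theorem card_sub_one_dvd_card_sub_one (F k : Type*) [Field F] [Fintype F] [Field k] [Fintype k]
    [Algebra F k] : Fintype.card F - 1 ∣ Fintype.card k - 1 := by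
  simpa only [Module.card_eq_pow_finrank (K := F) (V := k), one_pow] using
    Nat.sub_dvd_pow_sub_pow (Fintype.card F) 1 (Module.finrank F k)

theorem norm_sum_mulChar_eval_map_mul_addChar_le {F k : Type*} [Field F] [Fintype F] [Field k]
    [Fintype k] [Algebra F k] {p d : ℕ} [Fact p.Prime] [CharP F p] (hd : d ∣ Fintype.card F - 1)
    {s : F[X]} (hs : s.Monic) (hmax : ∀ ℓ : ℕ, ℓ.Prime → ℓ ∣ d → ∀ g : F[X], g.Monic → g ^ ℓ ≠ s)
    {β γ : k} (hβγ : β ≠ 0 ∨ γ ≠ 0) {χ : MulChar k ℂ} (hχ : χ ^ d = 1) {ψ : AddChar k ℂ}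
    (hψ : ∀ z, ψ (z ^ p - z) = 1) (hχψ : χ ≠ 1 ∨ ψ ≠ 1) :
    ‖∑ x : k, χ ((s.map (algebraMap F k)).eval x) * ψ (β * x + γ * x⁻¹)‖ ≤
      (15 * (d * p : ℝ) ^ 2 * ((d + p) * (s.natDegree + p + 1) + 1) * p +
        2 * (s.natDegree + 1)) * √(Fintype.card k) := by
  have : NeZero d := ⟨by
    rintro rfl
    exact (Nat.sub_pos_of_lt Fintype.one_lt_card).ne' (Nat.eq_zero_of_zero_dvd hd)⟩
  have : CharP k p := charP_of_injective_algebraMap (algebraMap F k).injective p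
  obtain ⟨ζ, hζ⟩ := exists_isPrimitiveRoot_of_dvd_card_sub_one (k := k)
    (hd.trans (card_sub_one_dvd_card_sub_one F k))
  rw [← natDegree_map (algebraMap F k)]
  refine norm_sum_mulChar_eval_mul_addChar_le hζ (hs.map _).ne_zero
    (fun a ha ℓ hℓ hℓd w hw => ?_) hβγ hχ hψ hχψ
  obtain ⟨g, hg, hgs⟩ := exists_monic_pow_eq_of_pow_eq_C_mul_map hs hℓ.ne_zero ha hw
  exact hmax ℓ hℓ hℓd g hg hgs

theorem exists_norm_sum_norm_mul_trace_le {F : Type*} [Field F] [Finite F] {p : ℕ}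
    [Fact p.Prime] [CharP F p] (ω : MulChar F ℂ) {U : F[X]} (hU : U.Monic) {ψ : AddChar F ℂ}
    (hψ : ∀ z, ψ (z ^ p - z) = 1) (β γ : F)
    (h : ((β ≠ 0 ∨ γ ≠ 0) ∧ ψ ≠ 1) ∨ ∀ w : F[X], w.Monic → w ^ orderOf ω ≠ U) :
    ∃ C : ℝ, ∀ (k : Type) [Field k] [Fintype k] [Algebra F k],
      ‖∑ x : k, ω (Algebra.norm F (aeval x U)) *
        ψ (β * Algebra.trace F k x + γ * Algebra.trace F k x⁻¹)‖ ≤ C * √(Fintype.card k) := by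
  have := Fintype.ofFinite F
  have hN : orderOf ω ∣ Fintype.card F - 1 := by
    rw [← Fintype.card_units]
    exact orderOf_dvd_of_pow_eq_one ω.pow_card_eq_one
  obtain ⟨e, d, s, hed, hs, rfl, hmax⟩ :=
    exists_monic_pow_eq_and_forall_prime_pow_ne (orderOf_pos ω).ne' hU
  have he₀ : e ≠ 0 := by rintro rfl; exact (orderOf_pos ω).ne' (by rw [← hed, zero_mul])
  refine ⟨15 * (d * p : ℝ) ^ 2 * ((d + p) * (s.natDegree + p + 1) + 1) * p +
    2 * (s.natDegree + 1), fun k _ _ _ => ?_⟩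
  have bound {b c : k} (hbc : b ≠ 0 ∨ c ≠ 0) {Ψ : AddChar k ℂ} (hΨ : ∀ z, Ψ (z ^ p - z) = 1)
      (hne : normMulChar k ω ^ e ≠ 1 ∨ Ψ ≠ 1) :=
    norm_sum_mulChar_eval_map_mul_addChar_le ((Dvd.intro_left e hed).trans hN) hs hmax hbc
      (by rw [← pow_mul, hed, normMulChar_pow_eq_one_iff, pow_orderOf_eq_one]) hΨ hne
  have hterm (x : k) : ω (Algebra.norm F (aeval x (s ^ e))) =
      (normMulChar k ω ^ e) ((s.map (algebraMap F k)).eval x) := by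
    rw [MulChar.pow_apply' _ he₀, normMulChar_apply, eval_map_algebraMap, map_pow, map_pow, map_pow]
  simp only [hterm]
  by_cases hβγ : (β ≠ 0 ∨ γ ≠ 0) ∧ ψ ≠ 1
  · convert bound (b := algebraMap F k β) (c := algebraMap F k γ) (by simpa using hβγ.1)
      (traceAddChar_pow_sub_self hψ) (.inr (traceAddChar_ne_one hβγ.2)) using 4
    simp [traceAddChar_apply, ← Algebra.smul_def]
  · have hω : normMulChar k ω ^ e ≠ 1 := fun hω => h.resolve_left hβγ s hs <| by
      rw [Nat.dvd_antisymm (orderOf_dvd_of_pow_eq_one (normMulChar_pow_eq_one_iff.mp hω))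
        (Dvd.intro d hed)]
    have hψ₁ (t t' : F) : ψ (β * t + γ * t') = 1 := by
      by_cases hψ' : ψ = 1
      · rw [hψ', AddChar.one_apply]
      · obtain ⟨rfl, rfl⟩ : β = 0 ∧ γ = 0 := by tauto
        simp
    convert bound (b := 1) (c := 0) (.inl one_ne_zero) (Ψ := 1) (by simp) (.inl hω) using 4
    simp [hψ₁]

theorem exists_mulChar_generator (F : Type*) [Field F] [Fintype F] : ∃ ω : MulChar F ℂ,
    orderOf ω = Fintype.card F - 1 ∧ ∀ χ : MulChar F ℂ, ∃ i ≠ 0, ω ^ i = χ := by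
  obtain ⟨ω, hω⟩ := MulChar.exists_mulChar_orderOf_eq_card_units F
    (Complex.isPrimitiveRoot_exp (Fintype.card Fˣ) Fintype.card_ne_zero)
  refine ⟨ω, hω.trans (Fintype.card_units (α := F)), fun χ => ?_⟩
  have htop : Subgroup.zpowers ω = ⊤ := Subgroup.eq_top_of_card_eq _ <| by
    rw [Nat.card_zpowers, hω, ← Nat.card_eq_fintype_card,
      MulChar.card_eq_card_units_of_hasEnoughRootsOfUnity F ℂ]
  obtain ⟨i, rfl⟩ := mem_powers_iff_mem_zpowers.mpr (htop ▸ Subgroup.mem_top χ)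
  exact ⟨i + orderOf ω, (Nat.add_pos_right i (orderOf_pos ω)).ne', by
    rw [pow_add, pow_orderOf_eq_one, mul_one]⟩

section RationalFunctions

variable {F : Type*} [Field F]

theorem exists_mul_X_pow_eq_C_of_pow_mul_X_pow_eq_one {g i : ℕ} (hg : g ≠ 0) {R : RatFunc F}
    (h : R ^ g * RatFunc.X ^ i = 1) : ∃ (c : F) (r : ℕ), R * RatFunc.X ^ r = RatFunc.C c := by
  have hR : algebraMap F[X] (RatFunc F) R.num = R * algebraMap F[X] (RatFunc F) R.denom :=
    (div_eq_iff (RatFunc.algebraMap_ne_zero R.denom_ne_zero)).mp R.num_div_denom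
  have hpoly : R.num ^ g * X ^ i = R.denom ^ g := by
    apply RatFunc.algebraMap_injective F
    rw [map_mul, map_pow, map_pow, map_pow, RatFunc.algebraMap_X, hR, mul_pow, mul_right_comm, h,
      one_mul]
  have hcop := R.isCoprime_num_denom
  have hunit : IsUnit R.num :=
    hcop.pow_right.isUnit_of_dvd' dvd_rfl (hpoly ▸ (dvd_pow_self _ hg).mul_right (X ^ i))
  have hdvd : R.denom ∣ X ^ i :=
    hcop.symm.pow_right.dvd_of_dvd_mul_left (hpoly ▸ dvd_pow_self R.denom hg)
  obtain ⟨c, -, hc⟩ := Polynomial.isUnit_iff.mp hunit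
  obtain ⟨r, -, hr⟩ := (dvd_prime_pow prime_X i).mp hdvd
  refine ⟨c, r, ?_⟩
  rw [← RatFunc.algebraMap_X, ← map_pow,
    ← eq_of_monic_of_associated R.monic_denom (monic_X_pow r) hr, ← hR, ← hc, RatFunc.algebraMap_C]

theorem exists_eq_C_mul_X_zpow_mul_pow_of_pow_eq {h : RatFunc F} (hh : h ≠ 0) {N : ℕ} (hN : N ≠ 0)
    {i j : ℕ} (hj : ¬ N ∣ j) {W : RatFunc F} (hW : RatFunc.X ^ i * h ^ j = W ^ N) :
    ∃ d : ℕ, 1 < d ∧ d ∣ N ∧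
      ∃ (c : F) (r : ℤ) (H : RatFunc F), h = RatFunc.C c * RatFunc.X ^ r * H ^ d := by
  have hX : (RatFunc.X : RatFunc F) ≠ 0 := RatFunc.X_ne_zero
  obtain ⟨g, j', d, hg, hcop, rfl, rfl⟩ :=
    Nat.exists_coprime' (Nat.gcd_pos_of_pos_right j (Nat.pos_of_ne_zero hN))
  have hW₀ : W ≠ 0 := by
    rintro rfl
    exact mul_ne_zero (pow_ne_zero i hX) (pow_ne_zero _ hh) (hW.trans (zero_pow hN))
  obtain ⟨c, r, hcr⟩ := exists_mul_X_pow_eq_C_of_pow_mul_X_pow_eq_one (i := i) hg.ne'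
    (R := h ^ j' / W ^ d) <| by
      rw [div_pow, ← pow_mul, ← pow_mul, ← hW]
      field_simp
  have hpow : h ^ j' = RatFunc.C c * RatFunc.X ^ (-(r : ℤ)) * W ^ d := by
    rw [← hcr, zpow_neg, zpow_natCast]
    field_simp
  have hbezout : (j' : ℤ) * Nat.gcdA j' d + d * Nat.gcdB j' d = 1 := by
    rw [← Nat.gcd_eq_gcd_ab, hcop.gcd_eq_one, Nat.cast_one]
  refine ⟨d, ?_, dvd_mul_right d g, c ^ Nat.gcdA j' d, -(r : ℤ) * Nat.gcdA j' d,
    W ^ Nat.gcdA j' d * h ^ Nat.gcdB j' d, ?_⟩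
  · rcases d with _ | _ | d
    · simp at hN
    · simp at hj
    · omega
  calc h = h ^ ((j' : ℤ) * Nat.gcdA j' d + d * Nat.gcdB j' d) := by rw [hbezout, zpow_one]
    _ = (h ^ j') ^ Nat.gcdA j' d * (h ^ Nat.gcdB j' d) ^ d := by
      rw [zpow_add₀ hh, zpow_mul, zpow_natCast, mul_comm (d : ℤ), zpow_mul _ _ (d : ℤ),
        zpow_natCast]
    _ = _ := by
      rw [hpow, mul_zpow, mul_zpow, ← zpow_mul, map_zpow₀, mul_pow, ← zpow_natCast W d,
        ← zpow_natCast (W ^ _) d, zpow_comm, mul_assoc]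

theorem exists_monic_eq_C_mul_div {f : RatFunc F} (hf : f ≠ 0) :
    ∃ (a : F) (u v : F[X]), a ≠ 0 ∧ u.Monic ∧ v.Monic ∧
      f = RatFunc.C a * (algebraMap F[X] (RatFunc F) u / algebraMap F[X] (RatFunc F) v) ∧
      u.natDegree + v.natDegree = f.num.natDegree + f.denom.natDegree ∧
      ∀ x, RatFunc.eval (RingHom.id F) x f = a * u.eval x * (v.eval x)⁻¹ := by
  have hnum : f.num ≠ 0 := RatFunc.num_ne_zero hf
  have ha : f.num.leadingCoeff ≠ 0 := leadingCoeff_ne_zero.mpr hnum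
  have hu : f.num = C f.num.leadingCoeff * (f.num * C f.num.leadingCoeff⁻¹) := by
    rw [mul_left_comm, ← C_mul, mul_inv_cancel₀ ha, C_1, mul_one]
  refine ⟨f.num.leadingCoeff, f.num * C f.num.leadingCoeff⁻¹, f.denom, ha,
    monic_mul_leadingCoeff_inv hnum, f.monic_denom, ?_, ?_, fun x => ?_⟩
  · rw [← mul_div_assoc, ← RatFunc.algebraMap_C, ← map_mul, ← hu, f.num_div_denom]
  · rw [natDegree_mul_C (inv_ne_zero ha)]
  · rw [RatFunc.eval, eval₂_id, eval₂_id, div_eq_mul_inv, ← eval_C_mul, ← hu]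

theorem pow_ne_X_pow_mul_pow_mul_pow_of_not_exceptional [Fintype F] {a : F} {u v : F[X]}
    (hu : u.Monic) (hv : v.Monic)
    (hf : ¬ ExceptionalRatFunc
      (RatFunc.C a * (algebraMap F[X] (RatFunc F) u / algebraMap F[X] (RatFunc F) v)))
    {i j j' : ℕ} (hjj' : Fintype.card F - 1 ∣ j + j')
    (hij : ¬ Fintype.card F - 1 ∣ i ∨ ¬ Fintype.card F - 1 ∣ j) (w : F[X]) :
    w ^ (Fintype.card F - 1) ≠ X ^ i * u ^ j * v ^ j' := by
  intro hw
  set N := Fintype.card F - 1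
  have hN : N ≠ 0 := (Nat.sub_pos_of_lt Fintype.one_lt_card).ne'
  by_cases hj : N ∣ j
  · have hj' : N ∣ j' := (Nat.dvd_add_right hj).mp hjj'
    have hdeg := congrArg natDegree hw
    rw [((monic_X_pow i).mul (hu.pow j)).natDegree_mul (hv.pow j'),
      (monic_X_pow i).natDegree_mul (hu.pow j), natDegree_X_pow, natDegree_pow, natDegree_pow,
      natDegree_pow] at hdeg
    refine hij.resolve_right (not_not.mpr hj) ?_
    rw [← Nat.dvd_add_left (hj.mul_right u.natDegree),
      ← Nat.dvd_add_left (hj'.mul_right v.natDegree), ← hdeg]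
    exact dvd_mul_right N _
  · obtain ⟨t, ht⟩ := hjj'
    have hu₀ := RatFunc.algebraMap_ne_zero hu.ne_zero
    have hv₀ := RatFunc.algebraMap_ne_zero hv.ne_zero
    obtain ⟨d, hd, hdN, c, r, H, hH⟩ := exists_eq_C_mul_X_zpow_mul_pow_of_pow_eq
      (div_ne_zero hu₀ hv₀) hN hj (i := i)
      (W := algebraMap F[X] (RatFunc F) w / algebraMap F[X] (RatFunc F) v ^ t) <| by
        rw [div_pow, div_pow, ← pow_mul, mul_comm t, ← ht, pow_add, ← map_pow _ w, hw]
        simp only [map_mul, map_pow, RatFunc.algebraMap_X]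
        field_simp
    exact hf (.inl ⟨a * c, r, H, d, hd, hdN, by rw [hH, map_mul]; ring⟩)

end RationalFunctions

theorem norm_sum_mulChar_mul_mulChar_eval_mul_addChar_le {F : Type*} [Field F] [Fintype F] {p : ℕ}
    [Fact p.Prime] [CharP F p] (hF : 2 < Fintype.card F) {f : RatFunc F}
    (hf : ¬ ExceptionalRatFunc f) (χ₁ χ₂ : MulChar F ℂ) {ψ : AddChar F ℂ}
    (hψ : ∀ z, ψ (z ^ p - z) = 1) (hψ₁ : ψ ≠ 1) {β γ : F}
    (hnontrivial : β ≠ 0 ∨ γ ≠ 0 ∨ χ₁ ≠ 1 ∨ χ₂ ≠ 1) :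
    ‖∑ x : F, χ₁ x * χ₂ (RatFunc.eval (RingHom.id F) x f) * ψ (β * x + γ * x⁻¹)‖ ≤
      (f.num.natDegree + f.denom.natDegree + 2 : ℝ) * √(Fintype.card F) := by
  have hf₀ : f ≠ 0 := by
    rintro rfl
    exact hf (.inl ⟨0, 0, 0, Fintype.card F - 1, by omega, dvd_rfl, by simp⟩)
  obtain ⟨a, u, v, ha, hu, hv, hfuv, hdeg, heval⟩ := exists_monic_eq_C_mul_div hf₀
  obtain ⟨ω, hω, hgen⟩ := exists_mulChar_generator F
  obtain ⟨i, hi, rfl⟩ := hgen χ₁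
  obtain ⟨j, hj, rfl⟩ := hgen χ₂
  obtain ⟨j', hj', hinv⟩ := hgen (ω ^ j)⁻¹
  have htriv (r : ℕ) : ω ^ r = 1 ↔ Fintype.card F - 1 ∣ r := by
    rw [← hω, orderOf_dvd_iff_pow_eq_one]
  have hjj' : Fintype.card F - 1 ∣ j + j' := by
    rw [← htriv, pow_add, hinv, mul_inv_cancel]
  obtain ⟨C, hC⟩ := exists_norm_sum_norm_mul_trace_le ω (U := X ^ i * u ^ j * v ^ j')
    (((monic_X_pow i).mul (hu.pow j)).mul (hv.pow j')) hψ β γ <| by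
      rw [hω]
      refine or_iff_not_imp_left.mpr fun hβγ w _ =>
        pow_ne_X_pow_mul_pow_mul_pow_of_not_exceptional hu hv (hfuv ▸ hf) hjj' ?_ w
      rw [← htriv, ← htriv]
      tauto
  have hmain := norm_mixedCharSum_le_of_forall_extension (ω ^ i) (ω ^ j) (ω ^ j') ψ β γ hu hv
    (C := C) fun k _ _ _ => by
      simpa only [mixedCharSum, MulChar.pow_apply' _ hi, MulChar.pow_apply' _ hj,
        MulChar.pow_apply' _ hj', map_mul, map_pow, aeval_X] using hC k
  have hsum : ∑ x : F, (ω ^ i) x * (ω ^ j) (RatFunc.eval (RingHom.id F) x f) *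
      ψ (β * x + γ * x⁻¹) = (ω ^ j) a * mixedCharSum (ω ^ i) (ω ^ j) (ω ^ j') ψ u v β γ F := by
    rw [mixedCharSum, Finset.mul_sum]
    refine Finset.sum_congr rfl fun x _ => ?_
    simp only [heval, hinv, map_mul, MulChar.inv_apply', Algebra.norm_self, Algebra.trace_self,
      coe_aeval_eq_eval, MonoidHom.id_apply, LinearMap.id_apply]
    ring
  rw [hsum, norm_mul, ← Units.val_mk0 ha, norm_mulChar_units, one_mul]
  rwa [← Nat.cast_add, hdeg, Nat.cast_add] at hmain

/-! ### Characters and free elements -/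

/-- `MemAbsHull S B A`: the vector `A` belongs to `B` times the closed absolutely convex hull of
`S`, encoded dually through the values of linear functionals. Such an expansion transfers a uniform
bound on character sums to a bound on sums of arbitrary products of indicator functions. -/
def MemAbsHull {V : Type*} [AddCommGroup V] [Module ℂ V] (S : Set V) (B : ℝ) (A : V) : Prop :=
  ∀ (L : V →ₗ[ℂ] ℂ) (M : ℝ), (∀ h ∈ S, ‖L h‖ ≤ M) → ‖L A‖ ≤ B * M

namespace MemAbsHull

section Module

variable {V : Type*} [AddCommGroup V] [Module ℂ V] {S : Set V} {B B' : ℝ} {A A' : V}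

theorem mono {S' : Set V} (h : MemAbsHull S B A) (hS : S ⊆ S') : MemAbsHull S' B A :=
  fun L M hM => h L M fun a ha => hM a (hS ha)

theorem map {W : Type*} [AddCommGroup W] [Module ℂ W] {S' : Set W} (h : MemAbsHull S B A)
    (T : V →ₗ[ℂ] W) (hS : Set.MapsTo T S S') : MemAbsHull S' B (T A) :=
  fun L M hM => h (L.comp T) M fun _ ha => hM _ (hS ha)

theorem add (h : MemAbsHull S B A) (h' : MemAbsHull S B' A') :
    MemAbsHull S (B + B') (A + A') := by
  intro L M hM
  rw [map_add, add_mul]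
  exact norm_add_le_of_le (h L M hM) (h' L M hM)

theorem of_mem (hA : A ∈ S) : MemAbsHull S 1 A := fun L M hM => by
  rw [one_mul]
  exact hM A hA

theorem smul (h : MemAbsHull S B A) (c : ℂ) : MemAbsHull S (‖c‖ * B) (c • A) := by
  intro L M hM
  rw [map_smul, smul_eq_mul, norm_mul, mul_assoc]
  exact mul_le_mul_of_nonneg_left (h L M hM) (norm_nonneg c)

theorem of_sub_smul {c : ℝ} {u : V} (hc : 0 ≤ c) (hu : u ∈ S)
    (h : MemAbsHull S c (A - (c : ℂ) • u)) : MemAbsHull S (c * 2) A := by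
  have hsum := h.add ((of_mem hu).smul (c : ℂ))
  rwa [sub_add_cancel, Complex.norm_of_nonneg hc, mul_one, ← mul_two] at hsum

theorem sum_smul {ι : Type*} (s : Finset ι) (c : ι → ℂ) {h : ι → V} (hS : ∀ i ∈ s, h i ∈ S) :
    MemAbsHull S (∑ i ∈ s, ‖c i‖) (∑ i ∈ s, c i • h i) := by
  intro L M hM
  rw [map_sum, Finset.sum_mul]
  refine norm_sum_le_of_le s fun i hi => ?_
  rw [map_smul, smul_eq_mul, norm_mul]
  exact mul_le_mul_of_nonneg_left (hM _ (hS i hi)) (norm_nonneg _)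

end Module

theorem mul {V : Type*} [CommRing V] [Algebra ℂ V] {S S' S'' : Set V} {B B' : ℝ} {A A' : V}
    (h : MemAbsHull S B A) (h' : MemAbsHull S' B' A')
    (hS : ∀ a ∈ S, ∀ b ∈ S', a * b ∈ S'') : MemAbsHull S'' (B * B') (A * A') := by
  intro L M hM
  rw [mul_assoc]
  exact h (L.comp (LinearMap.mulRight ℂ A')) (B' * M) fun a ha =>
    h' (L.comp (LinearMap.mulLeft ℂ a)) M fun b hb => hM _ (hS a ha b hb)

end MemAbsHull

section UFree

variable {F : Type*} [Field F]

theorem isUFree_mul_iff {k l : ℕ} {x : F} : IsUFree (k * l) x ↔ IsUFree k x ∧ IsUFree l x := by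
  refine ⟨fun ⟨hx, h⟩ => ⟨⟨hx, fun v d hd hdk => h v d hd (hdk.mul_right l)⟩,
    hx, fun v d hd hdl => h v d hd (hdl.mul_left k)⟩, fun ⟨⟨hx, hk⟩, _, hl⟩ => ⟨hx, ?_⟩⟩
  intro v d _ hdvd hxd
  by_contra hd
  obtain ⟨ℓ, hℓ, r, rfl⟩ := Nat.exists_prime_and_dvd hd
  have hxℓ : x = (v ^ r) ^ ℓ := by rw [hxd, mul_comm, pow_mul]
  rcases hℓ.dvd_mul.mp ((dvd_mul_right ℓ r).trans hdvd) with hℓk | hℓl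
  · exact hℓ.ne_one (hk _ ℓ hℓ.pos hℓk hxℓ)
  · exact hℓ.ne_one (hl _ ℓ hℓ.pos hℓl hxℓ)

theorem isUFree_prime_iff {ℓ : ℕ} (hℓ : ℓ.Prime) {x : F} :
    IsUFree ℓ x ↔ x ≠ 0 ∧ ¬ ∃ v, v ^ ℓ = x := by
  refine ⟨fun ⟨hx, h⟩ => ⟨hx, fun ⟨v, hv⟩ => hℓ.ne_one (h v ℓ hℓ.pos dvd_rfl hv.symm)⟩,
    fun ⟨hx, h⟩ => ⟨hx, fun v d _ hdℓ hxd => ?_⟩⟩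
  refine (hℓ.eq_one_or_self_of_dvd d hdℓ).resolve_right ?_
  rintro rfl
  exact h ⟨v, hxd.symm⟩

/-- The indicator function of the `l`-free elements of a field. -/
noncomputable def uFreeIndicator (F : Type*) [Field F] (l : ℕ) (x : F) : ℂ :=
  if IsUFree l x then 1 else 0

theorem uFreeIndicator_mul (k l : ℕ) :
    uFreeIndicator F (k * l) = uFreeIndicator F k * uFreeIndicator F l := by
  funext x
  simp only [uFreeIndicator, isUFree_mul_iff, Pi.mul_apply, ite_zero_mul_ite_zero, one_mul]

theorem uFreeIndicator_mul_of_dvd {k l : ℕ} (h : k ∣ l) :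
    uFreeIndicator F (k * l) = uFreeIndicator F l := by
  obtain ⟨r, rfl⟩ := h
  funext x
  refine if_congr ?_ rfl rfl
  simp only [isUFree_mul_iff]
  tauto

theorem uFreeIndicator_one : uFreeIndicator F 1 = (1 : MulChar F ℂ) := by
  funext x
  rcases eq_or_ne x 0 with rfl | hx
  · rw [MulChar.map_zero]
    exact if_neg fun h => h.1 rfl
  · rw [MulChar.one_apply hx.isUnit]
    exact if_pos ⟨hx, fun _ d _ hd _ => Nat.dvd_one.mp hd⟩

end UFree

section MulCharExpansion

variable {F : Type*} [Field F]

theorem mulChar_apply_eq_one_iff_exists_pow_eq [Finite F] (χ : MulChar F ℂ) {x : F} (hx : x ≠ 0) :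
    χ x = 1 ↔ ∃ v, v ^ orderOf χ = x := by
  constructor
  · intro h
    obtain ⟨g, hg⟩ := IsCyclic.exists_generator (α := Fˣ)
    obtain ⟨a, ha⟩ := (mem_powers_iff_mem_zpowers (x := g)).mpr (hg (Units.mk0 x hx))
    have hxa : (g : F) ^ a = x := by simpa using congrArg Units.val ha
    have hχa : χ ^ a = 1 := by
      rw [MulChar.eq_iff hg, MulChar.pow_apply_coe, ← map_pow, hxa, h, MulChar.one_apply_coe]
    obtain ⟨b, rfl⟩ := orderOf_dvd_of_pow_eq_one hχa
    exact ⟨g ^ b, by rw [← hxa, mul_comm, pow_mul]⟩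
  · rintro ⟨v, rfl⟩
    have hv : v ≠ 0 := fun hv => hx (by rw [hv, zero_pow χ.orderOf_pos.ne'])
    rw [map_pow, ← MulChar.pow_apply' _ χ.orderOf_pos.ne', pow_orderOf_eq_one,
      MulChar.one_apply hv.isUnit]

theorem sum_pow_mulChar_apply [Finite F] (χ : MulChar F ℂ) {x : F} (hx : x ≠ 0) :
    ∑ i ∈ Finset.range (orderOf χ), (χ ^ i) x =
      if ∃ v, v ^ orderOf χ = x then (orderOf χ : ℂ) else 0 := by
  have hpow (i : ℕ) : (χ ^ i) x = χ x ^ i := MulChar.pow_apply_coe χ i (Units.mk0 x hx)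
  rw [← mulChar_apply_eq_one_iff_exists_pow_eq χ hx]
  simp only [hpow]
  split_ifs with h
  · simp [h]
  · rw [geom_sum_eq h, ← hpow, pow_orderOf_eq_one, MulChar.one_apply hx.isUnit, sub_self, zero_div]

theorem uFreeIndicator_sub_eq_sum [Finite F] {χ : MulChar F ℂ} (hχ : (orderOf χ).Prime) :
    uFreeIndicator F (orderOf χ) - (1 - (orderOf χ : ℂ)⁻¹) • ⇑(1 : MulChar F ℂ) =
      ∑ i ∈ Finset.Ico 1 (orderOf χ), (-(orderOf χ : ℂ)⁻¹) • ⇑(χ ^ i) := by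
  have hℓ : (orderOf χ : ℂ) ≠ 0 := Nat.cast_ne_zero.mpr hχ.ne_zero
  funext x
  simp only [Finset.sum_apply, Pi.sub_apply, Pi.smul_apply, smul_eq_mul, ← Finset.mul_sum]
  simp only [uFreeIndicator, isUFree_prime_iff hχ]
  rcases eq_or_ne x 0 with rfl | hx
  · simp [MulChar.map_zero]
  rw [Finset.sum_Ico_eq_sub _ hχ.one_lt.le, sum_pow_mulChar_apply χ hx, Finset.sum_range_one,
    pow_zero, MulChar.one_apply hx.isUnit]
  by_cases h : ∃ v, v ^ orderOf χ = x
  · rw [if_neg (fun h' => h'.2 h), if_pos h]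
    field_simp
    ring
  · rw [if_pos ⟨hx, h⟩, if_neg h]
    ring

theorem totient_prime_div_eq {ℓ : ℕ} (hℓ : ℓ.Prime) : (ℓ.totient : ℝ) / ℓ = 1 - (ℓ : ℝ)⁻¹ := by
  rw [Nat.totient_prime hℓ, Nat.cast_sub hℓ.one_lt.le, sub_div,
    div_self (Nat.cast_ne_zero.mpr hℓ.ne_zero), Nat.cast_one, one_div]

theorem uFreeIndicator_mul_sub_smul (c l : ℕ) (z : ℂ) :
    uFreeIndicator F (c * l) - z • uFreeIndicator F l =
      (uFreeIndicator F c - z • ⇑(1 : MulChar F ℂ)) * uFreeIndicator F l := by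
  rw [sub_mul, smul_mul_assoc, ← uFreeIndicator_one, ← uFreeIndicator_mul, ← uFreeIndicator_mul,
    one_mul]

variable [Fintype F]

theorem memAbsHull_uFreeIndicator_prime_sub {ℓ : ℕ} (hℓ : ℓ.Prime) (hdvd : ℓ ∣ Fintype.card F - 1) :
    MemAbsHull {h | ∃ χ : MulChar F ℂ, ⇑χ = h ∧ χ ^ ℓ = 1 ∧ χ ≠ 1} ((ℓ.totient : ℝ) / ℓ)
      (uFreeIndicator F ℓ - (((ℓ.totient : ℝ) / ℓ : ℝ) : ℂ) • ⇑(1 : MulChar F ℂ)) := by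
  obtain ⟨χ, rfl⟩ :=
    MulChar.exists_mulChar_orderOf F hdvd (Complex.isPrimitiveRoot_exp ℓ hℓ.ne_zero)
  have hweight : 1 - (orderOf χ : ℝ)⁻¹ = ∑ _ ∈ Finset.Ico 1 (orderOf χ), ‖-(orderOf χ : ℂ)⁻¹‖ := by
    rw [Finset.sum_const, Nat.card_Ico, nsmul_eq_mul, norm_neg, norm_inv, Complex.norm_natCast,
      Nat.cast_sub hℓ.one_lt.le, Nat.cast_one, sub_mul, one_mul,
      mul_inv_cancel₀ (Nat.cast_ne_zero.mpr hℓ.ne_zero)]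
  rw [totient_prime_div_eq hℓ]
  push_cast
  rw [uFreeIndicator_sub_eq_sum hℓ, hweight]
  refine MemAbsHull.sum_smul _ _ fun i hi => ⟨χ ^ i, rfl, ?_, ?_⟩
  · rw [pow_right_comm, pow_orderOf_eq_one, one_pow]
  · rw [Finset.mem_Ico] at hi
    exact pow_ne_one_of_lt_orderOf (by omega) hi.2

theorem memAbsHull_uFreeIndicator_prime {ℓ : ℕ} (hℓ : ℓ.Prime) (hdvd : ℓ ∣ Fintype.card F - 1) :
    MemAbsHull {h | ∃ χ : MulChar F ℂ, ⇑χ = h ∧ χ ^ ℓ = 1} ((ℓ.totient : ℝ) / ℓ * 2)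
      (uFreeIndicator F ℓ) := by
  refine MemAbsHull.of_sub_smul (by positivity) ⟨1, rfl, one_pow ℓ⟩ ?_
  exact (memAbsHull_uFreeIndicator_prime_sub hℓ hdvd).mono
    fun _ ⟨χ, hχ, hpow, _⟩ => ⟨χ, hχ, hpow⟩

theorem memAbsHull_uFreeIndicator {l : ℕ} (hl : l ∣ Fintype.card F - 1) :
    MemAbsHull {h | ∃ χ : MulChar F ℂ, ⇑χ = h ∧ χ ^ l = 1}
      ((l.totient : ℝ) / l * 2 ^ l.primeFactors.card) (uFreeIndicator F l) := by
  have hF : Fintype.card F - 1 ≠ 0 := by have := Fintype.one_lt_card (α := F); omega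
  induction l using induction_on_primes with
  | zero => exact absurd (zero_dvd_iff.mp hl) hF
  | one =>
    have hmem : uFreeIndicator F 1 ∈ {h : F → ℂ | ∃ χ : MulChar F ℂ, ⇑χ = h ∧ χ ^ 1 = 1} :=
      ⟨1, uFreeIndicator_one.symm, one_pow 1⟩
    simpa using MemAbsHull.of_mem hmem
  | prime_mul ℓ k hℓ ih =>
    have hk : k ≠ 0 := right_ne_zero_of_mul (ne_zero_of_dvd_ne_zero hF hl)
    have ih := ih ((dvd_mul_left k ℓ).trans hl)
    by_cases hℓk : ℓ ∣ k
    · rw [uFreeIndicator_mul_of_dvd hℓk, Nat.totient_mul_of_prime_of_dvd hℓ hℓk,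
        Nat.primeFactors_mul hℓ.ne_zero hk,
        Finset.union_eq_right.mpr (Nat.primeFactors_mono hℓk hk), Nat.cast_mul, Nat.cast_mul,
        mul_div_mul_left _ _ (Nat.cast_ne_zero.mpr hℓ.ne_zero)]
      exact ih.mono fun _ ⟨χ, hχ, hpow⟩ => ⟨χ, hχ, by rw [mul_comm, pow_mul, hpow, one_pow]⟩
    · have hcop : ℓ.Coprime k := (Nat.Prime.coprime_iff_not_dvd hℓ).mpr hℓk
      have hweight : ((ℓ * k).totient : ℝ) / (ℓ * k : ℕ) * 2 ^ (ℓ * k).primeFactors.card =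
          (ℓ.totient : ℝ) / ℓ * 2 * ((k.totient : ℝ) / k * 2 ^ k.primeFactors.card) := by
        rw [Nat.totient_mul hcop, hcop.primeFactors_mul,
          Finset.card_union_of_disjoint hcop.disjoint_primeFactors, hℓ.primeFactors,
          Finset.card_singleton, pow_add, Nat.cast_mul, Nat.cast_mul]
        ring
      rw [hweight, uFreeIndicator_mul]
      refine (memAbsHull_uFreeIndicator_prime hℓ ((dvd_mul_right ℓ k).trans hl)).mul ih ?_
      rintro _ ⟨χ, rfl, hχ⟩ _ ⟨χ', rfl, hχ'⟩
      exact ⟨χ * χ', MulChar.coeToFun_mul _ _, by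
        rw [mul_pow, pow_mul, hχ, mul_comm ℓ, pow_mul, hχ', one_pow, one_pow, one_mul]⟩

theorem memAbsHull_uFreeIndicator_prime_mul_sub {c l : ℕ} (hc : c.Prime) (hcl : ¬ c ∣ l)
    (hl : l ∣ Fintype.card F - 1) (hcdvd : c ∣ Fintype.card F - 1) :
    MemAbsHull {h | ∃ χ : MulChar F ℂ, ⇑χ = h ∧ χ ≠ 1}
      ((c.totient : ℝ) / c * ((l.totient : ℝ) / l * 2 ^ l.primeFactors.card))
      (uFreeIndicator F (c * l) - (((c.totient : ℝ) / c : ℝ) : ℂ) • uFreeIndicator F l) := by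
  rw [uFreeIndicator_mul_sub_smul]
  refine (memAbsHull_uFreeIndicator_prime_sub hc hcdvd).mul (memAbsHull_uFreeIndicator hl) ?_
  rintro _ ⟨χ, rfl, hχc, hχ⟩ _ ⟨χ', rfl, hχ'⟩
  refine ⟨χ * χ', MulChar.coeToFun_mul _ _, fun hmul => hχ ?_⟩
  have hχl : χ ^ l = 1 := by
    rw [← mul_one (χ ^ l), ← hχ', ← mul_pow, hmul, one_pow, hχ']
  have hdvd := Nat.dvd_gcd (orderOf_dvd_of_pow_eq_one hχc) (orderOf_dvd_of_pow_eq_one hχl)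
  rwa [(Nat.Prime.coprime_iff_not_dvd hc).mpr hcl, Nat.dvd_one, orderOf_eq_one_iff] at hdvd

end MulCharExpansion

theorem natCard_units_add_natCard_nonunits (R : Type*) [Monoid R] [Finite R] :
    Nat.card Rˣ + Nat.card (nonunits R) = Nat.card R := by
  rw [Nat.card_congr Submonoid.unitsTypeEquivIsUnitSubmonoid.toEquiv, ← Nat.card_sum]
  exact Nat.card_congr (Equiv.sumCompl fun x : R => IsUnit x)

theorem natCard_units_quotient_pow_mul_add {R : Type*} [CommRing R] (I : Ideal R) [I.IsMaximal]
    {k : ℕ} (hk : k ≠ 0) [Finite (R ⧸ I ^ k)] :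
    Nat.card (R ⧸ I ^ k)ˣ * Nat.card (R ⧸ I) + Nat.card (R ⧸ I ^ k) =
      Nat.card (R ⧸ I ^ k) * Nat.card (R ⧸ I) := by
  let π : R ⧸ I ^ k →+ R ⧸ I := (Ideal.Quotient.factor (Ideal.pow_le_self hk)).toAddMonoidHom
  have hnonunits : Nat.card (nonunits (R ⧸ I ^ k)) = Nat.card π.ker := by
    refine Nat.card_congr (Equiv.subtypeEquivRight fun x => ?_)
    obtain ⟨r, rfl⟩ := Ideal.Quotient.mk_surjective x
    change ¬ IsUnit _ ↔ Ideal.Quotient.mk I r = 0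
    rw [Ideal.Quotient.isUnit_mk_pow_iff_notMem I hk, not_not, Ideal.Quotient.eq_zero_iff_mem]
  have hker : Nat.card (R ⧸ I ^ k) = Nat.card (R ⧸ I) * Nat.card π.ker := by
    rw [AddSubgroup.card_eq_card_quotient_mul_card_addSubgroup π.ker,
      Nat.card_congr (QuotientAddGroup.quotientKerEquivOfSurjective π
        (Ideal.Quotient.factor_surjective (Ideal.pow_le_self hk))).toEquiv]
  have hunits := natCard_units_add_natCard_nonunits (R ⧸ I ^ k)
  rw [hnonunits] at hunits
  calc _ = Nat.card (R ⧸ I ^ k)ˣ * Nat.card (R ⧸ I) + Nat.card (R ⧸ I) * Nat.card π.ker := by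
        rw [← hker]
    _ = (Nat.card (R ⧸ I ^ k)ˣ + Nat.card π.ker) * Nat.card (R ⧸ I) := by ring
    _ = _ := by rw [hunits]

section PolyTotient

variable {K : Type*} [Field K]

theorem polyTotient_of_isUnit {g : K[X]} (hg : IsUnit g) : polyTotient g = 1 := by
  have : Subsingleton (K[X] ⧸ Ideal.span {g}) := by
    rwa [Ideal.Quotient.subsingleton_iff, Ideal.span_singleton_eq_top]
  exact Nat.card_unique

theorem polyTotient_mul_of_isCoprime {g h : K[X]} (hgh : IsCoprime g h) :
    polyTotient (g * h) = polyTotient g * polyTotient h := by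
  have hspan : IsCoprime (Ideal.span {g}) (Ideal.span {h}) :=
    (Ideal.isCoprime_span_singleton_iff g h).mpr hgh
  have equiv := (Units.mapEquiv (Ideal.quotientMulEquivQuotientProd _ _ hspan).toMulEquiv).trans
    MulEquiv.prodUnits
  rw [polyTotient, ← Ideal.span_singleton_mul_span_singleton, Nat.card_congr equiv.toEquiv,
    Nat.card_prod, polyTotient, polyTotient]

variable [Fintype K]

theorem natCard_quotient_span_singleton {g : K[X]} (hg : g ≠ 0) :
    Nat.card (K[X] ⧸ Ideal.span {g}) = Fintype.card K ^ g.natDegree := by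
  have : Module.Finite K (K[X] ⧸ Ideal.span {g}) := (AdjoinRoot.powerBasis hg).finite
  rw [Module.natCard_eq_pow_finrank (K := K), finrank_quotient_span_eq_natDegree,
    Nat.card_eq_fintype_card]

theorem polyTotient_irreducible_pow_div {P : K[X]} (hP : Irreducible P) {k : ℕ} (hk : k ≠ 0) :
    (polyTotient (P ^ k) : ℝ) / (Fintype.card K : ℝ) ^ (P ^ k).natDegree =
      1 - ((Fintype.card K : ℝ) ^ P.natDegree)⁻¹ := by
  have hPk : P ^ k ≠ 0 := pow_ne_zero _ hP.ne_zero
  have : (Ideal.span {P}).IsMaximal := PrincipalIdealRing.isMaximal_of_irreducible hP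
  have : Finite (K[X] ⧸ Ideal.span {P} ^ k) := by
    refine Nat.finite_of_card_ne_zero ?_
    rw [Ideal.span_singleton_pow, natCard_quotient_span_singleton hPk]
    exact pow_ne_zero _ Fintype.card_ne_zero
  have hcount := natCard_units_quotient_pow_mul_add (Ideal.span {P}) hk
  rw [Ideal.span_singleton_pow, natCard_quotient_span_singleton hPk,
    natCard_quotient_span_singleton hP.ne_zero, ← polyTotient] at hcount
  have hcount' : (polyTotient (P ^ k) : ℝ) * (Fintype.card K : ℝ) ^ P.natDegree +
      (Fintype.card K : ℝ) ^ (P ^ k).natDegree =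
        (Fintype.card K : ℝ) ^ (P ^ k).natDegree * (Fintype.card K : ℝ) ^ P.natDegree := by
    exact_mod_cast hcount
  field_simp
  linear_combination hcount'

theorem polyTotient_mul_div {g h : K[X]} (hgh : IsCoprime g h) (hg : g ≠ 0) (hh : h ≠ 0) :
    (polyTotient (g * h) : ℝ) / (Fintype.card K : ℝ) ^ (g * h).natDegree =
      (polyTotient g : ℝ) / (Fintype.card K : ℝ) ^ g.natDegree *
        ((polyTotient h : ℝ) / (Fintype.card K : ℝ) ^ h.natDegree) := by
  rw [polyTotient_mul_of_isCoprime hgh, natDegree_mul hg hh, pow_add, Nat.cast_mul,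
    mul_div_mul_comm]

end PolyTotient

section AddCharExpansion

variable {G : Type*} [AddCommGroup G] [Finite G] (V : AddSubgroup G)

theorem sum_addChar_quotient_eq_ite (y : G) :
    ∑ φ : AddChar (G ⧸ V) ℂ, (V.index : ℂ)⁻¹ * φ y = if y ∈ V then 1 else 0 := by
  have := Fintype.ofFinite (G ⧸ V)
  have hindex : (V.index : ℂ) ≠ 0 := Nat.cast_ne_zero.mpr V.index_ne_zero_of_finite
  rw [← Finset.mul_sum, AddChar.sum_apply_eq_ite, mul_ite, mul_zero]
  rw [AddSubgroup.index, Nat.card_eq_fintype_card] at hindex ⊢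
  rw [inv_mul_cancel₀ hindex]
  simp only [QuotientAddGroup.eq_zero_iff]

theorem card_addChar_quotient : Fintype.card (AddChar (G ⧸ V) ℂ) = V.index := by
  have := Fintype.ofFinite (G ⧸ V)
  rw [AddChar.card_eq, AddSubgroup.index, Nat.card_eq_fintype_card]

/-- The additive character of `G` induced by an additive character of the quotient `G ⧸ V`. -/
noncomputable def liftQuotientAddChar {V : AddSubgroup G} (φ : AddChar (G ⧸ V) ℂ) : AddChar G ℂ :=
  φ.compAddMonoidHom (QuotientAddGroup.mk' V)

theorem compl_addSubgroup_sub_eq_sum :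
    (fun y => if y ∈ V then 0 else 1) - (1 - (V.index : ℂ)⁻¹) • ⇑(1 : AddChar G ℂ) =
      ∑ φ ∈ Finset.univ.erase (1 : AddChar (G ⧸ V) ℂ),
        (-(V.index : ℂ)⁻¹) • ⇑(liftQuotientAddChar φ) := by
  funext y
  have hsum := sum_addChar_quotient_eq_ite V y
  rw [← Finset.add_sum_erase _ _ (Finset.mem_univ 1), AddChar.one_apply] at hsum
  have hcompl : (if y ∈ V then (0 : ℂ) else 1) = 1 - if y ∈ V then 1 else 0 := by
    split_ifs <;> norm_num
  have hlift (φ : AddChar (G ⧸ V) ℂ) : liftQuotientAddChar φ y = φ y := rfl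
  simp only [Pi.sub_apply, Finset.sum_apply, Pi.smul_apply, smul_eq_mul, AddChar.one_apply,
    hcompl, ← hsum, neg_mul, Finset.sum_neg_distrib, hlift]
  ring

theorem memAbsHull_compl_addSubgroup_sub :
    MemAbsHull {h | ∃ η : AddChar G ℂ, ⇑η = h ∧ (∀ y ∈ V, η y = 1) ∧ η ≠ 1} (1 - (V.index : ℝ)⁻¹)
      ((fun y => if y ∈ V then 0 else 1) -
        ((1 - (V.index : ℝ)⁻¹ : ℝ) : ℂ) • ⇑(1 : AddChar G ℂ)) := by
  have hindex : V.index ≠ 0 := V.index_ne_zero_of_finite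
  have hweight : 1 - (V.index : ℝ)⁻¹ =
      ∑ _ ∈ Finset.univ.erase (1 : AddChar (G ⧸ V) ℂ), ‖-(V.index : ℂ)⁻¹‖ := by
    rw [Finset.sum_const, Finset.card_erase_of_mem (Finset.mem_univ _), Finset.card_univ,
      card_addChar_quotient, nsmul_eq_mul, norm_neg, norm_inv, Complex.norm_natCast,
      Nat.cast_sub (Nat.one_le_iff_ne_zero.mpr hindex), Nat.cast_one, sub_mul, one_mul,
      mul_inv_cancel₀ (Nat.cast_ne_zero.mpr hindex)]
  rw [Complex.ofReal_sub, Complex.ofReal_one, Complex.ofReal_inv, Complex.ofReal_natCast,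
    compl_addSubgroup_sub_eq_sum, hweight]
  refine MemAbsHull.sum_smul _ _ fun φ hφ =>
    ⟨liftQuotientAddChar φ, rfl, fun y hy => ?_, fun hone => ?_⟩
  · change φ y = 1
    rw [(QuotientAddGroup.eq_zero_iff y).mpr hy, AddChar.map_zero_eq_one]
  · refine Finset.ne_of_mem_erase hφ (AddChar.ext _ _ fun z => ?_)
    obtain ⟨y, rfl⟩ := QuotientAddGroup.mk_surjective z
    exact DFunLike.congr_fun hone y

theorem memAbsHull_addSubgroup_coset (y₀ : G) :
    MemAbsHull {h | ∃ η : AddChar G ℂ, ⇑η = h} 1 fun y => if y - y₀ ∈ V then 1 else 0 := by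
  have hindex : (V.index : ℝ) ≠ 0 := Nat.cast_ne_zero.mpr V.index_ne_zero_of_finite
  have hweight : (1 : ℝ) = ∑ φ : AddChar (G ⧸ V) ℂ, ‖(V.index : ℂ)⁻¹ * φ ((-y₀ : G) : G ⧸ V)‖ := by
    simp only [norm_mul, AddChar.norm_apply, mul_one, norm_inv, Complex.norm_natCast]
    rw [Finset.sum_const, Finset.card_univ, card_addChar_quotient, nsmul_eq_mul,
      mul_inv_cancel₀ hindex]
  have hexpand : (fun y => if y - y₀ ∈ V then (1 : ℂ) else 0) = ∑ φ : AddChar (G ⧸ V) ℂ,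
      ((V.index : ℂ)⁻¹ * φ ((-y₀ : G) : G ⧸ V)) • ⇑(liftQuotientAddChar φ) := by
    funext y
    rw [← sum_addChar_quotient_eq_ite, Finset.sum_apply]
    refine Finset.sum_congr rfl fun φ _ => ?_
    change _ = (V.index : ℂ)⁻¹ * φ ((-y₀ : G) : G ⧸ V) * φ y
    rw [mul_assoc, ← AddChar.map_add_eq_mul, sub_eq_neg_add]
    rfl
  rw [hexpand, hweight]
  exact MemAbsHull.sum_smul _ _ fun φ _ => ⟨liftQuotientAddChar φ, rfl⟩

end AddCharExpansion

section GFree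

theorem X_pow_finrank_sub_one_ne_zero (K F : Type*) [Field K] [Field F] [Algebra K F]
    [Module.Finite K F] : (X ^ Module.finrank K F - 1 : K[X]) ≠ 0 :=
  (monic_X_pow_sub_C (1 : K) Module.finrank_pos.ne').ne_zero

variable {K : Type*} (F : Type*) [Field K] [Fintype K] [Field F] [Algebra K F]

/-- The `K`-linear operator `α ↦ g ∘ α` on `F`, that is, `g` evaluated at the Frobenius of `F`
over `K`. -/
noncomputable def polyActHom : K[X] →ₐ[K] Module.End K F :=
  aeval (FiniteField.frobeniusAlgHom K F).toLinearMap

theorem frobeniusAlgHom_toLinearMap_pow_apply (i : ℕ) (α : F) :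
    ((FiniteField.frobeniusAlgHom K F).toLinearMap ^ i) α = α ^ Fintype.card K ^ i := by
  induction i with
  | zero => rw [pow_zero, pow_zero, pow_one, Module.End.one_apply]
  | succ i ih =>
    rw [pow_succ', Module.End.mul_apply, ih, pow_succ, pow_mul]
    rfl

theorem polyActHom_apply (g : K[X]) (α : F) :
    polyActHom F g α = polyAct (Fintype.card K) g α := by
  rw [polyActHom, aeval_def, eval₂_eq_sum, polyAct, Polynomial.sum, Polynomial.sum,
    LinearMap.sum_apply]
  refine Finset.sum_congr rfl fun i _ => ?_
  rw [Module.End.mul_apply, frobeniusAlgHom_toLinearMap_pow_apply]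
  rfl

/-- The linearized polynomial `∑ aᵢ X ^ qⁱ` over `F` inducing the operator of `g = ∑ aᵢ Xⁱ`. -/
noncomputable def linearizedPoly (g : K[X]) : F[X] :=
  g.sum fun i a => C (algebraMap K F a) * X ^ Fintype.card K ^ i

theorem eval_linearizedPoly (g : K[X]) (α : F) :
    (linearizedPoly F g).eval α = polyActHom F g α := by
  rw [polyActHom_apply, linearizedPoly, polyAct, Polynomial.sum, Polynomial.sum, eval_finsetSum]
  simp only [eval_mul, eval_C, eval_pow, eval_X, Algebra.smul_def]

theorem linearizedPoly_ne_zero {g : K[X]} (hg : g ≠ 0) : linearizedPoly F g ≠ 0 := by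
  have hcoeff : (linearizedPoly F g).coeff (Fintype.card K ^ g.natDegree) =
      algebraMap K F g.leadingCoeff := by
    simp only [linearizedPoly, Polynomial.sum, finsetSum_coeff, coeff_C_mul_X_pow]
    rw [Finset.sum_eq_single_of_mem _ (natDegree_mem_support_of_nonzero hg), if_pos rfl,
      leadingCoeff]
    exact fun i _ hi => if_neg fun h =>
      hi (Nat.pow_right_injective Fintype.one_lt_card h).symm
  intro h
  rw [h, coeff_zero, eq_comm, FaithfulSMul.algebraMap_eq_zero_iff] at hcoeff
  exact hg (leadingCoeff_eq_zero.mp hcoeff)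

theorem natDegree_linearizedPoly_le (g : K[X]) :
    (linearizedPoly F g).natDegree ≤ Fintype.card K ^ g.natDegree :=
  natDegree_sum_le_of_forall_le _ _ fun _ hi => (natDegree_C_mul_X_pow_le _ _).trans <|
    Nat.pow_le_pow_right Fintype.card_pos (le_natDegree_of_mem_supp _ hi)

variable [Finite F]

theorem finrank_ker_polyActHom_le {g : K[X]} (hg : g ≠ 0) :
    Module.finrank K (LinearMap.ker (polyActHom F g)) ≤ g.natDegree := by
  have hroots : (LinearMap.ker (polyActHom F g) : Set F) ⊆ (linearizedPoly F g).roots.toFinset := by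
    intro α hα
    rwa [Finset.mem_coe, Multiset.mem_toFinset, mem_roots (linearizedPoly_ne_zero F hg), IsRoot,
      eval_linearizedPoly]
  have hcard : Fintype.card K ^ Module.finrank K (LinearMap.ker (polyActHom F g)) ≤
      Fintype.card K ^ g.natDegree :=
    calc _ = Nat.card (LinearMap.ker (polyActHom F g)) := by
          rw [Module.natCard_eq_pow_finrank (K := K), Nat.card_eq_fintype_card]
      _ ≤ (linearizedPoly F g).roots.toFinset.card := by
          rw [← Set.ncard_coe_finset]
          exact Set.ncard_le_ncard hroots
      _ ≤ (linearizedPoly F g).natDegree :=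
          (Multiset.toFinset_card_le _).trans (card_roots' _)
      _ ≤ _ := natDegree_linearizedPoly_le F g
  exact (Nat.pow_le_pow_iff_right Fintype.one_lt_card).mp hcard

theorem polyActHom_X_pow_finrank_sub_one :
    polyActHom F (X ^ Module.finrank K F - 1 : K[X]) = 0 := by
  have := Fintype.ofFinite F
  ext α
  rw [polyActHom, map_sub, map_pow, aeval_X, map_one, LinearMap.sub_apply,
    frobeniusAlgHom_toLinearMap_pow_apply, ← Module.card_eq_pow_finrank, FiniteField.pow_card,
    Module.End.one_apply, sub_self, LinearMap.zero_apply]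

variable {F} {g : K[X]}

theorem finrank_ker_polyActHom (hg : g ∣ X ^ Module.finrank K F - 1) :
    Module.finrank K (LinearMap.ker (polyActHom F g)) = g.natDegree := by
  obtain ⟨h, hgh⟩ := hg
  have hne : g * h ≠ 0 := hgh ▸ X_pow_finrank_sub_one_ne_zero K F
  have hdeg : g.natDegree + h.natDegree = Module.finrank K F := by
    rw [← natDegree_mul (left_ne_zero_of_mul hne) (right_ne_zero_of_mul hne), ← hgh]
    exact natDegree_X_pow_sub_C
  have hrange : LinearMap.range (polyActHom F h) ≤ LinearMap.ker (polyActHom F g) := by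
    rw [LinearMap.range_le_ker_iff, ← Module.End.mul_eq_comp, ← map_mul, ← hgh,
      polyActHom_X_pow_finrank_sub_one]
  have hrange_le := Submodule.finrank_mono hrange
  have hker_g := finrank_ker_polyActHom_le F (left_ne_zero_of_mul hne)
  have hker_h := finrank_ker_polyActHom_le F (right_ne_zero_of_mul hne)
  have hrank := (polyActHom F h).finrank_range_add_finrank_ker
  omega

variable (F g) in
/-- The image of `F` under the action of `g`. -/
noncomputable def polyActRange : AddSubgroup F := (LinearMap.range (polyActHom F g)).toAddSubgroup

theorem index_polyActRange (hg : g ∣ X ^ Module.finrank K F - 1) :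
    (polyActRange F g).index = Fintype.card K ^ g.natDegree := by
  have hcard := (polyActRange F g).index_mul_card
  have hrange : Nat.card (polyActRange F g) =
      Fintype.card K ^ Module.finrank K (LinearMap.range (polyActHom F g)) := by
    rw [← Nat.card_eq_fintype_card, ← Module.natCard_eq_pow_finrank]
    rfl
  rw [hrange, Module.natCard_eq_pow_finrank (K := K), Nat.card_eq_fintype_card,
    ← (polyActHom F g).finrank_range_add_finrank_ker, finrank_ker_polyActHom hg, add_comm,
    pow_add] at hcard
  exact Nat.eq_of_mul_eq_mul_right (pow_pos Fintype.card_pos _) hcard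

end GFree

section GFreeExpansion

variable {K F : Type*} [Field K] [Fintype K] [Field F] [Algebra K F] {g h P : K[X]}

theorem mem_polyActRange {x : F} :
    x ∈ polyActRange F g ↔ ∃ β, x = polyAct (Fintype.card K) g β := by
  simp only [← polyActHom_apply, eq_comm (a := x)]
  rfl

theorem polyActRange_antitone (hgh : g ∣ h) : polyActRange F h ≤ polyActRange F g := by
  obtain ⟨r, rfl⟩ := hgh
  rintro _ ⟨β, rfl⟩
  exact ⟨polyActHom F r β, by rw [map_mul, Module.End.mul_apply]⟩

theorem isGFree_mul_iff {x : F} : IsGFree (Fintype.card K) (g * h) x ↔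
    IsGFree (Fintype.card K) g x ∧ IsGFree (Fintype.card K) h x := by
  refine ⟨fun hgh => ⟨fun r hr hrg => hgh r hr (hrg.mul_right h),
    fun r hr hrh => hgh r hr (hrh.mul_left g)⟩, fun ⟨hg, hh⟩ r hr hdvd hx => ?_⟩
  by_contra hr1
  obtain ⟨P, hPm, hP, hPr⟩ := exists_monic_irreducible_factor r (mt hr.eq_one_of_isUnit hr1)
  have hxP := mem_polyActRange.mp (polyActRange_antitone hPr (mem_polyActRange.mpr hx))
  rcases hP.prime.dvd_or_dvd (hPr.trans hdvd) with hPg | hPh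
  · exact hP.ne_one (hg P hPm hPg hxP)
  · exact hP.ne_one (hh P hPm hPh hxP)

theorem isGFree_irreducible_iff (hP : Irreducible P) {x : F} :
    IsGFree (Fintype.card K) P x ↔ x ∉ polyActRange F P := by
  refine ⟨fun hfree hx => ?_, fun hx r hr hrP hxr => ?_⟩
  · obtain ⟨Q, hQm, hQ, hQP⟩ := exists_monic_irreducible_factor P hP.not_isUnit
    exact hQ.ne_one (hfree Q hQm hQP (mem_polyActRange.mp (polyActRange_antitone hQP hx)))
  · rcases hP.dvd_iff.mp hrP with hunit | hassoc
    · exact hr.eq_one_of_isUnit hunit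
    · exact absurd (polyActRange_antitone hassoc.dvd (mem_polyActRange.mpr hxr)) hx

/-- The indicator function of the `g`-free elements of `F`. -/
noncomputable def gFreeIndicator (F : Type*) [Field F] [Algebra K F] (g : K[X]) (x : F) : ℂ :=
  if IsGFree (Fintype.card K) g x then 1 else 0

theorem gFreeIndicator_of_isUnit (hg : IsUnit g) : gFreeIndicator F g = (1 : AddChar F ℂ) := by
  funext x
  exact if_pos fun r hr hrg _ => hr.eq_one_of_isUnit (isUnit_of_dvd_unit hrg hg)

theorem memAbsHull_gFreeIndicator_of_isUnit [DecidableEq K] (hg : IsUnit g) :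
    MemAbsHull {h | ∃ η : AddChar F ℂ, ⇑η = h ∧ ∀ y ∈ polyActRange F g, η y = 1}
      ((polyTotient g : ℝ) / (Fintype.card K : ℝ) ^ g.natDegree *
        2 ^ (normalizedFactors g).toFinset.card) (gFreeIndicator F g) := by
  rw [polyTotient_of_isUnit hg, natDegree_eq_zero_of_isUnit hg, normalizedFactors_of_isUnit hg,
    gFreeIndicator_of_isUnit hg, Multiset.toFinset_zero, Finset.card_empty, pow_zero, pow_zero,
    Nat.cast_one, div_one, one_mul]
  exact MemAbsHull.of_mem ⟨1, rfl, fun _ _ => rfl⟩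

theorem polyActRange_sup_polyActRange (hgh : IsCoprime g h) :
    polyActRange F g ⊔ polyActRange F h = ⊤ := by
  obtain ⟨u, v, huv⟩ := hgh
  refine eq_top_iff.mpr fun x _ => ?_
  have hx : polyActHom F g (polyActHom F u x) + polyActHom F h (polyActHom F v x) = x := by
    rw [← Module.End.mul_apply, ← Module.End.mul_apply, ← map_mul, ← map_mul,
      ← LinearMap.add_apply, ← map_add, mul_comm g, mul_comm h, huv, map_one, Module.End.one_apply]
  rw [← hx]
  exact add_mem (le_sup_left (a := polyActRange F g) ⟨_, rfl⟩)
    (le_sup_right (b := polyActRange F h) ⟨_, rfl⟩)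

theorem gFreeIndicator_mul (g h : K[X]) :
    gFreeIndicator F (g * h) = gFreeIndicator F g * gFreeIndicator F h := by
  funext x
  simp only [gFreeIndicator, isGFree_mul_iff, Pi.mul_apply, ite_zero_mul_ite_zero, one_mul]

theorem gFreeIndicator_pow (g : K[X]) {k : ℕ} (hk : k ≠ 0) :
    gFreeIndicator F (g ^ k) = gFreeIndicator F g := by
  have hfree (x : F) : IsGFree (Fintype.card K) (g ^ k) x ↔ IsGFree (Fintype.card K) g x := by
    induction k, Nat.one_le_iff_ne_zero.mpr hk using Nat.le_induction with
    | base => rw [pow_one]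
    | succ k hk ih => rw [pow_succ, isGFree_mul_iff, ih (by omega), and_self]
  funext x
  exact if_congr (hfree x) rfl rfl

variable [Finite F]

theorem memAbsHull_gFreeIndicator_irreducible_sub (hP : Irreducible P)
    (hdvd : P ∣ X ^ Module.finrank K F - 1) :
    MemAbsHull {h | ∃ η : AddChar F ℂ, ⇑η = h ∧ (∀ y ∈ polyActRange F P, η y = 1) ∧ η ≠ 1}
      ((polyTotient P : ℝ) / (Fintype.card K : ℝ) ^ P.natDegree)
      (gFreeIndicator F P - (((polyTotient P : ℝ) / (Fintype.card K : ℝ) ^ P.natDegree : ℝ) : ℂ) •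
        ⇑(1 : AddChar F ℂ)) := by
  have hindicator : gFreeIndicator F P = fun x => if x ∈ polyActRange F P then 0 else 1 := by
    funext x
    rw [gFreeIndicator, isGFree_irreducible_iff hP]
    split_ifs <;> tauto
  have hweight := polyTotient_irreducible_pow_div hP one_ne_zero
  rw [pow_one, ← Nat.cast_pow, ← index_polyActRange hdvd] at hweight
  rw [← Nat.cast_pow, ← index_polyActRange hdvd, hweight, hindicator]
  exact memAbsHull_compl_addSubgroup_sub _

theorem memAbsHull_gFreeIndicator_irreducible_pow (hP : Irreducible P)
    (hdvd : P ∣ X ^ Module.finrank K F - 1) {k : ℕ} (hk : k ≠ 0) :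
    MemAbsHull {h | ∃ η : AddChar F ℂ, ⇑η = h ∧ ∀ y ∈ polyActRange F (P ^ k), η y = 1}
      ((polyTotient (P ^ k) : ℝ) / (Fintype.card K : ℝ) ^ (P ^ k).natDegree * 2)
      (gFreeIndicator F (P ^ k)) := by
  have hweight : (polyTotient (P ^ k) : ℝ) / (Fintype.card K : ℝ) ^ (P ^ k).natDegree =
      (polyTotient P : ℝ) / (Fintype.card K : ℝ) ^ P.natDegree := by
    rw [polyTotient_irreducible_pow_div hP hk, ← polyTotient_irreducible_pow_div hP one_ne_zero,
      pow_one]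
  rw [gFreeIndicator_pow P hk, hweight]
  refine MemAbsHull.of_sub_smul (by positivity) ⟨1, rfl, fun _ _ => rfl⟩ ?_
  exact (memAbsHull_gFreeIndicator_irreducible_sub hP hdvd).mono fun _ ⟨η, hη, htriv, _⟩ =>
    ⟨η, hη, fun y hy => htriv y (polyActRange_antitone (dvd_pow_self P hk) hy)⟩

variable [DecidableEq K]

theorem memAbsHull_gFreeIndicator (hg : g ∣ X ^ Module.finrank K F - 1) :
    MemAbsHull {h | ∃ η : AddChar F ℂ, ⇑η = h ∧ ∀ y ∈ polyActRange F g, η y = 1}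
      ((polyTotient g : ℝ) / (Fintype.card K : ℝ) ^ g.natDegree *
        2 ^ (normalizedFactors g).toFinset.card) (gFreeIndicator F g) := by
  induction g using induction_on_coprime with
  | h0 => exact absurd (zero_dvd_iff.mp hg) (X_pow_finrank_sub_one_ne_zero K F)
  | h1 hu => exact memAbsHull_gFreeIndicator_of_isUnit hu
  | @hpr P k hP =>
    rcases eq_or_ne k 0 with rfl | hk
    · exact memAbsHull_gFreeIndicator_of_isUnit (by rw [pow_zero]; exact isUnit_one)
    · rw [normalizedFactors_of_irreducible_pow hP.irreducible, Multiset.toFinset_replicate,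
        if_neg hk, Finset.card_singleton, pow_one]
      exact memAbsHull_gFreeIndicator_irreducible_pow hP.irreducible
        ((dvd_pow_self P hk).trans hg) hk
  | @hcp g₁ g₂ hrel ih₁ ih₂ =>
    have hne := ne_zero_of_dvd_ne_zero (X_pow_finrank_sub_one_ne_zero K F) hg
    have hg₁ := left_ne_zero_of_mul hne
    have hg₂ := right_ne_zero_of_mul hne
    have hdisj : Disjoint (normalizedFactors g₁).toFinset (normalizedFactors g₂).toFinset :=
      Multiset.disjoint_toFinset.mpr (disjoint_normalizedFactors hrel)
    rw [polyTotient_mul_div hrel.isCoprime hg₁ hg₂, normalizedFactors_mul hg₁ hg₂,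
      Multiset.toFinset_add, Finset.card_union_of_disjoint hdisj, pow_add,
      mul_mul_mul_comm, gFreeIndicator_mul]
    refine (ih₁ ((dvd_mul_right g₁ g₂).trans hg)).mul (ih₂ ((dvd_mul_left g₂ g₁).trans hg)) ?_
    rintro _ ⟨η₁, rfl, h₁⟩ _ ⟨η₂, rfl, h₂⟩
    refine ⟨η₁ * η₂, AddChar.coe_mul _ _, fun y hy => ?_⟩
    rw [AddChar.mul_apply, h₁ y (polyActRange_antitone (dvd_mul_right g₁ g₂) hy),
      h₂ y (polyActRange_antitone (dvd_mul_left g₂ g₁) hy), one_mul]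

theorem memAbsHull_gFreeIndicator_irreducible_mul_sub {e : K[X]} (he : Irreducible e)
    (heg : ¬ e ∣ g) (hg : g ∣ X ^ Module.finrank K F - 1) (hedvd : e ∣ X ^ Module.finrank K F - 1) :
    MemAbsHull {h | ∃ η : AddChar F ℂ, ⇑η = h ∧ η ≠ 1}
      ((polyTotient e : ℝ) / (Fintype.card K : ℝ) ^ e.natDegree *
        ((polyTotient g : ℝ) / (Fintype.card K : ℝ) ^ g.natDegree *
          2 ^ (normalizedFactors g).toFinset.card))
      (gFreeIndicator F (e * g) -
        (((polyTotient e : ℝ) / (Fintype.card K : ℝ) ^ e.natDegree : ℝ) : ℂ) •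
          gFreeIndicator F g) := by
  have hfactor (z : ℂ) : gFreeIndicator F (e * g) - z • gFreeIndicator F g =
      (gFreeIndicator F e - z • ⇑(1 : AddChar F ℂ)) * gFreeIndicator F g := by
    rw [sub_mul, smul_mul_assoc, ← gFreeIndicator_mul, AddChar.coe_one, one_mul]
  rw [hfactor]
  refine (memAbsHull_gFreeIndicator_irreducible_sub he hedvd).mul (memAbsHull_gFreeIndicator hg) ?_
  rintro _ ⟨η, rfl, hηe, hη⟩ _ ⟨η', rfl, hη'g⟩
  refine ⟨η * η', AddChar.coe_mul _ _, fun hmul => hη (AddChar.ext _ _ fun x => ?_)⟩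
  have hx : x ∈ polyActRange F e ⊔ polyActRange F g := by
    rw [polyActRange_sup_polyActRange ((he.coprime_iff_not_dvd).mpr heg)]
    trivial
  obtain ⟨y, hy, z, hz, rfl⟩ := AddSubgroup.mem_sup.mp hx
  have hηz : η z = 1 := by
    have hmulz := DFunLike.congr_fun hmul z
    rwa [AddChar.mul_apply, hη'g z hz, mul_one] at hmulz
  rw [AddChar.map_add_eq_mul, hηe y hy, hηz, one_mul, AddChar.one_apply]

end GFreeExpansion

/-! ### Error bounds -/

section AddCharFiniteField

theorem exists_addChar_ne_one_forall_pow_sub_self (F : Type*) [Field F] [Finite F] (p : ℕ)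
    [Fact p.Prime] [CharP F p] : ∃ ψ : AddChar F ℂ, ψ ≠ 1 ∧ ∀ z, ψ (z ^ p - z) = 1 := by
  have := Fintype.ofFinite F
  let _ := ZMod.algebra F p
  refine ⟨(ZMod.stdAddChar (N := p)).compAddMonoidHom (Algebra.trace (ZMod p) F).toAddMonoidHom,
    fun hone => ?_, fun z => ?_⟩
  · obtain ⟨x, hx⟩ := Algebra.trace_surjective (ZMod p) F 1
    have hval : ZMod.stdAddChar (Algebra.trace (ZMod p) F x) = (1 : ℂ) :=
      DFunLike.congr_fun hone x
    rw [hx, ← AddChar.map_zero_eq_one (ZMod.stdAddChar (N := p))] at hval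
    exact one_ne_zero (ZMod.injective_stdAddChar hval)
  · have htrace : Algebra.trace (ZMod p) F (z ^ p - z) = 0 := by
      have := Algebra.trace_eq_of_algEquiv (FiniteField.frobeniusAlgEquiv (ZMod p) F p) z
      rw [FiniteField.frobeniusAlgEquiv_apply, ZMod.card] at this
      rw [map_sub, this, sub_self]
    change ZMod.stdAddChar (Algebra.trace (ZMod p) F (z ^ p - z)) = 1
    rw [htrace, AddChar.map_zero_eq_one]

theorem exists_mulShift_eq {F : Type*} [Field F] [Finite F] {ψ : AddChar F ℂ} (hψ : ψ ≠ 1)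
    (η : AddChar F ℂ) : ∃ β, ψ.mulShift β = η := by
  have := Fintype.ofFinite F
  have hinj := AddChar.to_mulShift_inj_of_isPrimitive (AddChar.IsPrimitive.of_ne_one hψ)
  exact ((Fintype.bijective_iff_injective_and_card _).mpr
    ⟨hinj, (AddChar.card_eq (α := F)).symm⟩).2 η

end AddCharFiniteField

section TraceExpansion

variable {K F : Type*} [Field K] [Field F] [Algebra K F]

/-- The indicator function of the `x ∈ F` whose inverse has trace `a` over `K`. -/
noncomputable def traceInvIndicator (F : Type*) [Field F] [Algebra K F] (a : K) (x : F) : ℂ :=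
  if Algebra.trace K F x⁻¹ = a then 1 else 0

theorem memAbsHull_traceInvIndicator [Finite F] (a : K) :
    MemAbsHull {h | ∃ η : AddChar F ℂ, (fun x => η x⁻¹) = h} 1 (traceInvIndicator F a) := by
  obtain ⟨y₀, rfl⟩ := Algebra.trace_surjective K F a
  have hcoset := memAbsHull_addSubgroup_coset (Algebra.trace K F).ker.toAddSubgroup y₀
  convert hcoset.map (LinearMap.funLeft ℂ ℂ fun x : F => x⁻¹) ?_ using 1
  · funext x
    refine if_congr ?_ rfl rfl
    rw [Submodule.mem_toAddSubgroup, LinearMap.mem_ker, map_sub, sub_eq_zero]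
  · rintro _ ⟨η, rfl⟩
    exact ⟨η, rfl⟩

end TraceExpansion

section CharacterSumBound

variable {K F : Type*} [Field K] [Field F] [Fintype F] [Algebra K F]

theorem MemAbsHull.norm_sum_le {ι : Type*} [Fintype ι] {S : Set (ι → ℂ)} {B M : ℝ} {A : ι → ℂ}
    (h : MemAbsHull S B A) (hM : ∀ u ∈ S, ‖∑ i, u i‖ ≤ M) : ‖∑ i, A i‖ ≤ B * M := by
  have := h (∑ i, LinearMap.proj i) M
  simp only [LinearMap.sum_apply, LinearMap.proj_apply] at this
  exact this hM

theorem norm_sum_mulChar_mul_mulChar_eval_mul_addChar_mul_addChar_inv_le (hF : 2 < Fintype.card F)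
    {f : RatFunc F} (hf : ¬ ExceptionalRatFunc f) {χ₁ χ₂ : MulChar F ℂ} {η : AddChar F ℂ}
    (hnontrivial : χ₁ ≠ 1 ∨ χ₂ ≠ 1 ∨ η ≠ 1) (η' : AddChar F ℂ) :
    ‖∑ x, χ₁ x * χ₂ (f.eval (RingHom.id F) x) * (η x * η' x⁻¹)‖ ≤
      (f.num.natDegree + f.denom.natDegree + 2) * √(Fintype.card F) := by
  obtain ⟨p, _⟩ := CharP.exists F
  have : Fact p.Prime := ⟨CharP.char_is_prime F p⟩
  obtain ⟨ψ, hψ₁, hψ⟩ := exists_addChar_ne_one_forall_pow_sub_self F p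
  obtain ⟨β, rfl⟩ := exists_mulShift_eq hψ₁ η
  obtain ⟨γ, rfl⟩ := exists_mulShift_eq hψ₁ η'
  simp only [AddChar.mulShift_apply, ← AddChar.map_add_eq_mul]
  refine norm_sum_mulChar_mul_mulChar_eval_mul_addChar_le hF hf χ₁ χ₂ hψ hψ₁ ?_
  rcases eq_or_ne β 0 with rfl | hβ
  · rw [AddChar.mulShift_zero] at hnontrivial
    tauto
  · exact Or.inl hβ

theorem norm_sum_mul_eval_mul_mul_traceInvIndicator_le (hF : 2 < Fintype.card F) {f : RatFunc F}
    (hf : ¬ ExceptionalRatFunc f) {P₁ P₂ : MulChar F ℂ → Prop} {P₃ : AddChar F ℂ → Prop}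
    {B₁ B₂ B₃ : ℝ} {A₁ A₂ A₃ : F → ℂ}
    (h₁ : MemAbsHull {h | ∃ χ : MulChar F ℂ, ⇑χ = h ∧ P₁ χ} B₁ A₁)
    (h₂ : MemAbsHull {h | ∃ χ : MulChar F ℂ, ⇑χ = h ∧ P₂ χ} B₂ A₂)
    (h₃ : MemAbsHull {h | ∃ η : AddChar F ℂ, ⇑η = h ∧ P₃ η} B₃ A₃)
    (hnontrivial : ∀ χ₁ χ₂ η, P₁ χ₁ → P₂ χ₂ → P₃ η → χ₁ ≠ 1 ∨ χ₂ ≠ 1 ∨ η ≠ 1) (a : K) :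
    ‖∑ x, A₁ x * A₂ (f.eval (RingHom.id F) x) * (A₃ x * traceInvIndicator F a x)‖ ≤
      B₁ * B₂ * B₃ * ((f.num.natDegree + f.denom.natDegree + 2) * √(Fintype.card F)) := by
  have h₁₂ := h₁.mul (S'' := {h | ∃ χ₁ χ₂, P₁ χ₁ ∧ P₂ χ₂ ∧
      (fun x => χ₁ x * χ₂ (f.eval (RingHom.id F) x)) = h})
    (h₂.map (S' := {h | ∃ χ₂, P₂ χ₂ ∧ (fun x => χ₂ (f.eval (RingHom.id F) x)) = h})
      (LinearMap.funLeft ℂ ℂ fun x => f.eval (RingHom.id F) x)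
      fun _ ⟨χ₂, hχ₂, hP₂⟩ => ⟨χ₂, hP₂, by rw [← hχ₂]; rfl⟩)
    (by rintro _ ⟨χ₁, rfl, hP₁⟩ _ ⟨χ₂, hP₂, rfl⟩; exact ⟨χ₁, χ₂, hP₁, hP₂, rfl⟩)
  have h₃₄ := h₃.mul (S'' := {h | ∃ η η' : AddChar F ℂ, P₃ η ∧ (fun x => η x * η' x⁻¹) = h})
    (memAbsHull_traceInvIndicator a)
    (by rintro _ ⟨η, rfl, hP₃⟩ _ ⟨η', rfl⟩; exact ⟨η, η', hP₃, rfl⟩)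
  have hprod := h₁₂.mul h₃₄ (S'' := {h | ∃ χ₁ χ₂, ∃ η η' : AddChar F ℂ, P₁ χ₁ ∧ P₂ χ₂ ∧ P₃ η ∧
      (fun x => χ₁ x * χ₂ (f.eval (RingHom.id F) x) * (η x * η' x⁻¹)) = h})
    (by
      rintro _ ⟨χ₁, χ₂, hP₁, hP₂, rfl⟩ _ ⟨η, η', hP₃, rfl⟩
      exact ⟨χ₁, χ₂, η, η', hP₁, hP₂, hP₃, rfl⟩)
  rw [mul_one] at hprod
  refine hprod.norm_sum_le ?_
  rintro _ ⟨χ₁, χ₂, η, η', hP₁, hP₂, hP₃, rfl⟩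
  exact norm_sum_mulChar_mul_mulChar_eval_mul_addChar_mul_addChar_inv_le hF hf
    (hnontrivial χ₁ χ₂ η hP₁ hP₂ hP₃) η'

end CharacterSumBound

section SieveErrorBound

variable {K F : Type*} [Field K] [Field F] [Fintype K] [Fintype F] [Algebra K F]

theorem Ncount_eq_sum (f : RatFunc F) (a : K) (l₁ l₂ : ℕ) (g : K[X]) :
    (Ncount (Fintype.card K) f a l₁ l₂ g : ℂ) =
      ∑ x, uFreeIndicator F l₁ x * uFreeIndicator F l₂ (f.eval (RingHom.id F) x) *
        (gFreeIndicator F g x * traceInvIndicator F a x) := by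
  rw [Ncount, Nat.card_eq_fintype_card, Fintype.card_subtype, Finset.card_filter, Nat.cast_sum]
  refine Finset.sum_congr rfl fun x _ => ?_
  simp only [uFreeIndicator, gFreeIndicator, traceInvIndicator, ite_zero_mul_ite_zero, one_mul]
  rw [Nat.cast_ite, Nat.cast_one, Nat.cast_zero]
  exact if_congr (by tauto) rfl rfl

theorem abs_natCast_sub_mul_natCast (N N' : ℕ) (t : ℝ) :
    |(N : ℝ) - t * N'| = ‖(N : ℂ) - (t : ℂ) * N'‖ := by
  rw [← Real.norm_eq_abs, ← Complex.norm_real]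
  push_cast
  rfl

theorem two_lt_card_of_prime_dvd {c : ℕ} (hc : c.Prime) (hcdvd : c ∣ Fintype.card F - 1) :
    2 < Fintype.card F := by
  have := Nat.le_of_dvd (Nat.sub_pos_of_lt Fintype.one_lt_card) hcdvd
  have := hc.two_le
  omega

variable [DecidableEq K] {f : RatFunc F} (hf : ¬ ExceptionalRatFunc f) (a : K) {l₁ l₂ : ℕ}
  (hl₁ : l₁ ∣ Fintype.card F - 1) (hl₂ : l₂ ∣ Fintype.card F - 1) {g : K[X]}
  (hg : g ∣ X ^ Module.finrank K F - 1)

include hf hl₁ hl₂ hg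

theorem abs_Ncount_prime_mul_left_sub_le {c : ℕ} (hc : c.Prime) (hcl : ¬ c ∣ l₁)
    (hcdvd : c ∣ Fintype.card F - 1) :
    |(Ncount (Fintype.card K) f a (c * l₁) l₂ g : ℝ) -
        (c.totient : ℝ) / c * Ncount (Fintype.card K) f a l₁ l₂ g| ≤
      (c.totient : ℝ) / c * ((l₁.totient : ℝ) / l₁ * 2 ^ l₁.primeFactors.card) *
        ((l₂.totient : ℝ) / l₂ * 2 ^ l₂.primeFactors.card) *
        ((polyTotient g : ℝ) / (Fintype.card K : ℝ) ^ g.natDegree *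
          2 ^ (normalizedFactors g).toFinset.card) *
        ((f.num.natDegree + f.denom.natDegree + 2) * √(Fintype.card F)) := by
  refine le_trans (le_of_eq ?_) (norm_sum_mul_eval_mul_mul_traceInvIndicator_le
    (two_lt_card_of_prime_dvd hc hcdvd) hf
    (memAbsHull_uFreeIndicator_prime_mul_sub hc hcl hl₁ hcdvd) (memAbsHull_uFreeIndicator hl₂)
    (memAbsHull_gFreeIndicator hg) (fun _ _ _ hχ₁ _ _ => Or.inl hχ₁) a)
  rw [abs_natCast_sub_mul_natCast, Ncount_eq_sum, Ncount_eq_sum, Finset.mul_sum,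
    ← Finset.sum_sub_distrib]
  congr! 2 with x
  rw [Pi.sub_apply, Pi.smul_apply, smul_eq_mul]
  ring

theorem abs_Ncount_prime_mul_right_sub_le {c : ℕ} (hc : c.Prime) (hcl : ¬ c ∣ l₂)
    (hcdvd : c ∣ Fintype.card F - 1) :
    |(Ncount (Fintype.card K) f a l₁ (c * l₂) g : ℝ) -
        (c.totient : ℝ) / c * Ncount (Fintype.card K) f a l₁ l₂ g| ≤
      (l₁.totient : ℝ) / l₁ * 2 ^ l₁.primeFactors.card *
        ((c.totient : ℝ) / c * ((l₂.totient : ℝ) / l₂ * 2 ^ l₂.primeFactors.card)) *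
        ((polyTotient g : ℝ) / (Fintype.card K : ℝ) ^ g.natDegree *
          2 ^ (normalizedFactors g).toFinset.card) *
        ((f.num.natDegree + f.denom.natDegree + 2) * √(Fintype.card F)) := by
  refine le_trans (le_of_eq ?_) (norm_sum_mul_eval_mul_mul_traceInvIndicator_le
    (two_lt_card_of_prime_dvd hc hcdvd) hf (memAbsHull_uFreeIndicator hl₁)
    (memAbsHull_uFreeIndicator_prime_mul_sub hc hcl hl₂ hcdvd) (memAbsHull_gFreeIndicator hg)
    (fun _ _ _ _ hχ₂ _ => Or.inr (Or.inl hχ₂)) a)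
  rw [abs_natCast_sub_mul_natCast, Ncount_eq_sum, Ncount_eq_sum, Finset.mul_sum,
    ← Finset.sum_sub_distrib]
  congr! 2 with x
  rw [Pi.sub_apply, Pi.smul_apply, smul_eq_mul]
  ring

theorem abs_Ncount_irreducible_mul_sub_le (hF : 2 < Fintype.card F) {e : K[X]} (he : Irreducible e)
    (heg : ¬ e ∣ g) (hedvd : e ∣ X ^ Module.finrank K F - 1) :
    |(Ncount (Fintype.card K) f a l₁ l₂ (e * g) : ℝ) -
        (polyTotient e : ℝ) / (Fintype.card K : ℝ) ^ e.natDegree *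
          Ncount (Fintype.card K) f a l₁ l₂ g| ≤
      (l₁.totient : ℝ) / l₁ * 2 ^ l₁.primeFactors.card *
        ((l₂.totient : ℝ) / l₂ * 2 ^ l₂.primeFactors.card) *
        ((polyTotient e : ℝ) / (Fintype.card K : ℝ) ^ e.natDegree *
          ((polyTotient g : ℝ) / (Fintype.card K : ℝ) ^ g.natDegree *
            2 ^ (normalizedFactors g).toFinset.card)) *
        ((f.num.natDegree + f.denom.natDegree + 2) * √(Fintype.card F)) := by
  refine le_trans (le_of_eq ?_) (norm_sum_mul_eval_mul_mul_traceInvIndicator_le hF hf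
    (memAbsHull_uFreeIndicator hl₁) (memAbsHull_uFreeIndicator hl₂)
    (memAbsHull_gFreeIndicator_irreducible_mul_sub he heg hg hedvd)
    (fun _ _ _ _ _ hη => Or.inr (Or.inr hη)) a)
  rw [abs_natCast_sub_mul_natCast, Ncount_eq_sum, Ncount_eq_sum, Finset.mul_sum,
    ← Finset.sum_sub_distrib]
  congr! 2 with x
  rw [Pi.sub_apply, Pi.smul_apply, smul_eq_mul]
  ring

end SieveErrorBound

theorem Ncount_sieve_error_bounds_general {K F : Type*} [Field K] [DecidableEq K] [Field F]
    [Fintype K] [Fintype F] [Algebra K F] (q m n : ℕ)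
    (hK : Fintype.card K = q) (hF : Fintype.card F = q ^ m)
    (f : RatFunc F) (hf : ¬ ExceptionalRatFunc f)
    (hdeg : f.num.natDegree + f.denom.natDegree = n) (a : K)
    (l : ℕ) (hl : l ∣ q ^ m - 1) (g : K[X]) (hg : g ∣ X ^ m - 1)
    (c : ℕ) (hc : c.Prime) (hcdvd : c ∣ q ^ m - 1) (hcl : ¬ c ∣ l)
    (e : K[X]) (he : Irreducible e) (hedvd : e ∣ X ^ m - 1) (heg : ¬ e ∣ g)
    (θ : ℕ → ℝ) (hθ : θ = fun u : ℕ => (u.totient : ℝ) / u)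
    (Θ : K[X] → ℝ) (hΘ : Θ = fun h : K[X] => (polyTotient h : ℝ) / (q : ℝ) ^ h.natDegree)
    (W : ℕ → ℝ) (hW : W = fun u : ℕ => (2 : ℝ) ^ u.primeFactors.card)
    (Wp : K[X] → ℝ) (hWp : Wp = fun h : K[X] => (2 : ℝ) ^ (normalizedFactors h).toFinset.card) :
    |(Ncount q f a (c * l) l g : ℝ) - θ c * Ncount q f a l l g| ≤
        (n + 2) * θ c * (θ l) ^ 2 * Θ g * (W l) ^ 2 * Wp g * (q : ℝ) ^ ((m : ℝ) / 2) ∧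
    |(Ncount q f a l (c * l) g : ℝ) - θ c * Ncount q f a l l g| ≤
        (n + 2) * θ c * (θ l) ^ 2 * Θ g * (W l) ^ 2 * Wp g * (q : ℝ) ^ ((m : ℝ) / 2) ∧
    |(Ncount q f a l l (e * g) : ℝ) - Θ e * Ncount q f a l l g| ≤
        (n + 2) * Θ e * (θ l) ^ 2 * Θ g * (W l) ^ 2 * Wp g * (q : ℝ) ^ ((m : ℝ) / 2) := by
  subst hK hdeg hθ hΘ hW hWp
  obtain rfl : m = Module.finrank K F := Nat.pow_right_injective Fintype.one_lt_card
    (hF.symm.trans Module.card_eq_pow_finrank)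
  have hsqrt : (Fintype.card K : ℝ) ^ ((Module.finrank K F : ℝ) / 2) = √(Fintype.card F) := by
    rw [hF, Nat.cast_pow, Real.sqrt_eq_rpow, ← Real.rpow_natCast_mul (Nat.cast_nonneg _),
      mul_one_div]
  rw [← hF] at hl hcdvd
  rw [hsqrt]
  push_cast
  refine ⟨(abs_Ncount_prime_mul_left_sub_le hf a hl hl hg hc hcl hcdvd).trans_eq (by ring),
    (abs_Ncount_prime_mul_right_sub_le hf a hl hl hg hc hcl hcdvd).trans_eq (by ring),
    (abs_Ncount_irreducible_mul_sub_le hf a hl hl hg (two_lt_card_of_prime_dvd hc hcdvd) he heg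
      hedvd).trans_eq (by ring)⟩

/-- The sieving error bounds: for `l ∣ q^m − 1`, `g ∣ x^m − 1`, a prime `c ∣ q^m − 1` with
`c ∤ l`, and a monic irreducible `e ∣ x^m − 1` with `e ∤ g`,
`|N(cl,l,g) − θ(c)N(l,l,g)| ≤ (n+2)θ(c)θ(l)²Θ(g)W(l)²W(g)q^{m/2}`, and the analogous
bounds for `N(l,cl,g)` and `N(l,l,eg)` (with `Θ(e)` in place of `θ(c)`). -/
theorem Ncount_sieve_error_bounds {K F : Type*} [Field K] [DecidableEq K] [Field F]
    [Fintype K] [Fintype F] [Algebra K F]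
    (q m n : ℕ) (p t : ℕ) (hp : p.Prime) (hq : q = p ^ t) (ht : 0 < t)
    (hm : 3 ≤ m) (hn : 0 < n) (hK : Fintype.card K = q) (hF : Fintype.card F = q ^ m)
    (f : RatFunc F) (hf : ¬ ExceptionalRatFunc f)
    (hdeg : f.num.natDegree + f.denom.natDegree = n) (a : K)
    (l : ℕ) (hl : l ∣ q ^ m - 1) (g : K[X]) (hg : g ∣ X ^ m - 1)
    (c : ℕ) (hc : c.Prime) (hcdvd : c ∣ q ^ m - 1) (hcl : ¬ c ∣ l)
    (e : K[X]) (he : Irreducible e) (hemonic : e.Monic) (hedvd : e ∣ X ^ m - 1)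
    (heg : ¬ e ∣ g)
    (θ : ℕ → ℝ) (hθ : θ = fun u : ℕ => (u.totient : ℝ) / u)
    (Θ : K[X] → ℝ) (hΘ : Θ = fun h : K[X] => (polyTotient h : ℝ) / (q : ℝ) ^ h.natDegree)
    (W : ℕ → ℝ) (hW : W = fun u : ℕ => (2 : ℝ) ^ u.primeFactors.card)
    (Wp : K[X] → ℝ) (hWp : Wp = fun h : K[X] => (2 : ℝ) ^ (normalizedFactors h).toFinset.card) :
    |(Ncount q f a (c * l) l g : ℝ) - θ c * Ncount q f a l l g| ≤
        (n + 2) * θ c * (θ l) ^ 2 * Θ g * (W l) ^ 2 * Wp g * (q : ℝ) ^ ((m : ℝ) / 2) ∧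
    |(Ncount q f a l (c * l) g : ℝ) - θ c * Ncount q f a l l g| ≤
        (n + 2) * θ c * (θ l) ^ 2 * Θ g * (W l) ^ 2 * Wp g * (q : ℝ) ^ ((m : ℝ) / 2) ∧
    |(Ncount q f a l l (e * g) : ℝ) - Θ e * Ncount q f a l l g| ≤
        (n + 2) * Θ e * (θ l) ^ 2 * Θ g * (W l) ^ 2 * Wp g * (q : ℝ) ^ ((m : ℝ) / 2) :=
  Ncount_sieve_error_bounds_general q m n hK hF f hf hdeg a l hl g hg c hc hcdvd hcl e he hedvd heg
    θ hθ Θ hΘ W hW Wp hWp
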